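/- arXiv:1308.3956 — 2 statements merged into one kernel-verified Lean document; each statement's English description precedes it below -/
import Mathlib

section
/- Fix a real number c. For each integer n ≥ 2 with log n + c > 0, set r_n := sqrt( (log n + c) / (π n) ). Let x_1,…,x_n be independent uniformly distributed random points in the unit square Q = [0,1]² ⊂ ℝ², and let G_n be the geometric graph on vertex set {1,…,n} with an edge between distinct i and j iff ‖x_i − x_j‖₂ ≤ r_n. Then lim_{n→∞} P( G_n is connected ) = exp( − e^{−c} ). -/
open MeasureTheory

/-- The closed unit square `[0,1]² ⊂ ℝ²` (with the Euclidean norm). -/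
def unitSquare : Set (EuclideanSpace ℝ (Fin 2)) :=
  {p | ∀ i, p i ∈ Set.Icc (0 : ℝ) 1}

/-- The uniform probability measure on the unit square. -/
noncomputable def unifSquare : Measure (EuclideanSpace ℝ (Fin 2)) :=
  volume.restrict unitSquare

/-- The geometric graph on the points `x 0, …, x (n-1)` with radius `r`: vertices `Fin n`,
with an edge between distinct `i` and `j` iff `‖x i − x j‖₂ ≤ r`. -/
def geomGraph {n : ℕ} (x : Fin n → EuclideanSpace ℝ (Fin 2)) (r : ℝ) : SimpleGraph (Fin n) :=
  SimpleGraph.fromRel fun i j => ‖x i - x j‖ ≤ r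

/-!
Since `n * π * r ^ 2` is about `log n + c`, the expected number of isolated vertices tends to
`exp (-c)`. The number of those whose disc lies inside the square has factorial moments converging
to `exp (-c) ^ k`: separated vertices are isolated with probability about
`exp (-n * |union of their discs|)`, and configurations with overlapping discs contribute little.
Bonferroni's inequalities turn this into the Poisson limit `exp (-exp (-c))` for the probability
that there is no such vertex.

It remains to see that, with high probability, a disconnected graph has such a vertex. In a grid of
tiles of side about `r / 3`, no window of bounded size has many empty tiles, because these would
have the area of a disc of radius `r`. Hence every window contains full columns and rows of tiles,
which cross and form a connected backbone, and a component away from the backbone is enclosed by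
them, so it has diameter `O(r)`. If it has several vertices, the region around it that has to be
empty exceeds the disc around one of them by an area of order `r` times the extent of the component;
this is seen from the half discs at its extreme points. Integrating over the positions of these
points gives a bound of order `1 / (n * r ^ 2)`. Finally, isolated vertices near the boundary are
rare: their disc loses at most about half its area, and they lie in a strip of width `r`.
-/

namespace RandomGeometricGraph

open Set Filter Topology
open scoped ENNReal Real

local notation "ℝ²" => EuclideanSpace ℝ (Fin 2)

section EuclideanSpace

variable {ι : Type*} [Fintype ι]

lemma abs_apply_sub_apply_le_norm (p q : EuclideanSpace ℝ ι) (i : ι) : |p i - q i| ≤ ‖p - q‖ := by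
  simpa using PiLp.norm_apply_le (p - q) i

lemma volume_setOf_forall_apply_mem (s : ι → Set ℝ) :
    volume {p : EuclideanSpace ℝ ι | ∀ i, p i ∈ s i} = ∏ i, volume (s i) := by
  rw [← volume_pi_pi, ← (PiLp.volume_preserving_ofLp ι).measure_preimage_equiv
    (f := (MeasurableEquiv.toLp 2 (ι → ℝ)).symm)]
  congr 1
  ext p
  simp

lemma volume_setOf_apply_eq (i : ι) (c : ℝ) :
    volume {p : EuclideanSpace ℝ ι | p i = c} = 0 := by
  have h := (PiLp.volume_preserving_ofLp ι).measure_preimage_equiv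
    (f := (MeasurableEquiv.toLp 2 (ι → ℝ)).symm) {f | f i = c}
  rwa [volume_pi, Measure.pi_hyperplane] at h

/-- The open half of the closed ball `B(x, r)` on the side of `x` given by the sign `e = ±1` of the
`i`-th coordinate. -/
def halfBall (r : ℝ) (i : ι) (e : ℝ) (x : EuclideanSpace ℝ ι) : Set (EuclideanSpace ℝ ι) :=
  {p | ‖p - x‖ ≤ r ∧ 0 < e * (p i - x i)}

lemma measurableSet_setOf_mem_halfBall {α : Type*} [MeasurableSpace α]
    {f g : α → EuclideanSpace ℝ ι} (hf : Measurable f) (hg : Measurable g) (r : ℝ) (i : ι) (e : ℝ) :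
    MeasurableSet {a | g a ∈ halfBall r i e (f a)} := by
  have hnorm : MeasurableSet {a | ‖g a - f a‖ ≤ r} := measurableSet_le (by fun_prop) (by fun_prop)
  have hside : MeasurableSet {a | 0 < e * (g a i - f a i)} :=
    measurableSet_lt (by fun_prop) (by fun_prop)
  exact hnorm.inter hside

lemma measurableSet_halfBall (r : ℝ) (i : ι) (e : ℝ) (x : EuclideanSpace ℝ ι) :
    MeasurableSet (halfBall r i e x) :=
  measurableSet_setOf_mem_halfBall measurable_const measurable_id r i e

lemma halfBall_subset_closedBall (r : ℝ) (i : ι) (e : ℝ) (x : EuclideanSpace ℝ ι) :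
    halfBall r i e x ⊆ Metric.closedBall x r := fun p hp => by
  rw [Metric.mem_closedBall, dist_eq_norm]
  exact hp.1

lemma measureReal_halfBall_add_halfBall {μ : Measure (EuclideanSpace ℝ ι)}
    [IsFiniteMeasureOnCompacts μ] (hμ : μ ≪ volume) (r : ℝ) (i : ι) (x : EuclideanSpace ℝ ι) :
    μ.real (halfBall r i 1 x) + μ.real (halfBall r i (-1) x) = μ.real (Metric.closedBall x r) := by
  have hfin (e : ℝ) : μ (halfBall r i e x) ≠ ∞ :=
    measure_ne_top_of_subset (halfBall_subset_closedBall r i e x)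
      (isCompact_closedBall x r).measure_lt_top.ne
  have hdisj : Disjoint (halfBall r i 1 x) (halfBall r i (-1) x) :=
    Set.disjoint_left.2 fun p hp hp' => by linarith [hp.2, hp'.2]
  rw [← measureReal_union hdisj (measurableSet_halfBall r i (-1) x) (hfin 1) (hfin (-1))]
  refine measureReal_congr ?_
  have hne : ∀ᵐ p ∂μ, p i ≠ x i :=
    measure_eq_zero_iff_ae_notMem.1 (hμ (volume_setOf_apply_eq i (x i)))
  refine eventuallyEq_set.2 (hne.mono fun p hp => ⟨?_, fun hp' => ?_⟩)
  · exact fun hp' => hp'.elim (halfBall_subset_closedBall r i 1 x ·)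
      (halfBall_subset_closedBall r i (-1) x ·)
  · rw [Metric.mem_closedBall, dist_eq_norm] at hp'
    exact hp.lt_or_gt.symm.imp (fun h => ⟨hp', by linarith⟩) fun h => ⟨hp', by linarith⟩

end EuclideanSpace

section Reflection

variable {ι : Type*}

open scoped Classical in
/-- The reflection of `ℝ^ι` in the hyperplane on which the `i`-th coordinate equals `c`. -/
noncomputable def reflectCoord (i : ι) (c : ℝ) (p : EuclideanSpace ℝ ι) : EuclideanSpace ℝ ι :=
  WithLp.toLp 2 fun j => if j = i then 2 * c - p j else p j

lemma reflectCoord_apply_self (i : ι) (c : ℝ) (p : EuclideanSpace ℝ ι) :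
    reflectCoord i c p i = 2 * c - p i := by
  simp [reflectCoord]

lemma reflectCoord_apply_of_ne {i j : ι} (h : j ≠ i) (c : ℝ) (p : EuclideanSpace ℝ ι) :
    reflectCoord i c p j = p j := by
  simp [reflectCoord, h]

variable [Fintype ι]

lemma measurePreserving_reflectCoord (i : ι) (c : ℝ) :
    MeasurePreserving (reflectCoord i c) volume volume := by
  classical
  have h := volume_preserving_pi (α' := fun _ : ι => ℝ) (β' := fun _ : ι => ℝ)
    (f := fun j t => if j = i then 2 * c - t else t) fun j => by
      by_cases hj : j = i
      · simpa [hj] using Measure.measurePreserving_sub_left volume (2 * c)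
      · simpa [hj] using! MeasurePreserving.id (volume : Measure ℝ)
  exact (PiLp.volume_preserving_toLp ι).comp (h.comp (PiLp.volume_preserving_ofLp ι))

lemma norm_reflectCoord_sub (i : ι) (x p : EuclideanSpace ℝ ι) :
    ‖reflectCoord i (x i) p - x‖ = ‖p - x‖ := by
  rw [EuclideanSpace.norm_eq, EuclideanSpace.norm_eq]
  congr 1
  refine Finset.sum_congr rfl fun j _ => ?_
  rw [PiLp.sub_apply, PiLp.sub_apply, Real.norm_eq_abs, Real.norm_eq_abs, sq_abs, sq_abs]
  rcases eq_or_ne j i with rfl | hj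
  · rw [reflectCoord_apply_self]
    ring
  · rw [reflectCoord_apply_of_ne hj]

lemma reflectCoord_mem_halfBall_iff {r e : ℝ} {i : ι} {x p : EuclideanSpace ℝ ι} :
    reflectCoord i (x i) p ∈ halfBall r i e x ↔ p ∈ halfBall r i (-e) x := by
  have hside : e * (2 * x i - p i - x i) = -e * (p i - x i) := by ring
  simp only [halfBall, mem_ofPred_eq, norm_reflectCoord_sub, reflectCoord_apply_self, hside]

lemma volume_real_halfBall {e : ℝ} (he : e = 1 ∨ e = -1) (r : ℝ) (i : ι)
    (x : EuclideanSpace ℝ ι) :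
    volume.real (halfBall r i e x) = volume.real (Metric.closedBall x r) / 2 := by
  have hrefl : volume.real (halfBall r i (-1) x) = volume.real (halfBall r i 1 x) := by
    rw [← (measurePreserving_reflectCoord i (x i)).measureReal_preimage
      (measurableSet_halfBall r i 1 x).nullMeasurableSet]
    congr 1
    exact Set.ext fun p => reflectCoord_mem_halfBall_iff.symm
  have hadd := measureReal_halfBall_add_halfBall (Measure.AbsolutelyContinuous.refl volume) r i x
  rcases he with rfl | rfl <;> linarith

end Reflection

section Plane

variable {i : Fin 2} {r e : ℝ} {x y z p q : ℝ²}

lemma norm_sub_le_iff_coord (hr : 0 ≤ r) :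
    ‖p - q‖ ≤ r ↔ (p i - q i) ^ 2 + (p (i + 1) - q (i + 1)) ^ 2 ≤ r ^ 2 := by
  rw [EuclideanSpace.norm_eq, Real.sqrt_le_left hr, Fin.sum_univ_two]
  fin_cases i <;> simp [add_comm]

lemma volume_setOf_apply_mem_and (i : Fin 2) (s t : Set ℝ) :
    volume {p : ℝ² | p i ∈ s ∧ p (i + 1) ∈ t} = volume s * volume t := by
  have h := volume_setOf_forall_apply_mem fun j : Fin 2 => if j = i then s else t
  fin_cases i
  · simpa [Fin.forall_fin_two] using h
  · simpa [Fin.forall_fin_two, and_comm, mul_comm] using h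

lemma volume_real_closedBall (hr : 0 ≤ r) (x : ℝ²) :
    volume.real (Metric.closedBall x r) = π * r ^ 2 := by
  rw [measureReal_def, EuclideanSpace.volume_closedBall_fin_two, ENNReal.toReal_mul,
    ENNReal.toReal_pow, ENNReal.toReal_ofReal hr, ENNReal.toReal_ofReal Real.pi_pos.le, mul_comm]

lemma mem_unitSquare_iff (i : Fin 2) :
    p ∈ unitSquare ↔ p i ∈ Icc (0 : ℝ) 1 ∧ p (i + 1) ∈ Icc (0 : ℝ) 1 := by
  rw [unitSquare, mem_ofPred_eq, Fin.forall_fin_two]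
  fin_cases i
  · rfl
  · exact and_comm

lemma measurableSet_unitSquare : MeasurableSet unitSquare := by
  rw [unitSquare, ofPred_forall]
  exact .iInter fun i => measurableSet_Icc.preimage (by fun_prop)

instance : IsProbabilityMeasure unifSquare where
  measure_univ := by
    rw [unifSquare, Measure.restrict_apply_univ, unitSquare, volume_setOf_forall_apply_mem]
    simp

lemma unifSquare_absolutelyContinuous : unifSquare ≪ volume :=
  Measure.absolutelyContinuous_restrict

lemma unifSquare_le_volume (s : Set ℝ²) : unifSquare s ≤ volume s :=
  Measure.restrict_apply_le _ _

lemma unifSquare_real_of_subset {s : Set ℝ²} (h : s ⊆ unitSquare) :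
    unifSquare.real s = volume.real s := by
  rw [measureReal_def, unifSquare, Measure.restrict_eq_self _ h, measureReal_def]

lemma mul_le_unifSquare_real_of_box {s : Set ℝ²} {a b c d : ℝ} (i : Fin 2) (hab : a ≤ b)
    (ha : 0 ≤ a) (hb : b ≤ 1) (hc : 0 ≤ c) (hd : d ≤ 1)
    (h : ∀ p : ℝ², p i ∈ Ioo a b → p (i + 1) ∈ Ioo c d → p ∈ s) :
    (b - a) * (d - c) ≤ unifSquare.real s := by
  set box : Set ℝ² := {p | p i ∈ Ioo a b ∧ p (i + 1) ∈ Ioo c d}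
  have hbox : box ⊆ unitSquare := fun p ⟨⟨h1, h2⟩, h3, h4⟩ =>
    (mem_unitSquare_iff i).2 ⟨⟨by linarith, by linarith⟩, by linarith, by linarith⟩
  calc (b - a) * (d - c) ≤ (b - a) * max (d - c) 0 :=
        mul_le_mul_of_nonneg_left (le_max_left _ _) (by linarith)
    _ = unifSquare.real box := by
        rw [unifSquare_real_of_subset hbox, measureReal_def, volume_setOf_apply_mem_and,
          ENNReal.toReal_mul, Real.volume_Ioo, Real.volume_Ioo, ENNReal.toReal_ofReal',
          ENNReal.toReal_ofReal', max_eq_left (by linarith : 0 ≤ b - a)]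
    _ ≤ unifSquare.real s := measureReal_mono fun p hp => h p hp.1 hp.2

/-- The part of the disc `B(x, r)` that lies in the unit square, as an area: the probability that a
uniform point is adjacent to `x`. -/
noncomputable def discArea (r : ℝ) (x : ℝ²) : ℝ := unifSquare.real (Metric.closedBall x r)

lemma discArea_le (hr : 0 ≤ r) (x : ℝ²) : discArea r x ≤ π * r ^ 2 := by
  rw [← volume_real_closedBall hr x]
  exact ENNReal.toReal_mono measure_closedBall_lt_top.ne (unifSquare_le_volume _)

lemma discArea_eq_of_forall_mem_Icc (hr : 0 ≤ r) (hx : ∀ i, x i ∈ Icc r (1 - r)) :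
    discArea r x = π * r ^ 2 := by
  rw [discArea, unifSquare_real_of_subset, volume_real_closedBall hr]
  intro p hp i
  rw [Metric.mem_closedBall, dist_eq_norm] at hp
  have := abs_le.1 ((abs_apply_sub_apply_le_norm p x i).trans hp)
  exact ⟨by linarith [(hx i).1], by linarith [(hx i).2]⟩

lemma unifSquare_real_halfBall_add (r : ℝ) (i : Fin 2) (x : ℝ²) :
    unifSquare.real (halfBall r i 1 x) + unifSquare.real (halfBall r i (-1) x) = discArea r x :=
  measureReal_halfBall_add_halfBall unifSquare_absolutelyContinuous r i x

lemma unifSquare_real_halfBall_le_discArea : unifSquare.real (halfBall r i e x) ≤ discArea r x :=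
  measureReal_mono (halfBall_subset_closedBall r i e x)

lemma unifSquare_real_halfBall_le (hr : 0 ≤ r) (he : e = 1 ∨ e = -1) :
    unifSquare.real (halfBall r i e x) ≤ π * r ^ 2 / 2 := by
  rw [← volume_real_closedBall hr x, ← volume_real_halfBall he r i]
  exact ENNReal.toReal_mono (measure_ne_top_of_subset (halfBall_subset_closedBall r i e x)
    measure_closedBall_lt_top.ne) (unifSquare_le_volume _)

lemma unifSquare_real_halfBall_eq (hr : 0 ≤ r) (he : e = 1 ∨ e = -1) (hx : x ∈ unitSquare)
    (hside : x (i + 1) ∈ Icc r (1 - r)) (hfront : x i + e * r ∈ Icc (0 : ℝ) 1) :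
    unifSquare.real (halfBall r i e x) = π * r ^ 2 / 2 := by
  rw [unifSquare_real_of_subset, volume_real_halfBall he, volume_real_closedBall hr]
  rintro p ⟨hp, hp'⟩
  rw [mem_unitSquare_iff i] at hx ⊢
  obtain ⟨⟨hx1, hx2⟩, -⟩ := hx
  have h1 := abs_le.1 ((abs_apply_sub_apply_le_norm p x i).trans hp)
  have h2 := abs_le.1 ((abs_apply_sub_apply_le_norm p x (i + 1)).trans hp)
  refine ⟨?_, by linarith [hside.1], by linarith [hside.2]⟩
  rcases he with rfl | rfl <;> constructor <;> linarith [hfront.1, hfront.2]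

lemma unifSquare_real_halfBall_neg_eq (hx : x i ∈ Icc r (1 - r)) :
    unifSquare.real (halfBall r i (-1) x) = unifSquare.real (halfBall r i 1 x) := by
  have hpre : reflectCoord i (x i) ⁻¹' (halfBall r i 1 x ∩ unitSquare)
      = halfBall r i (-1) x ∩ unitSquare := by
    ext p
    simp only [mem_preimage, mem_inter_iff, reflectCoord_mem_halfBall_iff, mem_unitSquare_iff i,
      reflectCoord_apply_self, reflectCoord_apply_of_ne (show i + 1 ≠ i by simp), mem_Icc]
    refine and_congr_right fun hp => and_congr_left' ?_
    have := abs_le.1 ((abs_apply_sub_apply_le_norm p x i).trans hp.1)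
    constructor <;> rintro - <;> constructor <;> linarith [hx.1, hx.2]
  rw [unifSquare, measureReal_restrict_apply (measurableSet_halfBall _ _ _ _), ← hpre,
    (measurePreserving_reflectCoord i (x i)).measureReal_preimage
      ((measurableSet_halfBall _ _ _ _).inter measurableSet_unitSquare).nullMeasurableSet,
    ← measureReal_restrict_apply (measurableSet_halfBall _ _ _ _)]

lemma exists_Ioo_of_sign (he : e = 1 ∨ e = -1) {t w : ℝ} (ht : t ∈ Icc (0 : ℝ) 1)
    (htw : t + e * w ∈ Icc (0 : ℝ) 1) :
    ∃ c d, 0 ≤ c ∧ d ≤ 1 ∧ d - c = w ∧ ∀ s ∈ Ioo c d, 0 < e * (s - t) ∧ e * (s - t) < w := by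
  rcases he with rfl | rfl
  · exact ⟨t, t + w, ht.1, by linarith [htw.2], by ring,
      fun s hs => ⟨by linarith [hs.1], by linarith [hs.2]⟩⟩
  · exact ⟨t - w, t, by linarith [htw.1], ht.2, by ring,
      fun s hs => ⟨by linarith [hs.2], by linarith [hs.1]⟩⟩

lemma mul_le_unifSquare_real_halfBall (hr : 0 ≤ r) (he : e = 1 ∨ e = -1) (hx : x ∈ unitSquare)
    {w h c d : ℝ} (hw : 0 ≤ w) (hwh : w ^ 2 + h ^ 2 ≤ r ^ 2) (hfront : x i + e * w ∈ Icc (0 : ℝ) 1)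
    (hc : 0 ≤ c) (hd : d ≤ 1) (hc' : x (i + 1) - h ≤ c) (hd' : d ≤ x (i + 1) + h) :
    w * (d - c) ≤ unifSquare.real (halfBall r i e x) := by
  obtain ⟨a, b, ha, hb, rfl, hab⟩ := exists_Ioo_of_sign he (hx i) hfront
  refine mul_le_unifSquare_real_of_box i (by linarith) ha hb hc hd fun p hp hp' => ?_
  obtain ⟨hpos, hlt⟩ := hab _ hp
  refine ⟨(norm_sub_le_iff_coord (i := i) hr).2 ?_, hpos⟩
  have hsq : (p i - x i) ^ 2 = (e * (p i - x i)) ^ 2 := by rcases he with rfl | rfl <;> ring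
  have h1 : (p i - x i) ^ 2 ≤ (b - a) ^ 2 := hsq ▸ pow_le_pow_left₀ hpos.le hlt.le 2
  have h2 : (p (i + 1) - x (i + 1)) ^ 2 ≤ h ^ 2 :=
    sq_le_sq' (by linarith [hp'.1]) (by linarith [hp'.2])
  linarith

lemma sq_div_four_le_unifSquare_real_halfBall (hr : 0 ≤ r) (hr1 : r ≤ 1) (he : e = 1 ∨ e = -1)
    (hx : x ∈ unitSquare) (hfront : x i + e * (r / 2) ∈ Icc (0 : ℝ) 1) :
    r ^ 2 / 4 ≤ unifSquare.real (halfBall r i e x) := by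
  obtain ⟨c, d, hc, hd, hcd, hc', hd'⟩ : ∃ c d : ℝ, 0 ≤ c ∧ d ≤ 1 ∧ d - c = r / 2 ∧
      x (i + 1) - r / 2 ≤ c ∧ d ≤ x (i + 1) + r / 2 := by
    obtain ⟨h0, h1⟩ := hx (i + 1)
    rcases le_total (x (i + 1)) (1 / 2) with h | h
    · exact ⟨x (i + 1), x (i + 1) + r / 2, by linarith, by linarith, by ring, by linarith, le_rfl⟩
    · exact ⟨x (i + 1) - r / 2, x (i + 1), by linarith, h1, by ring, le_rfl, by linarith⟩
  calc r ^ 2 / 4 = r / 2 * (d - c) := by rw [hcd]; ring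
    _ ≤ _ := mul_le_unifSquare_real_halfBall hr he hx (by linarith)
      (by nlinarith : (r / 2) ^ 2 + (r / 2) ^ 2 ≤ r ^ 2) hfront hc hd hc' hd'

lemma exists_sign_add_mul_mem_Icc {t w : ℝ} (hw : 0 ≤ w) (hw1 : w ≤ 1 / 2)
    (ht : t ∈ Icc (0 : ℝ) 1) :
    ∃ e : ℝ, (e = 1 ∨ e = -1) ∧ t + e * w ∈ Icc (0 : ℝ) 1 := by
  rcases le_total t (1 / 2) with h | h
  · exact ⟨1, .inl rfl, by linarith [ht.1], by linarith⟩
  · exact ⟨-1, .inr rfl, by linarith, by linarith [ht.2]⟩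

lemma sq_div_four_le_discArea (hr : 0 ≤ r) (hr1 : r ≤ 1) (hx : x ∈ unitSquare) :
    r ^ 2 / 4 ≤ discArea r x := by
  obtain ⟨e, he, hfront⟩ :=
    exists_sign_add_mul_mem_Icc (w := r / 2) (by linarith) (by linarith) (hx 0)
  exact (sq_div_four_le_unifSquare_real_halfBall hr hr1 he hx hfront).trans
    unifSquare_real_halfBall_le_discArea

/-- Away from the corners, a disc whose centre is at distance `t ≤ r` from a side covers half of its
area and, behind its centre, at least a box of sides `t / 2` and `r`. -/
lemma pi_mul_sq_div_two_add_le_discArea (hr : 0 ≤ r) (he : e = 1 ∨ e = -1) (hx : x ∈ unitSquare)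
    (hside : x (i + 1) ∈ Icc r (1 - r)) (hfront : x i + e * r ∈ Icc (0 : ℝ) 1) {t : ℝ}
    (ht : 0 ≤ t) (htr : t ≤ r) (hback : x i - e * t ∈ Icc (0 : ℝ) 1) :
    π * r ^ 2 / 2 + r * t / 2 ≤ discArea r x := by
  have he' : -e = 1 ∨ -e = -1 := by rcases he with rfl | rfl <;> simp
  have hback' : x i + -e * (t / 2) ∈ Icc (0 : ℝ) 1 := by
    obtain ⟨h1, h2⟩ := hx i
    constructor <;> linarith [hback.1, hback.2]
  have hbox := mul_le_unifSquare_real_halfBall hr he' hx (w := t / 2) (h := r / 2)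
    (c := x (i + 1) - r / 2) (d := x (i + 1) + r / 2) (by linarith) (by nlinarith) hback'
    (by linarith [hside.1]) (by linarith [hside.2]) le_rfl le_rfl
  have hhalf := unifSquare_real_halfBall_eq hr he hx hside hfront
  have hadd : unifSquare.real (halfBall r i e x) + unifSquare.real (halfBall r i (-e) x)
      = discArea r x := by
    rw [← unifSquare_real_halfBall_add r i x]
    rcases he with rfl | rfl
    · rfl
    · rw [neg_neg, add_comm]
  linarith

/-- The box, just beyond a point `z` that is extreme on the side `e` of the coordinate `i + 1`, in
which a cluster with leftmost point `x` and rightmost point `y` leaves no room for a vertex. -/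
def capBox (r : ℝ) (i : Fin 2) (e : ℝ) (x y z : ℝ²) : Set ℝ² :=
  {p | p i ∈ Ioo (x i) (y i) ∧ |p i - z i| ≤ r / 2 ∧ e * (p (i + 1) - z (i + 1)) ∈ Ioc 0 (r / 2)}

lemma mul_le_unifSquare_real_capBox (hr : 0 ≤ r) (he : e = 1 ∨ e = -1) (hx : x ∈ unitSquare)
    (hy : y ∈ unitSquare) (hz : z ∈ unitSquare) (hxz : x i ≤ z i) (hzy : z i ≤ y i)
    (hfront : z (i + 1) + e * (r / 2) ∈ Icc (0 : ℝ) 1) :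
    min (y i - x i) (r / 2) * (r / 2) ≤ unifSquare.real (capBox r i e x y z) := by
  obtain ⟨c, d, hc, hd, hcd, hcd'⟩ := exists_Ioo_of_sign he (hz (i + 1)) hfront
  set a := max (x i) (z i - r / 2)
  set b := min (y i) (z i + r / 2)
  have ha : x i ≤ a ∧ z i - r / 2 ≤ a := ⟨le_max_left _ _, le_max_right _ _⟩
  have hb : b ≤ y i ∧ b ≤ z i + r / 2 := ⟨min_le_left _ _, min_le_right _ _⟩
  have hmin : min (y i - x i) (r / 2) ≤ b - a := by
    rcases max_choice (x i) (z i - r / 2) with h | h <;>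
      rcases min_choice (y i) (z i + r / 2) with h' | h' <;>
      rw [show a = _ from h, show b = _ from h']
    · exact min_le_left _ _
    all_goals exact (min_le_right _ _).trans (by linarith)
  calc min (y i - x i) (r / 2) * (r / 2) ≤ (b - a) * (d - c) := by
        rw [hcd]
        exact mul_le_mul_of_nonneg_right hmin (by linarith)
    _ ≤ unifSquare.real (capBox r i e x y z) := by
      refine mul_le_unifSquare_real_of_box i ?_ ((hx i).1.trans ha.1) (hb.1.trans (hy i).2) hc hd
        fun p hp hp' => ⟨⟨ha.1.trans_lt hp.1, hp.2.trans_le hb.1⟩, ?_, ?_⟩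
      · exact max_le (le_min (by linarith) (by linarith)) (le_min (by linarith) (by linarith))
      · exact abs_le.2 ⟨by linarith [hp.1], by linarith [hp.2]⟩
      · exact ⟨(hcd' _ hp').1, (hcd' _ hp').2.le⟩

/-- A region free of vertices around a cluster with leftmost point `x`, rightmost point `y` (with
respect to the coordinate `i`) and a point `z` that is extreme on the side `e` of the other
coordinate. -/
def emptyRegion (r : ℝ) (i : Fin 2) (e : ℝ) (x y z : ℝ²) : Set ℝ² :=
  halfBall r i (-1) x ∪ halfBall r i 1 y ∪ capBox r i e x y z

lemma measurableSet_setOf_mem_emptyRegion {α : Type*} [MeasurableSpace α] {f g h k : α → ℝ²}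
    (hf : Measurable f) (hg : Measurable g) (hh : Measurable h) (hk : Measurable k) (r : ℝ)
    (i : Fin 2) (e : ℝ) :
    MeasurableSet {a | k a ∈ emptyRegion r i e (f a) (g a) (h a)} := by
  have hleft : MeasurableSet {a | f a i < k a i} := measurableSet_lt (by fun_prop) (by fun_prop)
  have hright : MeasurableSet {a | k a i < g a i} := measurableSet_lt (by fun_prop) (by fun_prop)
  have hclose : MeasurableSet {a | |k a i - h a i| ≤ r / 2} :=
    measurableSet_le (by fun_prop) (by fun_prop)
  have hcap : MeasurableSet {a | e * (k a (i + 1) - h a (i + 1)) ∈ Ioc 0 (r / 2)} :=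
    measurableSet_Ioc.preimage (by fun_prop)
  exact ((measurableSet_setOf_mem_halfBall hf hk r i (-1)).union
    (measurableSet_setOf_mem_halfBall hg hk r i 1)).union
    ((hleft.inter hright).inter (hclose.inter hcap))

/-- By `hfree`, in some coordinate neither of the discs around `x` and `y` leaves the square. -/
lemma min_discArea_le_add_halfBall (hr : 0 ≤ r) (hx : x ∈ unitSquare) (hy : y ∈ unitSquare)
    (hxy : y i - x i ≤ 1 - 2 * r) (hfree : ∃ j, x j ∈ Icc r (1 - r) ∧ y j ∈ Icc r (1 - r)) :
    min (discArea r x) (discArea r y) ≤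
      unifSquare.real (halfBall r i (-1) x) + unifSquare.real (halfBall r i 1 y) := by
  have hsplitx := unifSquare_real_halfBall_add r i x
  have hsplity := unifSquare_real_halfBall_add r i y
  obtain ⟨j, hxj, hyj⟩ := hfree
  obtain rfl | rfl : j = i ∨ j = i + 1 := by lia
  · have hsymmx := unifSquare_real_halfBall_neg_eq hxj
    have hsymmy := unifSquare_real_halfBall_neg_eq hyj
    rcases le_total (discArea r x) (discArea r y) with h | h
    · exact (min_le_left _ _).trans (by linarith)
    · exact (min_le_right _ _).trans (by linarith)
  · rcases le_total (y i) (1 - r) with h | h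
    · have hfull := unifSquare_real_halfBall_eq hr (.inl rfl) hy hyj
        ⟨by linarith [(hy i).1], by linarith⟩
      refine (min_le_left _ _).trans ?_
      linarith [unifSquare_real_halfBall_le (i := i) (x := x) hr (.inl rfl)]
    · have hfull := unifSquare_real_halfBall_eq hr (.inr rfl) hx hxj
        ⟨by linarith, by linarith [(hx i).2]⟩
      refine (min_le_right _ _).trans ?_
      linarith [unifSquare_real_halfBall_le (i := i) (x := y) hr (.inr rfl)]

lemma le_unifSquare_real_emptyRegion (hr : 0 ≤ r) (he : e = 1 ∨ e = -1) (hx : x ∈ unitSquare)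
    (hy : y ∈ unitSquare) (hz : z ∈ unitSquare) (hxz : x i ≤ z i) (hzy : z i ≤ y i)
    (hfront : z (i + 1) + e * (r / 2) ∈ Icc (0 : ℝ) 1) (hxy : y i - x i ≤ 1 - 2 * r)
    (hfree : ∃ j, x j ∈ Icc r (1 - r) ∧ y j ∈ Icc r (1 - r)) :
    min (discArea r x) (discArea r y) + min (y i - x i) (r / 2) * (r / 2)
      ≤ unifSquare.real (emptyRegion r i e x y z) := by
  have hdisj : Disjoint (halfBall r i (-1) x) (halfBall r i 1 y) :=
    Set.disjoint_left.2 fun p hp hp' => by linarith [hp.2, hp'.2]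
  have hdisj_cap : Disjoint (capBox r i e x y z) (halfBall r i (-1) x ∪ halfBall r i 1 y) := by
    refine Set.disjoint_left.2 fun p hp hp' => ?_
    obtain ⟨⟨hxp, hpy⟩, -⟩ := hp
    rcases hp' with ⟨-, h⟩ | ⟨-, h⟩ <;> linarith
  rw [emptyRegion, union_comm, measureReal_union hdisj_cap
      ((measurableSet_halfBall _ _ _ _).union (measurableSet_halfBall _ _ _ _)),
    measureReal_union hdisj (measurableSet_halfBall _ _ _ _)]
  linarith [mul_le_unifSquare_real_capBox hr he hx hy hz hxz hzy hfront,
    min_discArea_le_add_halfBall hr hx hy hxy hfree]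

end Plane

section Sampling

variable {α ι κ : Type*} [MeasurableSpace α] [Fintype ι] [Fintype κ] {μ : Measure α}

open scoped Classical in
lemma measurePreserving_comp_prodMk_restrict (μ : Measure α) [SigmaFinite μ] (f : ι ↪ κ) :
    MeasurePreserving (fun x : κ → α => (x ∘ f, fun j : {j // j ∉ range f} => x j))
      (Measure.pi fun _ => μ)
      ((Measure.pi fun _ => μ).prod (Measure.pi fun _ => μ)) := by
  let : Fintype {j // j ∈ range f} := Subtype.fintype _
  have hsplit := measurePreserving_piEquivPiSubtypeProd (fun _ : κ => μ) (· ∈ range f)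
  have hrange := (measurePreserving_piCongrLeft (fun _ : {j // j ∈ range f} => μ)
    (Equiv.ofInjective f f.injective)).symm
  exact (hrange.prod (MeasurePreserving.id _)).comp hsplit

open scoped Classical in
lemma measure_pi_comp_mem_and_notMem [SigmaFinite μ] (f : ι ↪ κ) {S : Set (ι → α)}
    (hS : MeasurableSet S) {R : (ι → α) → Set α}
    (hR : MeasurableSet {q : (ι → α) × α | q.2 ∈ R q.1}) :
    (Measure.pi fun _ : κ => μ) {x | x ∘ f ∈ S ∧ ∀ j ∉ range f, x j ∉ R (x ∘ f)} =
      ∫⁻ y in S, μ (R y)ᶜ ^ (Fintype.card κ - Fintype.card ι) ∂(Measure.pi fun _ => μ) := by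
  set B : Set ((ι → α) × ({j // j ∉ range f} → α)) := {q | q.1 ∈ S ∧ ∀ j, q.2 j ∉ R q.1}
  have hpair (j : {j // j ∉ range f}) :
      Measurable fun q : (ι → α) × ({j // j ∉ range f} → α) => (q.1, q.2 j) := by fun_prop
  have havoid : MeasurableSet {q : (ι → α) × ({j // j ∉ range f} → α) | ∀ j, q.2 j ∉ R q.1} := by
    rw [ofPred_forall]
    exact .iInter fun j => hpair j hR.compl
  have hB : MeasurableSet B := (measurable_fst hS).inter havoid
  have hpre : {x : κ → α | x ∘ f ∈ S ∧ ∀ j ∉ range f, x j ∉ R (x ∘ f)}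
      = (fun x : κ → α => (x ∘ f, fun j : {j // j ∉ range f} => x j)) ⁻¹' B := by
    ext x
    simp [B]
  have hcard : Fintype.card {j // j ∉ range f} = Fintype.card κ - Fintype.card ι := by
    rw [Fintype.card_subtype_compl, Set.card_range_of_injective f.injective]
  rw [hpre, (measurePreserving_comp_prodMk_restrict μ f).measure_preimage hB.nullMeasurableSet,
    Measure.prod_apply hB, ← lintegral_indicator hS]
  refine lintegral_congr fun y => ?_
  by_cases hy : y ∈ S
  · have : Prod.mk y ⁻¹' B = Set.pi univ fun _ => (R y)ᶜ := by
      ext z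
      simp [B, hy]
    rw [indicator_of_mem hy, this, Measure.pi_pi, Finset.prod_const, Finset.card_univ, hcard]
  · have : Prod.mk y ⁻¹' B = ∅ := by
      ext z
      simp [B, hy]
    rw [indicator_of_notMem hy, this, measure_empty]

lemma lintegral_pi_succ [SigmaFinite μ] {k : ℕ} (i : Fin (k + 1)) {F : (Fin (k + 1) → α) → ℝ≥0∞}
    (hF : Measurable F) :
    ∫⁻ x, F x ∂(Measure.pi fun _ => μ) =
      ∫⁻ y, ∫⁻ a, F (i.insertNth a y) ∂μ ∂(Measure.pi fun _ => μ) := by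
  have h := (measurePreserving_piFinSuccAbove (fun _ : Fin (k + 1) => μ) i).symm
  rw [← h.lintegral_comp hF]
  exact lintegral_prod_symm _ (hF.comp (MeasurableEquiv.measurable _)).aemeasurable

lemma lintegral_pi_fin_one [SigmaFinite μ] {F : (Fin 1 → α) → ℝ≥0∞} (hF : Measurable F) :
    ∫⁻ x, F x ∂(Measure.pi fun _ => μ) = ∫⁻ a, F ![a] ∂μ := by
  rw [lintegral_pi_succ 0 hF, Measure.pi_of_empty _ Fin.elim0, lintegral_dirac]
  refine lintegral_congr fun a => congrArg F (funext fun j => ?_)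
  rw [Fin.fin_one_eq_zero j]
  rfl

lemma measurable_measureReal_section [SFinite μ] {β : Type*} [MeasurableSpace β] {R : β → Set α}
    (hR : MeasurableSet {q : β × α | q.2 ∈ R q.1}) : Measurable fun y => μ.real (R y) :=
  (measurable_measure_prodMk_left (ν := μ) hR).ennreal_toReal

variable [IsProbabilityMeasure μ]

lemma measure_compl_pow_le {R : Set α} (hR : MeasurableSet R) (m : ℕ) :
    μ Rᶜ ^ m ≤ ENNReal.ofReal (Real.exp (-(m * μ.real R))) := by
  have h : μ Rᶜ ≤ ENNReal.ofReal (Real.exp (-μ.real R)) := by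
    rw [← ofReal_measureReal, probReal_compl_eq_one_sub hR]
    exact ENNReal.ofReal_le_ofReal (Real.one_sub_le_exp_neg _)
  calc μ Rᶜ ^ m ≤ ENNReal.ofReal (Real.exp (-μ.real R)) ^ m := by gcongr
    _ = ENNReal.ofReal (Real.exp (-(m * μ.real R))) := by
      rw [← ENNReal.ofReal_pow (Real.exp_pos _).le, ← Real.exp_nat_mul, mul_neg]

lemma measure_compl_pow_sub_le {R : Set α} (hR : MeasurableSet R) (n k : ℕ) :
    μ Rᶜ ^ (n - k) ≤
      ENNReal.ofReal (Real.exp (k * μ.real R)) * ENNReal.ofReal (Real.exp (-(n * μ.real R))) := by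
  refine (measure_compl_pow_le hR _).trans ?_
  rw [← ENNReal.ofReal_mul (Real.exp_pos _).le, ← Real.exp_add]
  refine ENNReal.ofReal_le_ofReal (Real.exp_le_exp.2 ?_)
  have hsub : (n : ℝ) ≤ (n - k : ℕ) + k := by exact_mod_cast le_tsub_add
  nlinarith [measureReal_nonneg (μ := μ) (s := R)]

/-- The union bound over the at most `n ^ k` ways to choose the tuple. -/
lemma measure_pi_exists_comp_mem_and_notMem_le {k n : ℕ} {S : Set (Fin k → α)}
    (hS : MeasurableSet S) {R : (Fin k → α) → Set α}
    (hR : MeasurableSet {q : (Fin k → α) × α | q.2 ∈ R q.1}) :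
    (Measure.pi fun _ : Fin n => μ)
        {x | ∃ f : Fin k ↪ Fin n, x ∘ f ∈ S ∧ ∀ j ∉ range f, x j ∉ R (x ∘ f)} ≤
      ENNReal.ofReal (Real.exp k) * (n ^ k *
        ∫⁻ y in S, ENNReal.ofReal (Real.exp (-(n * μ.real (R y)))) ∂(Measure.pi fun _ => μ)) := by
  set I := ∫⁻ y in S, ENNReal.ofReal (Real.exp (-(n * μ.real (R y)))) ∂(Measure.pi fun _ => μ)
  have hone (f : Fin k ↪ Fin n) : (Measure.pi fun _ : Fin n => μ)
      {x | x ∘ f ∈ S ∧ ∀ j ∉ range f, x j ∉ R (x ∘ f)} ≤ ENNReal.ofReal (Real.exp k) * I := by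
    rw [measure_pi_comp_mem_and_notMem f hS hR, Fintype.card_fin, Fintype.card_fin,
      ← lintegral_const_mul' _ _ ENNReal.ofReal_ne_top]
    refine lintegral_mono fun y => ?_
    have hRy : MeasurableSet (R y) := measurable_prodMk_left hR
    refine (measure_compl_pow_sub_le hRy n k).trans ?_
    gcongr
    exact mul_le_of_le_one_right k.cast_nonneg measureReal_le_one
  have hcard : (Fintype.card (Fin k ↪ Fin n) : ℝ≥0∞) ≤ n ^ k := by
    rw [Fintype.card_embedding_eq, Fintype.card_fin, Fintype.card_fin]
    exact_mod_cast Nat.descFactorial_le_pow n k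
  calc _ ≤ ∑ f : Fin k ↪ Fin n, (Measure.pi fun _ : Fin n => μ)
          {x | x ∘ f ∈ S ∧ ∀ j ∉ range f, x j ∉ R (x ∘ f)} := by
        rw [ofPred_exists]
        exact measure_iUnion_fintype_le _ _
    _ ≤ n ^ k * (ENNReal.ofReal (Real.exp k) * I) := by
        refine (Finset.sum_le_sum fun f _ => hone f).trans ?_
        rw [Finset.sum_const, nsmul_eq_mul, Finset.card_univ]
        gcongr
    _ = ENNReal.ofReal (Real.exp k) * (n ^ k * I) := mul_left_comm _ _ _

lemma measure_pi_exists_mem_and_notMem_le {n : ℕ} {S : Set α} (hS : MeasurableSet S)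
    {R : α → Set α} (hR : MeasurableSet {q : α × α | q.2 ∈ R q.1}) :
    (Measure.pi fun _ : Fin n => μ) {x | ∃ i, x i ∈ S ∧ ∀ j ≠ i, x j ∉ R (x i)} ≤
      ENNReal.ofReal (Real.exp 1) *
        (n * ∫⁻ a in S, ENNReal.ofReal (Real.exp (-(n * μ.real (R a)))) ∂μ) := by
  have hS₁ : MeasurableSet {y : Fin 1 → α | y 0 ∈ S} := measurable_pi_apply 0 hS
  have hR₁ : MeasurableSet {q : (Fin 1 → α) × α | q.2 ∈ R (q.1 0)} :=
    (by fun_prop : Measurable fun q : (Fin 1 → α) × α => (q.1 0, q.2)) hR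
  have hmeas := measurable_measureReal_section (μ := μ) (R := fun y : Fin 1 → α => R (y 0)) hR₁
  have hint : ∫⁻ y in {y : Fin 1 → α | y 0 ∈ S},
      ENNReal.ofReal (Real.exp (-(n * μ.real (R (y 0))))) ∂(Measure.pi fun _ => μ) =
        ∫⁻ a in S, ENNReal.ofReal (Real.exp (-(n * μ.real (R a)))) ∂μ := by
    rw [← lintegral_indicator hS₁, ← lintegral_indicator hS,
      lintegral_pi_fin_one (Measurable.indicator (by fun_prop) hS₁)]
    rfl
  rw [← hint]
  refine le_trans (measure_mono ?_) ((measure_pi_exists_comp_mem_and_notMem_le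
    (R := fun y : Fin 1 → α => R (y 0)) hS₁ hR₁).trans_eq
    (by rw [Nat.cast_one, pow_one]))
  rintro x ⟨i, hi, hj⟩
  refine ⟨⟨fun _ => i, fun a b _ => Subsingleton.elim a b⟩, hi, fun j hj' => hj j ?_⟩
  rintro rfl
  exact hj' ⟨0, rfl⟩

end Sampling

section Tiles

variable {V : Type*} {G : SimpleGraph V} {X Y : V → ℤ} {s L M : ℤ} {m : ℕ}

/-- The tiles of the grid `{0, …, M - 1}²` in the square window of radius `L` around `(a, b)`. -/
noncomputable def window (L M a b : ℤ) : Finset (ℤ × ℤ) :=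
  (Finset.Icc (a - L) (a + L) ∩ Finset.Ico 0 M) ×ˢ (Finset.Icc (b - L) (b + L) ∩ Finset.Ico 0 M)

lemma mem_window {L M a b i j : ℤ} :
    (i, j) ∈ window L M a b ↔
      ((a - L ≤ i ∧ i ≤ a + L) ∧ 0 ≤ i ∧ i < M) ∧ (b - L ≤ j ∧ j ≤ b + L) ∧ 0 ≤ j ∧ j < M := by
  simp [window]

lemma card_window_le (L M a b : ℤ) : (window L M a b).card ≤ (2 * L + 1).toNat ^ 2 := by
  have hside (c : ℤ) : (Finset.Icc (c - L) (c + L) ∩ Finset.Ico 0 M).card ≤ (2 * L + 1).toNat :=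
    (Finset.card_le_card Finset.inter_subset_left).trans_eq
      (by rw [Int.card_Icc]; congr 1; ring)
  rw [window, Finset.card_product, sq]
  exact Nat.mul_le_mul (hside a) (hside b)

/-- An assignment of tiles `(X v, Y v)` of the grid `{0, …, M - 1}²` to the vertices of a graph such
that edges only join tiles at distance at most `s`, vertices in equal or adjacent tiles are always
connected, and any `m` tiles in a window of radius `L ≥ s * m` include an occupied one. -/
structure TileLabelling (G : SimpleGraph V) (X Y : V → ℤ) (s : ℤ) (m : ℕ) (L M : ℤ) : Prop where
  one_le_step : 1 ≤ s
  mul_le_radius : s * m ≤ L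
  two_mul_radius_le : 2 * L ≤ M
  x_mem : ∀ v, 0 ≤ X v ∧ X v < M
  y_mem : ∀ v, 0 ≤ Y v ∧ Y v < M
  reachable_of_near : ∀ u v, |X u - X v| + |Y u - Y v| ≤ 1 → G.Reachable u v
  abs_sub_le_of_adj : ∀ u v, G.Adj u v → |X u - X v| ≤ s ∧ |Y u - Y v| ≤ s
  exists_mem : ∀ a b, (0 ≤ a ∧ a < M) → (0 ≤ b ∧ b < M) →
    ∀ S ⊆ window L M a b, m ≤ S.card → ∃ v, (X v, Y v) ∈ S

/-- Every tile of the column `i` of the grid at height at most `L` from `b` is occupied. Columns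
outside the grid have this property. -/
def FullColumn (X Y : V → ℤ) (L M b i : ℤ) : Prop :=
  ∀ j, |j - b| ≤ L → (0 ≤ i ∧ i < M) → (0 ≤ j ∧ j < M) → ∃ v, X v = i ∧ Y v = j

/-- The vertex `u` lies in a full column or a full row of the window around `(a, b)`. -/
def IsBackbone (X Y : V → ℤ) (L M a b : ℤ) (u : V) : Prop :=
  |X u - a| ≤ L ∧ |Y u - b| ≤ L ∧ (FullColumn X Y L M b (X u) ∨ FullColumn Y X L M a (Y u))

lemma isBackbone_swap {a b : ℤ} {u : V} :
    IsBackbone Y X L M b a u ↔ IsBackbone X Y L M a b u := by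
  unfold IsBackbone
  tauto

lemma mul_sub_lt_of_strip {σ : ℤ} (hσ : σ = 1 ∨ σ = -1) {F : ℤ → Prop} {a l : ℤ}
    (hF : ∀ t, l ≤ t → t < l + s → F (a + σ * t)) {p q : ℤ} (hpq : |p - q| ≤ s)
    (hp : σ * (p - a) < l) (hq : ¬ F q) : σ * (q - a) < l := by
  by_contra! h
  rw [abs_le] at hpq
  have hFt := hF (σ * (q - a)) h (by rcases hσ with rfl | rfl <;> omega)
  have hσq : a + σ * (σ * (q - a)) = q := by rcases hσ with rfl | rfl <;> ring
  exact hq (hσq ▸ hFt)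

namespace TileLabelling

lemma symm (H : TileLabelling G X Y s m L M) : TileLabelling G Y X s m L M where
  one_le_step := H.one_le_step
  mul_le_radius := H.mul_le_radius
  two_mul_radius_le := H.two_mul_radius_le
  x_mem := H.y_mem
  y_mem := H.x_mem
  reachable_of_near u v h := H.reachable_of_near u v (by rwa [add_comm])
  abs_sub_le_of_adj u v h := (H.abs_sub_le_of_adj u v h).symm
  exists_mem a b ha hb S hS hm := by
    have hswap : S.map (Equiv.prodComm ℤ ℤ).toEmbedding ⊆ window L M b a := fun ⟨i, j⟩ ht => by
      obtain ⟨⟨i', j'⟩, ht', h⟩ := Finset.mem_map.1 ht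
      obtain ⟨rfl, rfl⟩ : j' = i ∧ i' = j := by simpa using h
      exact mem_window.2 (mem_window.1 (hS ht')).symm
    obtain ⟨v, hv⟩ := H.exists_mem b a hb ha _ hswap (by rwa [Finset.card_map])
    exact ⟨v, by simpa using hv⟩

lemma card_le_radius (H : TileLabelling G X Y s m L M) : m ≤ L :=
  le_trans (le_mul_of_one_le_left (by positivity) H.one_le_step) H.mul_le_radius

lemma exists_fullColumn (H : TileLabelling G X Y s m L M) {a b : ℤ} (ha : 0 ≤ a ∧ a < M)
    (hb : 0 ≤ b ∧ b < M) (C : Finset ℤ) (hC : ∀ i ∈ C, |i - a| ≤ L) (hm : m ≤ C.card) :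
    ∃ i ∈ C, FullColumn X Y L M b i := by
  by_contra! hcon
  have hempty : ∀ i ∈ C, ∃ j, (i, j) ∈ window L M a b ∧ ∀ v, X v = i → Y v ≠ j := by
    intro i hi
    have hi' := abs_le.1 (hC i hi)
    have hfull := hcon i hi
    simp only [FullColumn, not_forall, not_exists, not_and] at hfull
    obtain ⟨j, hj, hiM, hjM, hv⟩ := hfull
    rw [abs_le] at hj
    exact ⟨j, mem_window.2 (by omega), hv⟩
  choose! f hf hf' using hempty
  obtain ⟨v, hv⟩ := H.exists_mem a b ha hb (C.image fun i => (i, f i))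
    (Finset.image_subset_iff.2 hf)
    (by rwa [Finset.card_image_of_injective _ fun i j h => (Prod.ext_iff.1 h).1])
  obtain ⟨i, hi, h⟩ := Finset.mem_image.1 hv
  rw [Prod.mk.injEq] at h
  exact hf' i hi v h.1.symm h.2.symm

lemma exists_fullColumn_succ (H : TileLabelling G X Y s m L M) {a b : ℤ} (ha : 0 ≤ a ∧ a < M)
    (hb : 0 ≤ b ∧ b < M) :
    ∃ i, (0 ≤ i ∧ i < M) ∧ |i - a| ≤ L ∧ |i - (a + 1)| ≤ L ∧ FullColumn X Y L M b i := by
  obtain ⟨c, hc0, hcM, hca, hca'⟩ : ∃ c, 0 ≤ c ∧ c + L ≤ M ∧ a + 1 - L ≤ c ∧ c ≤ a + 1 := by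
    have := H.two_mul_radius_le
    by_cases h : a + L < M
    · exact ⟨a + 1, by omega, by omega, by have := H.card_le_radius; omega, le_rfl⟩
    · exact ⟨a + 1 - L, by omega, by omega, le_rfl, by have := H.card_le_radius; omega⟩
  obtain ⟨i, hi, hfull⟩ := H.exists_fullColumn ha hb (Finset.Ico c (c + L))
    (fun i hi => by rw [Finset.mem_Ico] at hi; rw [abs_le]; omega)
    (by rw [Int.card_Ico]; have := H.card_le_radius; omega)
  rw [Finset.mem_Ico] at hi
  exact ⟨i, by omega, by rw [abs_le]; omega, by rw [abs_le]; omega, hfull⟩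

lemma exists_strip (H : TileLabelling G X Y s m L M) {a b : ℤ} (ha : 0 ≤ a ∧ a < M)
    (hb : 0 ≤ b ∧ b < M) {σ : ℤ} (hσ : σ = 1 ∨ σ = -1) :
    ∃ l, 1 ≤ l ∧ l + s ≤ L + 1 ∧ ∀ t, l ≤ t → t < l + s → FullColumn X Y L M b (a + σ * t) := by
  have hs := H.one_le_step
  have hL := H.mul_le_radius
  by_contra! hcon
  have hblock : ∀ k ∈ Iio m, ∃ t, 1 + s * k ≤ t ∧ t < 1 + s * (k + 1) ∧ t ≤ L ∧
      ¬ FullColumn X Y L M b (a + σ * t) := by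
    intro k hk
    have hkm : s * ((k : ℤ) + 1) ≤ s * m :=
      mul_le_mul_of_nonneg_left (by exact_mod_cast Nat.succ_le_of_lt hk) (by omega)
    have hk0 : 0 ≤ s * (k : ℤ) := by positivity
    rw [mul_add, mul_one] at hkm ⊢
    obtain ⟨t, h1, h2, h3⟩ := hcon (1 + s * k) (by omega) (by omega)
    exact ⟨t, h1, by omega, by omega, h3⟩
  choose! f hfl hfu hfL hf using hblock
  have hmono : StrictMonoOn f (Iio m) := fun k hk l hl hkl => by
    have : s * ((k : ℤ) + 1) ≤ s * l :=
      mul_le_mul_of_nonneg_left (by exact_mod_cast Nat.succ_le_of_lt hkl) (by omega)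
    linarith [hfu k hk, hfl l hl]
  have hinj : InjOn (fun k => a + σ * f k) (Finset.range m) := by
    rw [Finset.coe_range]
    intro k hk l hl hkl
    exact hmono.injOn hk hl (by rcases hσ with rfl | rfl <;> simpa using hkl)
  obtain ⟨i, hi, hfull⟩ := H.exists_fullColumn ha hb ((Finset.range m).image fun k => a + σ * f k)
    (fun i hi => by
      obtain ⟨k, hk, rfl⟩ := Finset.mem_image.1 hi
      have hk' := Finset.mem_range.1 hk
      have hk0 : 0 ≤ s * (k : ℤ) := by positivity
      have := hfl k hk'
      have := hfL k hk'
      rw [abs_le]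
      rcases hσ with rfl | rfl <;> omega)
    (by rw [Finset.card_image_of_injOn hinj, Finset.card_range])
  obtain ⟨k, hk, rfl⟩ := Finset.mem_image.1 hi
  exact hf k (Finset.mem_range.1 hk) hfull

lemma reachable_of_fullColumn (H : TileLabelling G X Y s m L M) {b i : ℤ}
    (hi : FullColumn X Y L M b i) {u v : V} (hu : X u = i) (hv : X v = i) (hub : |Y u - b| ≤ L)
    (hvb : |Y v - b| ≤ L) : G.Reachable u v := by
  have hclimb (d : ℕ) : ∀ u v, X u = i → X v = i → |Y u - b| ≤ L → |Y v - b| ≤ L →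
      Y v = Y u + d → G.Reachable u v := by
    induction d with
    | zero =>
      intro u v hu hv _ _ hd
      exact H.reachable_of_near u v (by simp [hu, hv, hd])
    | succ d ih =>
      intro u v hu hv hub hvb hd
      push_cast at hd
      have hwb : |Y u + d - b| ≤ L := by rw [abs_le] at *; omega
      have hgrid := H.x_mem u
      have hbot := H.y_mem u
      have htop := H.y_mem v
      obtain ⟨w, hw, hwd⟩ := hi (Y u + d) hwb (by omega) (by omega)
      refine (ih u w hu hw hub (hwd ▸ hwb) hwd).trans (H.reachable_of_near w v ?_)
      simp [hw, hwd, hv, hd]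
  rcases le_total (Y u) (Y v) with h | h
  · exact hclimb (Y v - Y u).toNat u v hu hv hub hvb (by omega)
  · exact (hclimb (Y u - Y v).toNat v u hv hu hvb hub (by omega)).symm

/-- A full column and a full row of the same window cross. -/
lemma reachable_of_isBackbone (H : TileLabelling G X Y s m L M) {a b : ℤ} (ha : 0 ≤ a ∧ a < M)
    (hb : 0 ≤ b ∧ b < M) {u v : V} (hu : IsBackbone X Y L M a b u)
    (hv : IsBackbone X Y L M a b v) : G.Reachable u v := by
  obtain ⟨i, hiM, hia, -, hi⟩ := H.exists_fullColumn_succ ha hb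
  obtain ⟨j, hjM, hjb, -, hj⟩ := H.symm.exists_fullColumn_succ hb ha
  obtain ⟨w, hwi, hwj⟩ := hi j hjb hiM hjM
  have hcross (u : V) (hu : IsBackbone X Y L M a b u) : G.Reachable u w := by
    obtain ⟨hua, hub, hcol | hrow⟩ := hu
    · obtain ⟨q, hq, hqj⟩ := hcol j hjb (H.x_mem u) hjM
      exact (H.reachable_of_fullColumn hcol rfl hq hub (hqj ▸ hjb)).trans
        (H.symm.reachable_of_fullColumn hj hqj hwj (hq ▸ hua) (hwi ▸ hia))
    · obtain ⟨q, hq, hqi⟩ := hrow i hia (H.y_mem u) hiM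
      exact (H.symm.reachable_of_fullColumn hrow rfl hq hua (hqi ▸ hia)).trans
        (H.reachable_of_fullColumn hi hqi hwi (hq ▸ hub) (hwj ▸ hjb))
  exact (hcross u hu).trans (hcross v hv).symm

lemma exists_isBackbone_succ (H : TileLabelling G X Y s m L M) {a b : ℤ} (ha : 0 ≤ a ∧ a < M)
    (hb : 0 ≤ b ∧ b < M) : ∃ w, IsBackbone X Y L M a b w ∧ IsBackbone X Y L M (a + 1) b w := by
  obtain ⟨i, hiM, hia, hia', hi⟩ := H.exists_fullColumn_succ ha hb
  have hbL : |b - b| ≤ L := by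
    rw [sub_self, abs_zero]
    exact (abs_nonneg _).trans hia
  obtain ⟨w, rfl, rfl⟩ := hi b hbL hiM hb
  exact ⟨w, ⟨hia, hbL, .inl hi⟩, ⟨hia', hbL, .inl hi⟩⟩

lemma reachable_of_isBackbone_row (H : TileLabelling G X Y s m L M) {b : ℤ}
    (hb : 0 ≤ b ∧ b < M) {p : V} (hp : ∀ u, IsBackbone X Y L M 0 b u → G.Reachable p u) (n : ℕ) :
    n < M → ∀ u, IsBackbone X Y L M n b u → G.Reachable p u := by
  induction n with
  | zero => exact fun _ => hp
  | succ n ih =>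
    intro hn u hu
    push_cast at hn hu
    obtain ⟨w, hw, hw'⟩ := H.exists_isBackbone_succ (a := n) ⟨by omega, by omega⟩ hb
    exact (ih (by omega) w hw).trans
      (H.reachable_of_isBackbone ⟨by omega, by omega⟩ hb hw' hu)

lemma exists_reachable_of_isBackbone [Nonempty V] (H : TileLabelling G X Y s m L M) :
    ∃ p, ∀ a b, (0 ≤ a ∧ a < M) → (0 ≤ b ∧ b < M) →
      ∀ u, IsBackbone X Y L M a b u → G.Reachable p u := by
  have hM : (0 : ℤ) ≤ 0 ∧ 0 < M := by
    have := H.x_mem (Classical.arbitrary V)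
    omega
  obtain ⟨p, hp, -⟩ := H.exists_isBackbone_succ hM hM
  refine ⟨p, fun a b ha hb u hu => ?_⟩
  lift a to ℕ using ha.1
  lift b to ℕ using hb.1
  have hrow := H.reachable_of_isBackbone_row hM
    (fun u hu => H.reachable_of_isBackbone hM hM hp hu) a ha.2
  exact H.symm.reachable_of_isBackbone_row ha
    (fun u hu => hrow u (isBackbone_swap.1 hu)) b hb.2 u (isBackbone_swap.2 hu)

/-- A component that avoids the backbone is enclosed by four strips of full columns and rows, which
are too wide to be jumped over. -/
theorem exists_abs_sub_le_of_not_reachable [Nonempty V] (H : TileLabelling G X Y s m L M) :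
    ∃ p, ∀ u v, ¬ G.Reachable p u → G.Reachable u v → |X v - X u| ≤ L ∧ |Y v - Y u| ≤ L := by
  obtain ⟨p, hp⟩ := H.exists_reachable_of_isBackbone
  refine ⟨p, fun u v hu huv => ?_⟩
  have hXu := H.x_mem u
  have hYu := H.y_mem u
  have hs := H.one_le_step
  obtain ⟨l₁, hl₁, hl₁', h₁⟩ := H.exists_strip hXu hYu (.inl rfl)
  obtain ⟨l₂, hl₂, hl₂', h₂⟩ := H.exists_strip hXu hYu (.inr rfl)
  obtain ⟨l₃, hl₃, hl₃', h₃⟩ := H.symm.exists_strip hYu hXu (.inl rfl)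
  obtain ⟨l₄, hl₄, hl₄', h₄⟩ := H.symm.exists_strip hYu hXu (.inr rfl)
  have hbox : (1 * (X v - X u) < l₁ ∧ -1 * (X v - X u) < l₂) ∧
      1 * (Y v - Y u) < l₃ ∧ -1 * (Y v - Y u) < l₄ := by
    rw [SimpleGraph.reachable_iff_reflTransGen] at huv
    induction huv with
    | refl => omega
    | @tail v w huv hvw ih =>
      obtain ⟨hX, hY⟩ := H.abs_sub_le_of_adj v w hvw
      have hXw : |X w - X u| ≤ L := by rw [abs_le] at *; omega
      have hYw : |Y w - Y u| ≤ L := by rw [abs_le] at *; omega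
      have huw : G.Reachable u w :=
        (SimpleGraph.reachable_iff_reflTransGen _ _).2 (huv.tail hvw)
      have hback : ¬ IsBackbone X Y L M (X u) (Y u) w := fun hw =>
        hu ((hp _ _ hXu hYu w hw).trans huw.symm)
      have hcol : ¬ FullColumn X Y L M (Y u) (X w) := fun h => hback ⟨hXw, hYw, .inl h⟩
      have hrow : ¬ FullColumn Y X L M (X u) (Y w) := fun h => hback ⟨hXw, hYw, .inr h⟩
      exact ⟨⟨mul_sub_lt_of_strip (.inl rfl) h₁ hX ih.1.1 hcol,
        mul_sub_lt_of_strip (.inr rfl) h₂ hX ih.1.2 hcol⟩,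
        mul_sub_lt_of_strip (.inl rfl) h₃ hY ih.2.1 hrow,
        mul_sub_lt_of_strip (.inr rfl) h₄ hY ih.2.2 hrow⟩
  rw [abs_le, abs_le]
  omega

end TileLabelling

end Tiles

section Windows

lemma geomGraph_adj {n : ℕ} {x : Fin n → ℝ²} {r : ℝ} {i j : Fin n} :
    (geomGraph x r).Adj i j ↔ i ≠ j ∧ ‖x i - x j‖ ≤ r := by
  rw [geomGraph, SimpleGraph.fromRel_adj, norm_sub_rev (x j), or_self]

/-- The law of `n` independent uniform points of the unit square. -/
noncomputable abbrev unifPoints (n : ℕ) : Measure (Fin n → ℝ²) :=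
  Measure.pi fun _ => unifSquare

/-- The index of the tile that contains `p` when the unit square is cut into `M²` equal tiles. -/
noncomputable def tileOf (M : ℕ) (p : ℝ²) : ℤ × ℤ := (⌊M * p 0⌋, ⌊M * p 1⌋)

/-- Some window of radius `L` contains `m` tiles without any of the points. -/
def windowsWithEmptyTiles (n m : ℕ) (L : ℤ) (M : ℕ) : Set (Fin n → ℝ²) :=
  {x | ∃ a b : ℤ, (0 ≤ a ∧ a < M) ∧ (0 ≤ b ∧ b < M) ∧
    ∃ S ⊆ window L M a b, m ≤ S.card ∧ ∀ v, tileOf M (x v) ∉ S}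

lemma abs_floor_sub_floor_le {s t : ℝ} {k : ℤ} (h : |s - t| ≤ k) : |⌊s⌋ - ⌊t⌋| ≤ k := by
  rw [abs_le] at h ⊢
  have hs : ⌊s⌋ ≤ ⌊t + k⌋ := Int.floor_le_floor (by linarith)
  have ht : ⌊t⌋ ≤ ⌊s + k⌋ := Int.floor_le_floor (by linarith)
  rw [Int.floor_add_intCast] at hs ht
  omega

lemma abs_sub_le_of_abs_floor_sub_floor_le {s t : ℝ} {k : ℤ} (h : |⌊s⌋ - ⌊t⌋| ≤ k) :
    |s - t| ≤ k + 1 := by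
  have hk : |(⌊s⌋ : ℝ) - ⌊t⌋| ≤ k := by exact_mod_cast h
  rw [abs_le] at hk ⊢
  constructor <;>
    linarith [hk.1, hk.2, Int.floor_le s, Int.lt_floor_add_one s, Int.floor_le t,
      Int.lt_floor_add_one t]

variable {n m M : ℕ} {s L : ℤ} {r : ℝ} {x : Fin n → ℝ²}

lemma norm_sub_le_of_near_tiles (hr : 0 ≤ r) (hM : 3 ≤ r * M) {p q : ℝ²}
    (h : |⌊M * p 0⌋ - ⌊M * q 0⌋| + |⌊M * p 1⌋ - ⌊M * q 1⌋| ≤ 1) : ‖p - q‖ ≤ r := by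
  have hsq {a b : ℝ} (ha : |M * a| ≤ 2) (hb : |M * b| ≤ 1) : a ^ 2 + b ^ 2 ≤ r ^ 2 := by
    have hM0 : 0 < (M : ℝ) := pos_of_mul_pos_right (by linarith) hr
    have ha2 : (M * a) ^ 2 ≤ 2 ^ 2 := sq_le_sq.2 (by rwa [abs_of_pos (two_pos (α := ℝ))])
    have hb2 : (M * b) ^ 2 ≤ 1 ^ 2 := sq_le_sq.2 (by rwa [abs_one])
    have hr2 : (3 : ℝ) ^ 2 ≤ (r * M) ^ 2 := by gcongr
    exact le_of_mul_le_mul_left (by nlinarith : (M : ℝ) ^ 2 * (a ^ 2 + b ^ 2) ≤ M ^ 2 * r ^ 2)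
      (by positivity)
  have hcoord {i : Fin 2} {k : ℤ} (h : |⌊M * p i⌋ - ⌊M * q i⌋| ≤ k) :
      |M * (p i - q i)| ≤ k + 1 := by
    rw [mul_sub]
    exact abs_sub_le_of_abs_floor_sub_floor_le h
  have h0 := abs_nonneg (⌊M * p 0⌋ - ⌊M * q 0⌋)
  have h1 := abs_nonneg (⌊M * p 1⌋ - ⌊M * q 1⌋)
  obtain ⟨ha, hb⟩ | ⟨ha, hb⟩ : (|⌊M * p 0⌋ - ⌊M * q 0⌋| ≤ 1 ∧ |⌊M * p 1⌋ - ⌊M * q 1⌋| ≤ 0) ∨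
      (|⌊M * p 0⌋ - ⌊M * q 0⌋| ≤ 0 ∧ |⌊M * p 1⌋ - ⌊M * q 1⌋| ≤ 1) := by omega
  · rw [norm_sub_le_iff_coord (i := 0) hr]
    exact hsq (by simpa [one_add_one_eq_two] using hcoord ha) (by simpa using hcoord hb)
  · rw [norm_sub_le_iff_coord (i := 1) hr]
    exact hsq (by simpa [one_add_one_eq_two] using hcoord hb) (by simpa using hcoord ha)

lemma tileLabelling_geomGraph (hr : 0 ≤ r) (hM : 3 ≤ r * M) (hs : r * M ≤ s) (hL : s * m ≤ L)
    (hLM : 2 * L ≤ M) (hx : ∀ v i, x v i ∈ Ico (0 : ℝ) 1)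
    (hwin : x ∉ windowsWithEmptyTiles n m L M) :
    TileLabelling (geomGraph x r) (fun v => (tileOf M (x v)).1) (fun v => (tileOf M (x v)).2)
      s m L M := by
  have hM0 : 0 < (M : ℝ) := pos_of_mul_pos_right (by linarith) hr
  have hgrid (v : Fin n) (i : Fin 2) : 0 ≤ ⌊M * x v i⌋ ∧ ⌊M * x v i⌋ < M := by
    obtain ⟨h0, h1⟩ := hx v i
    refine ⟨Int.floor_nonneg.2 (by positivity), Int.floor_lt.2 ?_⟩
    exact_mod_cast mul_lt_of_lt_one_right hM0 h1
  have hstep {u v : Fin n} (huv : (geomGraph x r).Adj u v) (i : Fin 2) :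
      |⌊M * x u i⌋ - ⌊M * x v i⌋| ≤ s := by
    refine abs_floor_sub_floor_le ?_
    rw [← mul_sub, abs_mul, Nat.abs_cast]
    calc M * |x u i - x v i| ≤ M * r := by
          gcongr
          exact (abs_apply_sub_apply_le_norm _ _ i).trans (geomGraph_adj.1 huv).2
      _ ≤ s := by rwa [mul_comm]
  refine ⟨?_, hL, hLM, fun v => hgrid v 0, fun v => hgrid v 1, fun u v h => ?_,
    fun u v huv => ⟨hstep huv 0, hstep huv 1⟩, fun a b ha hb S hS hm => ?_⟩
  · exact_mod_cast (by linarith : (1 : ℝ) ≤ s)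
  · by_cases huv : u = v
    · rw [huv]
    · exact (geomGraph_adj.2 ⟨huv, norm_sub_le_of_near_tiles hr hM h⟩).reachable
  · by_contra! hS'
    exact hwin ⟨a, b, ha, hb, S, hS, hm, hS'⟩

/-- A nonempty set of indices of points which is separated by more than `r` from the other points,
and whose points have coordinates that differ by at most `d`. -/
structure IsCluster (x : Fin n → ℝ²) (r d : ℝ) (D : Finset (Fin n)) : Prop where
  nonempty : D.Nonempty
  lt_norm_sub : ∀ u ∈ D, ∀ v ∉ D, r < ‖x u - x v‖
  abs_sub_le : ∀ u ∈ D, ∀ v ∈ D, ∀ i, |x u i - x v i| ≤ d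

theorem exists_isCluster_of_not_connected (hn : 0 < n) (hr : 0 ≤ r) (hM : 3 ≤ r * M)
    (hs : r * M ≤ s) (hL : s * m ≤ L) (hLM : 2 * L ≤ M) (hx : ∀ v i, x v i ∈ Ico (0 : ℝ) 1)
    (hwin : x ∉ windowsWithEmptyTiles n m L M) (hconn : ¬ (geomGraph x r).Connected) :
    ∃ D, IsCluster x r ((L + 1) / 3 * r) D := by
  classical
  have : Nonempty (Fin n) := ⟨⟨0, hn⟩⟩
  have hM0 : 0 < (M : ℝ) := pos_of_mul_pos_right (by linarith) hr
  have H := tileLabelling_geomGraph hr hM hs hL hLM hx hwin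
  obtain ⟨p, hp⟩ := H.exists_abs_sub_le_of_not_reachable
  obtain ⟨u, hu⟩ : ∃ u, ¬ (geomGraph x r).Reachable p u := by
    by_contra! hcon
    exact hconn ⟨fun a b => (hcon a).symm.trans (hcon b)⟩
  refine ⟨Finset.univ.filter fun v => (geomGraph x r).Reachable u v, ⟨u, by simp⟩, ?_, ?_⟩
  · intro a ha b hb
    rw [Finset.mem_filter_univ] at ha hb
    by_contra! hab
    have hne : a ≠ b := fun h => hb (h ▸ ha)
    exact hb (ha.trans (geomGraph_adj.2 ⟨hne, hab⟩).reachable)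
  · intro a ha b hb i
    rw [Finset.mem_filter_univ] at ha hb
    have hL0 : (0 : ℝ) ≤ L := by exact_mod_cast (by positivity : (0 : ℤ) ≤ m).trans H.card_le_radius
    have htile : |⌊M * x a i⌋ - ⌊M * x b i⌋| ≤ L := by
      obtain ⟨hX, hY⟩ := hp b a (fun h => hu (h.trans hb.symm)) (hb.symm.trans ha)
      fin_cases i
      exacts [hX, hY]
    have hcoord := abs_sub_le_of_abs_floor_sub_floor_le htile
    rw [← mul_sub, abs_mul, Nat.abs_cast] at hcoord
    refine le_of_mul_le_mul_left (hcoord.trans ?_) hM0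
    nlinarith

lemma measurableSet_preimage_tileOf (M : ℕ) (c : ℤ × ℤ) : MeasurableSet (tileOf M ⁻¹' {c}) := by
  have : Measurable (tileOf M) := by
    unfold tileOf
    fun_prop
  exact this (measurableSet_singleton c)

lemma one_div_sq_le_unifSquare_real_tileOf (hM : 0 < M) {c : ℤ × ℤ} (hc₁ : 0 ≤ c.1 ∧ c.1 < M)
    (hc₂ : 0 ≤ c.2 ∧ c.2 < M) : 1 / (M : ℝ) ^ 2 ≤ unifSquare.real (tileOf M ⁻¹' {c}) := by
  have hM0 : (0 : ℝ) < M := by exact_mod_cast hM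
  have hbounds {a : ℤ} (ha : 0 ≤ a ∧ a < M) :
      a / (M : ℝ) ≤ (a + 1) / M ∧ 0 ≤ a / (M : ℝ) ∧ (a + 1) / (M : ℝ) ≤ 1 := by
    have h0 : (0 : ℝ) ≤ a := by exact_mod_cast ha.1
    refine ⟨by gcongr; linarith, by positivity, (div_le_one hM0).2 ?_⟩
    exact_mod_cast ha.2
  have hfloor {a : ℤ} {t : ℝ} (ht : t ∈ Ioo (a / (M : ℝ)) ((a + 1) / M)) : ⌊M * t⌋ = a := by
    rw [mem_Ioo, div_lt_iff₀ hM0, lt_div_iff₀ hM0] at ht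
    rw [Int.floor_eq_iff]
    constructor <;> linarith
  obtain ⟨ha, ha0, ha1⟩ := hbounds hc₁
  obtain ⟨-, hb0, hb1⟩ := hbounds hc₂
  refine le_trans (le_of_eq ?_) (mul_le_unifSquare_real_of_box 0 ha ha0 ha1 hb0 hb1
    fun p hp₀ hp₁ => Prod.ext (hfloor hp₀) (hfloor hp₁))
  field

lemma unifPoints_tileOf_notMem_le (hM : 0 < M) {a b : ℤ} {S : Finset (ℤ × ℤ)}
    (hS : S ⊆ window L M a b) :
    unifPoints n {x | ∀ v, tileOf M (x v) ∉ S} ≤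
      ENNReal.ofReal (Real.exp (-(n * (S.card / M ^ 2)))) := by
  set R : Set ℝ² := ⋃ c ∈ S, tileOf M ⁻¹' {c}
  have hR : MeasurableSet R :=
    Finset.measurableSet_biUnion S fun c _ => measurableSet_preimage_tileOf M c
  have hpi : {x : Fin n → ℝ² | ∀ v, tileOf M (x v) ∉ S} = Set.univ.pi fun _ => Rᶜ := by
    ext x
    simp [R]
  rw [hpi, Measure.pi_pi, Finset.prod_const, Finset.card_univ, Fintype.card_fin]
  refine (measure_compl_pow_le hR n).trans (ENNReal.ofReal_le_ofReal (Real.exp_le_exp.2 ?_))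
  have hdisj : Set.PairwiseDisjoint (S : Set (ℤ × ℤ)) fun c => tileOf M ⁻¹' {c} :=
    fun c _ d _ hcd => Disjoint.preimage _ (disjoint_singleton.2 hcd)
  have harea : S.card / (M : ℝ) ^ 2 ≤ unifSquare.real R := by
    rw [measureReal_biUnion_finset hdisj fun c _ => measurableSet_preimage_tileOf M c,
      div_eq_mul_one_div, ← nsmul_eq_mul]
    refine Finset.card_nsmul_le_sum _ _ _ fun c hc => ?_
    obtain ⟨⟨-, h₁⟩, -, h₂⟩ := mem_window.1 (hS hc)
    exact one_div_sq_le_unifSquare_real_tileOf hM h₁ h₂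
  gcongr

theorem unifPoints_windowsWithEmptyTiles_le (hM : 0 < M) :
    unifPoints n (windowsWithEmptyTiles n m L M) ≤ ENNReal.ofReal
      (M ^ 2 * (((2 * L + 1).toNat ^ 2).choose m * Real.exp (-(n * (m / M ^ 2))))) := by
  set C : Finset (ℤ × ℤ) := Finset.Ico 0 (M : ℤ) ×ˢ Finset.Ico 0 (M : ℤ)
  set T : ℤ × ℤ → Finset (Finset (ℤ × ℤ)) := fun c => (window L M c.1 c.2).powersetCard m
  set δ := ENNReal.ofReal (Real.exp (-(n * (m / (M : ℝ) ^ 2))))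
  have hC : C.card = M ^ 2 := by simp [C, sq]
  have hT (c : ℤ × ℤ) : (T c).card ≤ ((2 * L + 1).toNat ^ 2).choose m := by
    rw [Finset.card_powersetCard]
    exact Nat.choose_le_choose m (card_window_le L M c.1 c.2)
  have hsub : windowsWithEmptyTiles n m L M ⊆
      ⋃ c ∈ C, ⋃ S ∈ T c, {x | ∀ v, tileOf M (x v) ∉ S} := by
    rintro x ⟨a, b, ha, hb, S, hS, hm, hx⟩
    obtain ⟨S', hS', hcard⟩ := Finset.exists_subset_card_eq hm
    simp only [mem_iUnion]
    exact ⟨(a, b), Finset.mem_product.2 ⟨Finset.mem_Ico.2 ha, Finset.mem_Ico.2 hb⟩, S',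
      Finset.mem_powersetCard.2 ⟨hS'.trans hS, hcard⟩, fun v hv => hx v (hS' hv)⟩
  calc unifPoints n (windowsWithEmptyTiles n m L M)
      ≤ ∑ c ∈ C, ∑ S ∈ T c, unifPoints n {x | ∀ v, tileOf M (x v) ∉ S} :=
        (measure_mono hsub).trans ((measure_biUnion_finset_le _ _).trans
          (Finset.sum_le_sum fun c _ => measure_biUnion_finset_le _ _))
    _ ≤ ∑ c ∈ C, ∑ _S ∈ T c, δ := by
        refine Finset.sum_le_sum fun c _ => Finset.sum_le_sum fun S hS => ?_
        obtain ⟨hS, hcard⟩ := Finset.mem_powersetCard.1 hS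
        have hempty := unifPoints_tileOf_notMem_le (n := n) hM hS
        rwa [hcard] at hempty
    _ ≤ ∑ c ∈ C, (((2 * L + 1).toNat ^ 2).choose m : ℝ≥0∞) * δ := by
        refine Finset.sum_le_sum fun c _ => ?_
        rw [Finset.sum_const, nsmul_eq_mul]
        gcongr
        exact hT c
    _ = _ := by
        rw [Finset.sum_const, nsmul_eq_mul, hC, ENNReal.ofReal_mul (by positivity),
          ENNReal.ofReal_mul (by positivity), ENNReal.ofReal_pow (by positivity),
          ENNReal.ofReal_natCast, ENNReal.ofReal_natCast, Nat.cast_pow]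

end Windows

section Boundary

lemma map_apply_unifSquare (i : Fin 2) :
    unifSquare.map (fun p => p i) = volume.restrict (Icc (0 : ℝ) 1) := by
  have hi : Measurable fun p : ℝ² => p i := by fun_prop
  ext s hs
  have hset : (fun p : ℝ² => p i) ⁻¹' s ∩ unitSquare =
      {p | p i ∈ s ∩ Icc 0 1 ∧ p (i + 1) ∈ Icc (0 : ℝ) 1} := by
    ext p
    rw [mem_inter_iff, mem_unitSquare_iff i, mem_preimage, mem_ofPred_eq, mem_inter_iff, and_assoc]
  rw [Measure.map_apply hi hs, unifSquare, Measure.restrict_apply (hi hs), hset,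
    volume_setOf_apply_mem_and, Measure.restrict_apply hs, Real.volume_Icc, sub_zero,
    ENNReal.ofReal_one, mul_one]

lemma setLIntegral_Icc_ofReal_exp_neg_mul_le {a : ℝ} (ha : 0 < a) :
    ∫⁻ t in Icc (0 : ℝ) 1, ENNReal.ofReal (Real.exp (-(a * t))) ≤ ENNReal.ofReal (1 / a) := by
  have ha' : -a < 0 := neg_lt_zero.2 ha
  calc ∫⁻ t in Icc (0 : ℝ) 1, ENNReal.ofReal (Real.exp (-(a * t)))
      ≤ ∫⁻ t in Ici (0 : ℝ), ENNReal.ofReal (Real.exp (-(a * t))) :=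
        lintegral_mono_set Icc_subset_Ici_self
    _ = ∫⁻ t in Ioi (0 : ℝ), ENNReal.ofReal (Real.exp (-a * t)) := by
        rw [setLIntegral_congr Ioi_ae_eq_Ici.symm]
        simp only [neg_mul]
    _ = ENNReal.ofReal (1 / a) := by
        rw [← ofReal_integral_eq_lintegral_ofReal (integrableOn_exp_mul_Ioi ha' 0)
          (ae_of_all _ fun _ => (Real.exp_pos _).le), integral_exp_mul_Ioi ha', mul_zero,
          Real.exp_zero, neg_div_neg_eq]

lemma lintegral_exp_neg_mul_apply_le {a : ℝ} (ha : 0 < a) (i : Fin 2) :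
    ∫⁻ p, ENNReal.ofReal (Real.exp (-(a * p i))) ∂unifSquare ≤ ENNReal.ofReal (1 / a) := by
  rw [← lintegral_map (f := fun t => ENNReal.ofReal (Real.exp (-(a * t)))) (by fun_prop)
    (by fun_prop : Measurable fun p : ℝ² => p i), map_apply_unifSquare]
  exact setLIntegral_Icc_ofReal_exp_neg_mul_le ha

lemma lintegral_exp_neg_mul_one_sub_apply_le {a : ℝ} (ha : 0 < a) (i : Fin 2) :
    ∫⁻ p, ENNReal.ofReal (Real.exp (-(a * (1 - p i)))) ∂unifSquare ≤ ENNReal.ofReal (1 / a) := by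
  set F : ℝ → ℝ≥0∞ := fun t => ENNReal.ofReal (Real.exp (-(a * t)))
  have hreflect : (Icc (0 : ℝ) 1).indicator (fun t => F (1 - t)) =
      fun t => (Icc (0 : ℝ) 1).indicator F (1 - t) := by
    ext t
    simp only [indicator, mem_Icc]
    congr 1
    simp [and_comm]
  calc ∫⁻ p, F (1 - p i) ∂unifSquare = ∫⁻ t in Icc (0 : ℝ) 1, F (1 - t) := by
        rw [← map_apply_unifSquare i,
          lintegral_map (by fun_prop) (by fun_prop : Measurable fun p : ℝ² => p i)]
    _ = ∫⁻ t in Icc (0 : ℝ) 1, F t := by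
        rw [← lintegral_indicator measurableSet_Icc, hreflect,
          lintegral_sub_left_eq_self ((Icc (0 : ℝ) 1).indicator F),
          lintegral_indicator measurableSet_Icc]
    _ ≤ ENNReal.ofReal (1 / a) := setLIntegral_Icc_ofReal_exp_neg_mul_le ha

/-- The points whose disc of radius `r` lies in the unit square. -/
def innerSquare (r : ℝ) : Set ℝ² := {p | ∀ i, p i ∈ Icc r (1 - r)}

/-- The points of the plane both of whose coordinates are outside of `(s, 1 - s)`. Within the unit
square these are the corners, four squares of side `s`. -/
def cornerRegion (s : ℝ) : Set ℝ² := {p | ∀ i, p i ∉ Ioo s (1 - s)}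

lemma measurableSet_innerSquare (r : ℝ) : MeasurableSet (innerSquare r) := by
  rw [innerSquare, ofPred_forall]
  exact .iInter fun i => (by fun_prop : Measurable fun p : ℝ² => p i) measurableSet_Icc

lemma measurableSet_cornerRegion (s : ℝ) : MeasurableSet (cornerRegion s) := by
  rw [cornerRegion, ofPred_forall]
  exact .iInter fun i => (by fun_prop : Measurable fun p : ℝ² => p i) measurableSet_Ioo.compl

lemma unifSquare_cornerRegion_le {s : ℝ} (hs : 0 ≤ s) :
    unifSquare (cornerRegion s) ≤ ENNReal.ofReal (4 * s ^ 2) := by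
  set A : Set ℝ := Icc 0 s ∪ Icc (1 - s) 1
  have hA : volume A ≤ ENNReal.ofReal (2 * s) := by
    refine (measure_union_le _ _).trans_eq ?_
    rw [Real.volume_Icc, Real.volume_Icc, ← ENNReal.ofReal_add (by linarith) (by linarith)]
    congr 1
    ring
  have hsub : cornerRegion s ∩ unitSquare ⊆ {p : ℝ² | p 0 ∈ A ∧ p (0 + 1) ∈ A} := by
    rintro p ⟨hp, hp'⟩
    have (i : Fin 2) : p i ∈ A := by
      have h := hp i
      rw [mem_Ioo, not_and_or, not_lt, not_lt] at h
      exact h.imp (fun h => ⟨(hp' i).1, h⟩) fun h => ⟨h, (hp' i).2⟩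
    exact ⟨this _, this _⟩
  calc unifSquare (cornerRegion s) ≤ volume A * volume A := by
        rw [unifSquare, Measure.restrict_apply (measurableSet_cornerRegion s),
          ← volume_setOf_apply_mem_and 0]
        exact measure_mono hsub
    _ ≤ ENNReal.ofReal (2 * s) * ENNReal.ofReal (2 * s) := by gcongr
    _ = ENNReal.ofReal (4 * s ^ 2) := by
        rw [← ENNReal.ofReal_mul (by positivity)]
        congr 1
        ring

lemma measurableSet_setOf_mem_closedBall (r : ℝ) :
    MeasurableSet {q : ℝ² × ℝ² | q.2 ∈ Metric.closedBall q.1 r} :=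
  measurableSet_le (f := fun q : ℝ² × ℝ² => dist q.2 q.1) (by fun_prop) measurable_const

lemma measurable_discArea (r : ℝ) : Measurable (discArea r) :=
  measurable_measureReal_section (measurableSet_setOf_mem_closedBall r)

lemma ae_unifSquare_mem : ∀ᵐ p ∂unifSquare, p ∈ unitSquare :=
  ae_restrict_mem measurableSet_unitSquare

variable {n : ℕ} {r : ℝ}

/-- Up to boundary effects, the expected number of isolated vertices of the geometric graph on `n`
points with radius `r`. -/
noncomputable def meanIsolated (n : ℕ) (r : ℝ) : ℝ := n * Real.exp (-(n * (π * r ^ 2)))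

/-- The bound for the expected number of isolated vertices near the boundary of the unit square;
the summands come from the corners and from the sides. -/
noncomputable def boundaryError (n : ℕ) (r : ℝ) : ℝ :=
  4 * (n * r ^ 2) * Real.exp (-(n * r ^ 2 / 4)) + 8 * √(meanIsolated n r / (n * r ^ 2))

lemma meanIsolated_nonneg (n : ℕ) (r : ℝ) : 0 ≤ meanIsolated n r := by
  unfold meanIsolated
  positivity

lemma boundaryError_nonneg (n : ℕ) (r : ℝ) : 0 ≤ boundaryError n r := by
  unfold boundaryError
  positivity

lemma exists_add_le_discArea_of_notMem (hr : 0 ≤ r) (hr1 : r ≤ 1 / 2) {p : ℝ²}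
    (hp : p ∈ unitSquare) (hinner : p ∉ innerSquare r) (hcorner : p ∉ cornerRegion r) :
    ∃ i, π * r ^ 2 / 2 + r * p i / 2 ≤ discArea r p ∨
      π * r ^ 2 / 2 + r * (1 - p i) / 2 ≤ discArea r p := by
  simp only [cornerRegion, mem_ofPred_eq, not_forall, not_not] at hcorner
  obtain ⟨j, hj⟩ := hcorner
  have hj' : p j ∈ Icc r (1 - r) := Ioo_subset_Icc_self hj
  simp only [innerSquare, mem_ofPred_eq, not_forall] at hinner
  obtain ⟨i, hi⟩ := hinner
  obtain rfl : j = i + 1 := by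
    have : j ≠ i := by
      rintro rfl
      exact hi hj'
    fin_cases i <;> fin_cases j <;> simp_all
  obtain ⟨h0, h1⟩ := hp i
  rw [mem_Icc, not_and_or, not_le, not_le] at hi
  refine ⟨i, hi.imp (fun h => ?_) fun h => ?_⟩
  · exact pi_mul_sq_div_two_add_le_discArea hr (.inl rfl) hp hj' ⟨by linarith, by linarith⟩ h0 h.le
      ⟨by linarith, by linarith⟩
  · exact pi_mul_sq_div_two_add_le_discArea hr (.inr rfl) hp hj' ⟨by linarith, by linarith⟩
      (by linarith) (by linarith) ⟨by linarith, by linarith⟩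

lemma ofReal_exp_neg_discArea_le (n : ℕ) (hr : 0 ≤ r) (hr1 : r ≤ 1 / 2) {p : ℝ²}
    (hp : p ∈ unitSquare) (hinner : p ∉ innerSquare r) :
    ENNReal.ofReal (Real.exp (-(n * discArea r p))) ≤
      (cornerRegion r).indicator (fun _ => ENNReal.ofReal (Real.exp (-(n * r ^ 2 / 4)))) p +
      ENNReal.ofReal (Real.exp (-(n * (π * r ^ 2) / 2))) *
        ∑ i, (ENNReal.ofReal (Real.exp (-(n * r / 2 * p i))) +
          ENNReal.ofReal (Real.exp (-(n * r / 2 * (1 - p i))))) := by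
  by_cases hc : p ∈ cornerRegion r
  · rw [indicator_of_mem hc]
    refine le_add_right (ENNReal.ofReal_le_ofReal (Real.exp_le_exp.2 ?_))
    rw [mul_div_assoc]
    gcongr
    exact sq_div_four_le_discArea hr (by linarith) hp
  · have hexp {t : ℝ} (ht : π * r ^ 2 / 2 + r * t / 2 ≤ discArea r p) :
        ENNReal.ofReal (Real.exp (-(n * discArea r p))) ≤
          ENNReal.ofReal (Real.exp (-(n * (π * r ^ 2) / 2))) *
            ENNReal.ofReal (Real.exp (-(n * r / 2 * t))) := by
      rw [← ENNReal.ofReal_mul (Real.exp_pos _).le, ← Real.exp_add]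
      refine ENNReal.ofReal_le_ofReal (Real.exp_le_exp.2 ?_)
      linarith [mul_le_mul_of_nonneg_left ht n.cast_nonneg]
    obtain ⟨i, hi⟩ := exists_add_le_discArea_of_notMem hr hr1 hp hinner hc
    have hterm := Finset.single_le_sum (f := fun i : Fin 2 =>
      ENNReal.ofReal (Real.exp (-(n * r / 2 * p i))) +
        ENNReal.ofReal (Real.exp (-(n * r / 2 * (1 - p i))))) (fun _ _ => zero_le)
      (Finset.mem_univ i)
    refine le_add_left (le_trans ?_ (mul_le_mul_right hterm _))
    rcases hi with hi | hi
    · exact (hexp hi).trans (mul_le_mul_right (le_add_right le_rfl) _)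
    · exact (hexp hi).trans (mul_le_mul_right (le_add_left le_rfl) _)

lemma lintegral_sum_exp_neg_mul_dist_sides_le {a : ℝ} (ha : 0 < a) :
    ∫⁻ p, ∑ i, (ENNReal.ofReal (Real.exp (-(a * p i))) +
      ENNReal.ofReal (Real.exp (-(a * (1 - p i))))) ∂unifSquare ≤ ENNReal.ofReal (4 / a) := by
  have hsum : ENNReal.ofReal (4 / a) =
      ∑ _ : Fin 2, (ENNReal.ofReal (1 / a) + ENNReal.ofReal (1 / a)) := by
    rw [Finset.sum_const, Finset.card_univ, Fintype.card_fin,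
      ← ENNReal.ofReal_add (by positivity) (by positivity), ← ENNReal.ofReal_nsmul, nsmul_eq_mul]
    congr 1
    push_cast
    field
  rw [lintegral_finsetSum _ fun i _ => by fun_prop, hsum]
  refine Finset.sum_le_sum fun i _ => ?_
  rw [lintegral_add_left (by fun_prop)]
  exact add_le_add (lintegral_exp_neg_mul_apply_le ha i)
    (lintegral_exp_neg_mul_one_sub_apply_le ha i)

lemma setLIntegral_innerSquare_compl_le (hn : 0 < n) (hr : 0 < r) (hr1 : r ≤ 1 / 2) :
    n * ∫⁻ p in (innerSquare r)ᶜ, ENNReal.ofReal (Real.exp (-(n * discArea r p))) ∂unifSquare ≤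
      ENNReal.ofReal (boundaryError n r) := by
  have hn0 : (0 : ℝ) < n := by exact_mod_cast hn
  set κ := ENNReal.ofReal (Real.exp (-(n * r ^ 2 / 4)))
  set ρ := ENNReal.ofReal (Real.exp (-(n * (π * r ^ 2) / 2)))
  set F : ℝ² → ℝ≥0∞ := fun p => ∑ i, (ENNReal.ofReal (Real.exp (-(n * r / 2 * p i))) +
    ENNReal.ofReal (Real.exp (-(n * r / 2 * (1 - p i)))))
  have hint : ∫⁻ p in (innerSquare r)ᶜ, ENNReal.ofReal (Real.exp (-(n * discArea r p)))
      ∂unifSquare ≤ κ * ENNReal.ofReal (4 * r ^ 2) + ρ * ENNReal.ofReal (4 / (n * r / 2)) := by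
    calc _ ≤ ∫⁻ p in (innerSquare r)ᶜ, ((cornerRegion r).indicator (fun _ => κ) p + ρ * F p)
          ∂unifSquare := by
          refine lintegral_mono_ae ?_
          filter_upwards [ae_restrict_of_ae ae_unifSquare_mem,
            ae_restrict_mem (measurableSet_innerSquare r).compl] with p hp hp'
          exact ofReal_exp_neg_discArea_le n hr.le hr1 hp hp'
      _ ≤ ∫⁻ p, ((cornerRegion r).indicator (fun _ => κ) p + ρ * F p) ∂unifSquare :=
          setLIntegral_le_lintegral _ _
      _ ≤ _ := by
          rw [lintegral_add_left (measurable_const.indicator (measurableSet_cornerRegion r)),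
            lintegral_indicator (measurableSet_cornerRegion r), setLIntegral_const,
            lintegral_const_mul _ (by fun_prop)]
          gcongr
          · exact unifSquare_cornerRegion_le hr.le
          · exact lintegral_sum_exp_neg_mul_dist_sides_le (by positivity)
  have hsqrt : √(meanIsolated n r / (n * r ^ 2)) = Real.exp (-(n * (π * r ^ 2) / 2)) / r := by
    rw [meanIsolated, mul_div_mul_left _ _ hn0.ne', Real.sqrt_div (Real.exp_pos _).le,
      Real.sqrt_sq hr.le, ← Real.exp_half, neg_div]
  refine (mul_le_mul_right hint _).trans_eq ?_
  rw [boundaryError, hsqrt, ← ENNReal.ofReal_mul (by positivity),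
    ← ENNReal.ofReal_mul (by positivity), ← ENNReal.ofReal_add (by positivity) (by positivity),
    ← ENNReal.ofReal_natCast, ← ENNReal.ofReal_mul (by positivity)]
  congr 1
  field

lemma lintegral_exp_neg_discArea_le (hn : 0 < n) (hr : 0 < r) (hr1 : r ≤ 1 / 2) :
    n * ∫⁻ p, ENNReal.ofReal (Real.exp (-(n * discArea r p))) ∂unifSquare ≤
      ENNReal.ofReal (meanIsolated n r + boundaryError n r) := by
  have hinner : n * ∫⁻ p in innerSquare r, ENNReal.ofReal (Real.exp (-(n * discArea r p)))
      ∂unifSquare ≤ ENNReal.ofReal (meanIsolated n r) := by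
    rw [meanIsolated, ENNReal.ofReal_mul (by positivity), ENNReal.ofReal_natCast]
    gcongr
    rw [setLIntegral_congr_fun (measurableSet_innerSquare r)
      fun p hp => by rw [discArea_eq_of_forall_mem_Icc hr.le hp], setLIntegral_const]
    exact mul_le_of_le_one_right' prob_le_one
  rw [← lintegral_add_compl _ (measurableSet_innerSquare r), mul_add,
    ENNReal.ofReal_add (meanIsolated_nonneg n r) (boundaryError_nonneg n r)]
  exact add_le_add hinner (setLIntegral_innerSquare_compl_le hn hr hr1)

/-- Some vertex near the boundary of the unit square is isolated. -/
def boundaryIsolated (n : ℕ) (r : ℝ) : Set (Fin n → ℝ²) :=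
  {x | ∃ v, x v ∉ innerSquare r ∧ ∀ w ≠ v, x w ∉ Metric.closedBall (x v) r}

/-- Some point near a corner of the unit square has no other point in its half disc on the side `e`,
where it has room on this side. -/
def cornerExtremal (n : ℕ) (r s e : ℝ) : Set (Fin n → ℝ²) :=
  {x | ∃ v, (x v ∈ cornerRegion s ∧ x v 0 + e * (r / 2) ∈ Icc (0 : ℝ) 1) ∧
    ∀ w ≠ v, x w ∉ halfBall r 0 e (x v)}

lemma unifPoints_boundaryIsolated_le (hn : 0 < n) (hr : 0 < r) (hr1 : r ≤ 1 / 2) :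
    unifPoints n (boundaryIsolated n r) ≤ ENNReal.ofReal (Real.exp 1 * boundaryError n r) := by
  rw [ENNReal.ofReal_mul (Real.exp_pos _).le]
  refine (measure_pi_exists_mem_and_notMem_le (R := fun a => Metric.closedBall a r)
    (measurableSet_innerSquare r).compl (measurableSet_setOf_mem_closedBall r)).trans ?_
  gcongr
  exact setLIntegral_innerSquare_compl_le hn hr hr1

lemma unifPoints_cornerExtremal_le {s e : ℝ} (he : e = 1 ∨ e = -1) (hr : 0 ≤ r) (hr1 : r ≤ 1)
    (hs : 0 ≤ s) : unifPoints n (cornerExtremal n r s e) ≤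
      ENNReal.ofReal (Real.exp 1 * (n * (Real.exp (-(n * r ^ 2 / 4)) * (4 * s ^ 2)))) := by
  have hS : MeasurableSet (cornerRegion s ∩ {p | p 0 + e * (r / 2) ∈ Icc (0 : ℝ) 1}) :=
    (measurableSet_cornerRegion s).inter
      ((by fun_prop : Measurable fun p : ℝ² => p 0 + e * (r / 2)) measurableSet_Icc)
  rw [ENNReal.ofReal_mul (by positivity), ENNReal.ofReal_mul (by positivity),
    ENNReal.ofReal_mul (by positivity), ENNReal.ofReal_natCast]
  refine (measure_pi_exists_mem_and_notMem_le (R := fun a => halfBall r 0 e a) hS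
    (measurableSet_setOf_mem_halfBall measurable_fst measurable_snd r 0 e)).trans ?_
  gcongr
  calc _ ≤ ∫⁻ _ in cornerRegion s ∩ {p | p 0 + e * (r / 2) ∈ Icc (0 : ℝ) 1},
          ENNReal.ofReal (Real.exp (-(n * r ^ 2 / 4))) ∂unifSquare := by
        refine lintegral_mono_ae ?_
        filter_upwards [ae_restrict_of_ae ae_unifSquare_mem, ae_restrict_mem hS] with p hp hp'
        refine ENNReal.ofReal_le_ofReal (Real.exp_le_exp.2 ?_)
        rw [mul_div_assoc]
        gcongr
        exact sq_div_four_le_unifSquare_real_halfBall hr hr1 he hp hp'.2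
    _ ≤ _ := by
        rw [setLIntegral_const]
        gcongr
        exact (measure_mono inter_subset_left).trans (unifSquare_cornerRegion_le hs)

end Boundary

section ProductIntegrals

variable {α : Type*} [MeasurableSpace α] {k : ℕ}

lemma lintegral_pi_prod {μ : Measure α} [SigmaFinite μ] {g : Fin k → α → ℝ≥0∞}
    (hg : ∀ t, Measurable (g t)) :
    ∫⁻ y, ∏ t, g t (y t) ∂(Measure.pi fun _ => μ) = ∏ t, ∫⁻ a, g t a ∂μ := by
  induction k with
  | zero => simp
  | succ k ih =>
    have hg' : Measurable fun y : Fin k → α => ∏ t, g t.succ (y t) := by fun_prop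
    simp_rw [lintegral_pi_succ 0 (F := fun y => ∏ t, g t (y t)) (by fun_prop), Fin.prod_univ_succ,
      Fin.insertNth_zero, Fin.cons_zero, Fin.cons_succ]
    rw [← ih fun t => hg t.succ, ← lintegral_const_mul _ hg']
    exact lintegral_congr fun y => lintegral_mul_const _ (hg 0)

lemma lintegral_pi_mul_prod_sub_le [AddGroup α] [MeasurableAdd α] [MeasurableSub₂ α]
    {μ ν : Measure α} [SigmaFinite μ] [ν.IsAddRightInvariant] (hμν : μ ≤ ν) (c : Fin (k + 1))
    {E g : α → ℝ≥0∞} (hE : Measurable E) (hg : Measurable g) :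
    ∫⁻ y, E (y c) * ∏ t, g (y (c.succAbove t) - y c) ∂(Measure.pi fun _ => μ) ≤
      (∫⁻ a, E a ∂μ) * (∫⁻ a, g a ∂ν) ^ k := by
  have hmeas : Measurable fun q : (Fin k → α) × α => E q.2 * ∏ t, g (q.1 t - q.2) := by fun_prop
  simp_rw [lintegral_pi_succ c (F := fun y => E (y c) * ∏ t, g (y (c.succAbove t) - y c))
    (by fun_prop), Fin.insertNth_apply_succAbove, Fin.insertNth_apply_same]
  rw [lintegral_lintegral_swap hmeas.aemeasurable, ← lintegral_mul_const _ hE]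
  refine lintegral_mono fun a => ?_
  rw [lintegral_const_mul _ (by fun_prop),
    lintegral_pi_prod (g := fun _ p => g (p - a)) fun _ => by fun_prop, Finset.prod_const,
    Finset.card_univ, Fintype.card_fin]
  refine mul_le_mul_right (pow_le_pow_left' ?_ k) _
  calc ∫⁻ p, g (p - a) ∂μ ≤ ∫⁻ p, g (p - a) ∂ν := lintegral_mono' hμν le_rfl
    _ = ∫⁻ p, g p ∂ν := lintegral_sub_right_eq_self g a

end ProductIntegrals

section Clusters

/-- A weight which decays exponentially in the `ℓ¹` norm; it is integrable over the plane and
penalizes clusters of large diameter. -/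
noncomputable def expWeight (κ : ℝ) (u : ℝ²) : ℝ≥0∞ :=
  ENNReal.ofReal (Real.exp (-(κ * ∑ i, |u i|)))

lemma measurable_expWeight (κ : ℝ) : Measurable (expWeight κ) := by
  unfold expWeight
  fun_prop

lemma lintegral_exp_neg_mul_abs {a : ℝ} (ha : 0 < a) :
    ∫⁻ t : ℝ, ENNReal.ofReal (Real.exp (-(a * |t|))) = ENNReal.ofReal (2 / a) := by
  have ha' : -a < 0 := neg_lt_zero.2 ha
  have hleft : ∫⁻ t in Iic (0 : ℝ), ENNReal.ofReal (Real.exp (-(a * |t|))) =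
      ENNReal.ofReal (1 / a) := by
    rw [setLIntegral_congr_fun (g := fun t => ENNReal.ofReal (Real.exp (a * t))) measurableSet_Iic
        fun t ht => by rw [abs_of_nonpos ht, mul_neg, neg_neg],
      ← ofReal_integral_eq_lintegral_ofReal (integrableOn_exp_mul_Iic ha 0)
        (ae_of_all _ fun _ => (Real.exp_pos _).le), integral_exp_mul_Iic ha, mul_zero,
      Real.exp_zero]
  have hright : ∫⁻ t in (Iic (0 : ℝ))ᶜ, ENNReal.ofReal (Real.exp (-(a * |t|))) =
      ENNReal.ofReal (1 / a) := by
    rw [compl_Iic, setLIntegral_congr_fun (g := fun t => ENNReal.ofReal (Real.exp (-a * t)))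
        measurableSet_Ioi fun t ht => by rw [abs_of_pos ht, ← neg_mul],
      ← ofReal_integral_eq_lintegral_ofReal (integrableOn_exp_mul_Ioi ha' 0)
        (ae_of_all _ fun _ => (Real.exp_pos _).le), integral_exp_mul_Ioi ha', mul_zero,
      Real.exp_zero, neg_div_neg_eq]
  rw [← lintegral_add_compl _ (measurableSet_Iic : MeasurableSet (Iic (0 : ℝ))), hleft, hright,
    ← ENNReal.ofReal_add (by positivity) (by positivity), ← add_div, one_add_one_eq_two]

lemma lintegral_expWeight {κ : ℝ} (hκ : 0 < κ) :
    ∫⁻ u, expWeight κ u = ENNReal.ofReal ((2 / κ) ^ 2) := by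
  have hprod (y : Fin 2 → ℝ) : expWeight κ (WithLp.toLp 2 y) =
      ∏ i, ENNReal.ofReal (Real.exp (-(κ * |y i|))) := by
    rw [expWeight, ← ENNReal.ofReal_prod_of_nonneg fun _ _ => (Real.exp_pos _).le,
      ← Real.exp_sum, Finset.sum_neg_distrib, Finset.mul_sum]
  rw [← (PiLp.volume_preserving_toLp (Fin 2)).lintegral_comp (measurable_expWeight κ)]
  simp_rw [hprod]
  rw [volume_pi, lintegral_pi_prod (g := fun _ t => ENNReal.ofReal (Real.exp (-(κ * |t|))))
      fun _ => by fun_prop, Finset.prod_const, lintegral_exp_neg_mul_abs hκ,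
    ENNReal.ofReal_pow (by positivity), Finset.card_univ, Fintype.card_fin]

lemma ae_unifPoints_of_ae {P : ℝ² → Prop} (hP : ∀ᵐ p ∂unifSquare, P p) (n : ℕ) :
    ∀ᵐ x ∂unifPoints n, ∀ v, P (x v) :=
  ae_all_iff.2 fun v =>
    (measurePreserving_eval (fun _ : Fin n => unifSquare) v).quasiMeasurePreserving.ae hP

variable {k n : ℕ} {r d e : ℝ} {i : Fin 2}

/-- The points `y` have extent at most `d * r`, which is attained in direction `i` between `y a`
and `y b`; the point `y w` between them has room on its side `e` in the other direction, and at most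
one direction is blocked by the boundary of the unit square. -/
structure ExtremalConfig (r d : ℝ) (i : Fin 2) (e : ℝ) (y : Fin k → ℝ²) (a b w : Fin k) : Prop where
  mem_Icc : ∀ j, y j i ∈ Icc (y a i) (y b i)
  abs_sub_le : ∀ j l, |y j (i + 1) - y l (i + 1)| ≤ y b i - y a i
  sub_le : y b i - y a i ≤ d * r
  front : y w (i + 1) + e * (r / 2) ∈ Icc (0 : ℝ) 1
  free : ∃ j, y a j ∈ Icc r (1 - r) ∧ y b j ∈ Icc r (1 - r)

lemma measurableSet_setOf_extremalConfig (r d : ℝ) (i : Fin 2) (e : ℝ) (a b w : Fin k) :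
    MeasurableSet {y : Fin k → ℝ² | ExtremalConfig r d i e y a b w} := by
  have hmem (j l : Fin k) (m : Fin 2) : MeasurableSet {y : Fin k → ℝ² | y j m ≤ y l m} :=
    measurableSet_le (by fun_prop) (by fun_prop)
  have hspread (j l : Fin k) :
      MeasurableSet {y : Fin k → ℝ² | |y j (i + 1) - y l (i + 1)| ≤ y b i - y a i} :=
    measurableSet_le (by fun_prop) (by fun_prop)
  have hdiam : MeasurableSet {y : Fin k → ℝ² | y b i - y a i ≤ d * r} :=
    measurableSet_le (by fun_prop) (by fun_prop)
  have hfront : MeasurableSet {y : Fin k → ℝ² | y w (i + 1) + e * (r / 2) ∈ Icc (0 : ℝ) 1} :=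
    (by fun_prop : Measurable fun y : Fin k → ℝ² => y w (i + 1) + e * (r / 2)) measurableSet_Icc
  have hfree (l : Fin k) (j : Fin 2) : MeasurableSet {y : Fin k → ℝ² | y l j ∈ Icc r (1 - r)} :=
    (by fun_prop : Measurable fun y : Fin k → ℝ² => y l j) measurableSet_Icc
  have hset : {y : Fin k → ℝ² | ExtremalConfig r d i e y a b w} =
      (⋂ j, {y | y a i ≤ y j i} ∩ {y | y j i ≤ y b i}) ∩
      (⋂ j, ⋂ l, {y | |y j (i + 1) - y l (i + 1)| ≤ y b i - y a i}) ∩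
      {y | y b i - y a i ≤ d * r} ∩ {y | y w (i + 1) + e * (r / 2) ∈ Icc (0 : ℝ) 1} ∩
      ⋃ j, {y | y a j ∈ Icc r (1 - r)} ∩ {y | y b j ∈ Icc r (1 - r)} := by
    ext y
    simp only [mem_inter_iff, mem_iInter, mem_iUnion, mem_ofPred_eq]
    exact ⟨fun h => ⟨⟨⟨⟨h.mem_Icc, h.abs_sub_le⟩, h.sub_le⟩, h.front⟩, h.free⟩,
      fun ⟨⟨⟨⟨h₁, h₂⟩, h₃⟩, h₄⟩, h₅⟩ => ⟨h₁, h₂, h₃, h₄, h₅⟩⟩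
  rw [hset]
  exact ((((MeasurableSet.iInter fun j => (hmem a j i).inter (hmem j b i)).inter
    (.iInter fun j => .iInter fun l => hspread j l)).inter hdiam).inter hfront).inter
    (.iUnion fun j => (hfree a j).inter (hfree b j))

namespace ExtremalConfig

variable {y : Fin (k + 1) → ℝ²} {a b w : Fin (k + 1)}

lemma sum_abs_sub_le (h : ExtremalConfig r d i e y a b w) (c j : Fin (k + 1)) :
    ∑ m, |(y j - y c) m| ≤ 2 * (y b i - y a i) := by
  have hi : |y j i - y c i| ≤ y b i - y a i :=
    abs_sub_le_iff.2 ⟨by linarith [(h.mem_Icc j).2, (h.mem_Icc c).1],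
      by linarith [(h.mem_Icc c).2, (h.mem_Icc j).1]⟩
  have hi' := h.abs_sub_le j c
  have hsum : ∑ m, |(y j - y c) m| = |y j i - y c i| + |y j (i + 1) - y c (i + 1)| := by
    fin_cases i
    · exact Fin.sum_univ_two _
    · exact (Fin.sum_univ_two _).trans (add_comm _ _)
  linarith

lemma exists_le_unifSquare_real_emptyRegion (h : ExtremalConfig r d i e y a b w)
    (he : e = 1 ∨ e = -1) (hr : 0 ≤ r) (hd : 1 ≤ d) (hdr : (d + 2) * r ≤ 1)
    (hy : ∀ j, y j ∈ unitSquare) :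
    ∃ c, discArea r (y c) + (y b i - y a i) * r / (4 * d) ≤
      unifSquare.real (emptyRegion r i e (y a) (y b) (y w)) := by
  have : 0 < d := by linarith
  have hab : 0 ≤ y b i - y a i := sub_nonneg.2 (h.mem_Icc a).2
  have hmin : (y b i - y a i) / (2 * d) ≤ min (y b i - y a i) (r / 2) :=
    le_min (div_le_self hab (by linarith))
      ((div_le_iff₀ (by positivity)).2 (by linarith [h.sub_le]))
  have hcap : (y b i - y a i) * r / (4 * d) ≤ min (y b i - y a i) (r / 2) * (r / 2) :=
    (mul_le_mul_of_nonneg_right hmin (by linarith)).trans_eq' (by field)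
  have hle := le_unifSquare_real_emptyRegion hr he (hy a) (hy b) (hy w) (h.mem_Icc w).1
    (h.mem_Icc w).2 h.front (by linarith [h.sub_le]) h.free
  rcases min_choice (discArea r (y a)) (discArea r (y b)) with hmin' | hmin'
  · exact ⟨a, by linarith⟩
  · exact ⟨b, by linarith⟩

lemma ofReal_exp_neg_unifSquare_le (h : ExtremalConfig r d i e y a b w) (n : ℕ) (hk : 0 < k)
    (he : e = 1 ∨ e = -1) (hr : 0 ≤ r) (hd : 1 ≤ d) (hdr : (d + 2) * r ≤ 1)
    (hy : ∀ j, y j ∈ unitSquare) :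
    ENNReal.ofReal
        (Real.exp (-(n * unifSquare.real (emptyRegion r i e (y a) (y b) (y w))))) ≤
      ∑ c, ENNReal.ofReal (Real.exp (-(n * discArea r (y c)))) *
        ∏ t, expWeight (n * r / (8 * d * k)) (y (c.succAbove t) - y c) := by
  have : (0 : ℝ) < k := by exact_mod_cast hk
  have : 0 < d := by linarith
  obtain ⟨c, hc⟩ := h.exists_le_unifSquare_real_emptyRegion he hr hd hdr hy
  refine le_trans ?_ (Finset.single_le_sum (fun _ _ => zero_le) (Finset.mem_univ c))
  have hsum : ∑ t, n * r / (8 * d * k) * ∑ m, |(y (c.succAbove t) - y c) m| ≤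
      n * ((y b i - y a i) * r / (4 * d)) := by
    calc _ ≤ ∑ _t : Fin k, n * r / (8 * d * k) * (2 * (y b i - y a i)) := by
          gcongr with t
          exact h.sum_abs_sub_le c _
      _ = _ := by
          rw [Finset.sum_const, Finset.card_univ, Fintype.card_fin, nsmul_eq_mul]
          field
  simp only [expWeight]
  rw [← ENNReal.ofReal_prod_of_nonneg fun _ _ => (Real.exp_pos _).le, ← Real.exp_sum,
    Finset.sum_neg_distrib, ← ENNReal.ofReal_mul (Real.exp_pos _).le, ← Real.exp_add]
  refine ENNReal.ofReal_le_ofReal (Real.exp_le_exp.2 ?_)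
  linarith [mul_le_mul_of_nonneg_left hc n.cast_nonneg]

end ExtremalConfig

lemma setLIntegral_extremalConfig_le (hk : 0 < k) (hn : 0 < n) (he : e = 1 ∨ e = -1) (hr : 0 < r)
    (hd : 1 ≤ d) (hdr : (d + 2) * r ≤ 1) (a b w : Fin (k + 1)) :
    ∫⁻ y in {y : Fin (k + 1) → ℝ² | ExtremalConfig r d i e y a b w}, ENNReal.ofReal
        (Real.exp (-(n * unifSquare.real (emptyRegion r i e (y a) (y b) (y w)))))
        ∂unifPoints (k + 1) ≤
      (k + 1) * ((∫⁻ p, ENNReal.ofReal (Real.exp (-(n * discArea r p))) ∂unifSquare) *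
        ENNReal.ofReal ((2 / (n * r / (8 * d * k))) ^ 2) ^ k) := by
  have : (0 : ℝ) < n := by exact_mod_cast hn
  have : (0 : ℝ) < k := by exact_mod_cast hk
  have : 0 < d := by linarith
  set κ := n * r / (8 * d * k)
  have hκ : 0 < κ := by positivity
  set E : ℝ² → ℝ≥0∞ := fun p => ENNReal.ofReal (Real.exp (-(n * discArea r p)))
  have hE : Measurable E := by
    have := measurable_discArea r
    fun_prop
  have hg := measurable_expWeight κ
  calc _ ≤ ∫⁻ y in {y : Fin (k + 1) → ℝ² | ExtremalConfig r d i e y a b w},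
        ∑ c, E (y c) * ∏ t, expWeight κ (y (c.succAbove t) - y c) ∂unifPoints (k + 1) := by
        refine lintegral_mono_ae ?_
        filter_upwards [ae_restrict_of_ae (ae_unifPoints_of_ae ae_unifSquare_mem (k + 1)),
          ae_restrict_mem (measurableSet_setOf_extremalConfig r d i e a b w)] with y hy hy'
        exact hy'.ofReal_exp_neg_unifSquare_le n hk he hr.le hd hdr hy
    _ ≤ ∑ c, ∫⁻ y, E (y c) * ∏ t, expWeight κ (y (c.succAbove t) - y c) ∂unifPoints (k + 1) :=
        (setLIntegral_le_lintegral _ _).trans_eq (lintegral_finsetSum _ fun c _ => by fun_prop)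
    _ ≤ ∑ _c : Fin (k + 1), (∫⁻ p, E p ∂unifSquare) * (∫⁻ u, expWeight κ u) ^ k :=
        Finset.sum_le_sum fun c _ =>
          lintegral_pi_mul_prod_sub_le Measure.restrict_le_self c hE hg
    _ = _ := by
        rw [Finset.sum_const, Finset.card_univ, Fintype.card_fin, nsmul_eq_mul, Nat.cast_succ,
          lintegral_expWeight hκ]

/-- Among the sample points there is a configuration of `k` points with extremal points `a`, `b`,
`w` such that no other sample point lies in the region next to these extremal points. -/
def extremalCluster (k n : ℕ) (r d : ℝ) (i : Fin 2) (e : ℝ) (a b w : Fin k) : Set (Fin n → ℝ²) :=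
  {x | ∃ f : Fin k ↪ Fin n, ExtremalConfig r d i e (x ∘ f) a b w ∧
    ∀ j ∉ range f, x j ∉ emptyRegion r i e (x (f a)) (x (f b)) (x (f w))}

lemma unifPoints_extremalCluster_le (hk : 0 < k) (hn : 0 < n) (he : e = 1 ∨ e = -1) (hr : 0 < r)
    (hd : 1 ≤ d) (hdr : (d + 2) * r ≤ 1) (a b w : Fin (k + 1)) :
    unifPoints n (extremalCluster (k + 1) n r d i e a b w) ≤ ENNReal.ofReal
      (Real.exp (k + 1) * ((k + 1) * ((meanIsolated n r + boundaryError n r) *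
        ((16 * d * k) ^ 2 / (n * r ^ 2)) ^ k))) := by
  have hn0 : (0 : ℝ) < n := by exact_mod_cast hn
  set I := ∫⁻ p, ENNReal.ofReal (Real.exp (-(n * discArea r p))) ∂unifSquare
  set G := ENNReal.ofReal ((2 / (n * r / (8 * d * k))) ^ 2) with hG
  have hunion := measure_pi_exists_comp_mem_and_notMem_le (μ := unifSquare) (n := n)
    (measurableSet_setOf_extremalConfig r d i e a b w)
    (R := fun y => emptyRegion r i e (y a) (y b) (y w))
    (measurableSet_setOf_mem_emptyRegion (by fun_prop) (by fun_prop) (by fun_prop)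
      (by fun_prop) r i e)
  push_cast at hunion
  calc unifPoints n (extremalCluster (k + 1) n r d i e a b w)
      ≤ ENNReal.ofReal (Real.exp (k + 1)) * (n ^ (k + 1) * ((k + 1) * (I * G ^ k))) :=
        hunion.trans (by grw [setLIntegral_extremalConfig_le hk hn he hr hd hdr a b w])
    _ = ENNReal.ofReal (Real.exp (k + 1)) * ((k + 1) * ((n * I) * (n * G) ^ k)) := by ring
    _ ≤ ENNReal.ofReal (Real.exp (k + 1)) * ((k + 1) *
        (ENNReal.ofReal (meanIsolated n r + boundaryError n r) * (n * G) ^ k)) := by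
        grw [lintegral_exp_neg_discArea_le hn hr (by nlinarith)]
    _ = _ := by
        have hA := add_nonneg (meanIsolated_nonneg n r) (boundaryError_nonneg n r)
        have hG' : n * G = ENNReal.ofReal ((16 * d * k) ^ 2 / (n * r ^ 2)) := by
          rw [hG, ← ENNReal.ofReal_natCast, ← ENNReal.ofReal_mul hn0.le]
          congr 1
          field
        have hcast : ENNReal.ofReal ((k : ℝ) + 1) = k + 1 :=
          mod_cast ENNReal.ofReal_natCast (k + 1)
        rw [ENNReal.ofReal_mul (Real.exp_pos _).le, ENNReal.ofReal_mul (by positivity),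
          ENNReal.ofReal_mul hA, hG', hcast,
          ENNReal.ofReal_pow (p := (16 * d * k) ^ 2 / (n * r ^ 2)) (by positivity)]

/-- Some vertex whose disc lies in the unit square is isolated. -/
def innerIsolated (n : ℕ) (r : ℝ) : Set (Fin n → ℝ²) :=
  {x | ∃ v, x v ∈ innerSquare r ∧ ∀ w ≠ v, x w ∉ Metric.closedBall (x v) r}

lemma norm_sub_le_of_mem_capBox {p x y z : ℝ²} (hr : 0 ≤ r) (he : e = 1 ∨ e = -1)
    (hp : p ∈ capBox r i e x y z) : ‖p - z‖ ≤ r := by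
  obtain ⟨-, hi, hpos, hle⟩ := hp
  have h1 : (p i - z i) ^ 2 ≤ (r / 2) ^ 2 := sq_le_sq' (abs_le.1 hi).1 (abs_le.1 hi).2
  have h2 : (p (i + 1) - z (i + 1)) ^ 2 = (e * (p (i + 1) - z (i + 1))) ^ 2 := by
    rcases he with rfl | rfl <;> ring
  have h3 : (e * (p (i + 1) - z (i + 1))) ^ 2 ≤ (r / 2) ^ 2 := pow_le_pow_left₀ hpos.le hle 2
  rw [norm_sub_le_iff_coord (i := i) hr]
  nlinarith

lemma exists_long_direction {ι : Type*} (x : ι → ℝ²) {D : Finset ι} (hD : 1 < D.card) :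
    ∃ i, ∃ u ∈ D, ∃ v ∈ D, u ≠ v ∧ (∀ p ∈ D, x p i ∈ Icc (x u i) (x v i)) ∧
      ∀ p ∈ D, ∀ q ∈ D, |x p (i + 1) - x q (i + 1)| ≤ x v i - x u i := by
  have hne : D.Nonempty := Finset.card_pos.1 (by lia)
  choose M hM hmax using fun j => D.exists_max_image (fun p => x p j) hne
  choose m hm hmin using fun j => D.exists_min_image (fun p => x p j) hne
  obtain ⟨i, hi⟩ : ∃ i : Fin 2,
      x (M (i + 1)) (i + 1) - x (m (i + 1)) (i + 1) ≤ x (M i) i - x (m i) i := by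
    rcases le_total (x (M 1) 1 - x (m 1) 1) (x (M 0) 0 - x (m 0) 0) with h | h
    · exact ⟨0, h⟩
    · exact ⟨1, h⟩
  have hspread : ∀ p ∈ D, ∀ q ∈ D, |x p (i + 1) - x q (i + 1)| ≤ x (M i) i - x (m i) i :=
    fun p hp q hq => abs_sub_le_iff.2
      ⟨by linarith [hmax (i + 1) p hp, hmin (i + 1) q hq],
        by linarith [hmax (i + 1) q hq, hmin (i + 1) p hp]⟩
  by_cases h : m i = M i
  · obtain ⟨u, hu, v, hv, huv⟩ := Finset.one_lt_card.1 hD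
    have hall : ∀ p ∈ D, x p i = x (M i) i := fun p hp =>
      (hmax i p hp).antisymm (by simpa only [h] using hmin i p hp)
    refine ⟨i, u, hu, v, hv, huv, fun p hp => ?_, fun p hp q hq => ?_⟩
    · rw [hall p hp, hall u hu, hall v hv]
      exact ⟨le_rfl, le_rfl⟩
    · exact (hspread p hp q hq).trans_eq (by rw [h, hall u hu, hall v hv])
  · exact ⟨i, m i, hm i, M i, hM i, h, fun p hp => ⟨hmin i p hp, hmax i p hp⟩, hspread⟩

namespace IsCluster

variable {x : Fin n → ℝ²} {D : Finset (Fin n)}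

lemma exists_extremal (h : IsCluster x r (d * r) D) (hx : ∀ v, x v ∈ unitSquare) (hr : 0 < r)
    (hdr : (d + 2) * r ≤ 1) (j : Fin 2) :
    ∃ w ∈ D, ∃ e : ℝ, (e = 1 ∨ e = -1) ∧ (∀ p ∈ D, e * (x p j - x w j) ≤ 0) ∧
      x w j + e * (r / 2) ∈ Icc (0 : ℝ) 1 := by
  obtain ⟨a, ha, hmax⟩ := D.exists_max_image (fun p => x p j) h.nonempty
  obtain ⟨b, hb, hmin⟩ := D.exists_min_image (fun p => x p j) h.nonempty
  by_cases hroom : x a j + r / 2 ≤ 1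
  · exact ⟨a, ha, 1, .inl rfl, fun p hp => by linarith [hmax p hp],
      by linarith [(hx a j).1], by linarith⟩
  · have hab := (abs_le.1 (h.abs_sub_le a ha b hb j)).2
    exact ⟨b, hb, -1, .inr rfl, fun p hp => by linarith [hmin p hp], by linarith,
      by linarith [(hx b j).2]⟩

lemma exists_isolated_of_card_le_one (h : IsCluster x r d D) (hD : D.card ≤ 1) :
    x ∈ innerIsolated n r ∨ x ∈ boundaryIsolated n r := by
  obtain ⟨u, rfl⟩ := Finset.card_eq_one.1 (hD.antisymm (Finset.card_pos.2 h.nonempty))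
  have hiso : ∀ w ≠ u, x w ∉ Metric.closedBall (x u) r := fun w hw hw' => by
    rw [Metric.mem_closedBall, dist_comm, dist_eq_norm] at hw'
    exact hw'.not_gt (h.lt_norm_sub u (Finset.mem_singleton_self u) w (by simpa using hw))
  by_cases hu : x u ∈ innerSquare r
  · exact .inl ⟨u, hu, hiso⟩
  · exact .inr ⟨u, hu, hiso⟩

lemma notMem_emptyRegion (h : IsCluster x r d D) (he : e = 1 ∨ e = -1) (hr : 0 ≤ r)
    {u v w : Fin n} (hu : u ∈ D) (hv : v ∈ D) (hw : w ∈ D)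
    (hbd : ∀ p ∈ D, x p i ∈ Icc (x u i) (x v i))
    (hfront : ∀ p ∈ D, e * (x p (i + 1) - x w (i + 1)) ≤ 0) (j : Fin n) :
    x j ∉ emptyRegion r i e (x u) (x v) (x w) := by
  intro hj
  by_cases hjD : j ∈ D
  · rcases hj with (hj | hj) | hj
    · linarith [hj.2, (hbd j hjD).1]
    · linarith [hj.2, (hbd j hjD).2]
    · exact (hfront j hjD).not_gt hj.2.2.1
  · have hfar {q : Fin n} (hq : q ∈ D) : r < ‖x j - x q‖ := by
      rw [norm_sub_rev]
      exact h.lt_norm_sub q hq j hjD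
    rcases hj with (hj | hj) | hj
    · exact hj.1.not_gt (hfar hu)
    · exact hj.1.not_gt (hfar hv)
    · exact (norm_sub_le_of_mem_capBox hr he hj).not_gt (hfar hw)

lemma mem_extremalCluster (h : IsCluster x r (d * r) D) (he : e = 1 ∨ e = -1) (hr : 0 ≤ r)
    {u v w : Fin n} (hu : u ∈ D) (hv : v ∈ D) (hw : w ∈ D) (huv : u ≠ v)
    (hbd : ∀ p ∈ D, x p i ∈ Icc (x u i) (x v i))
    (hspread : ∀ p ∈ D, ∀ q ∈ D, |x p (i + 1) - x q (i + 1)| ≤ x v i - x u i)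
    (hfront : ∀ p ∈ D, e * (x p (i + 1) - x w (i + 1)) ≤ 0)
    (hroom : x w (i + 1) + e * (r / 2) ∈ Icc (0 : ℝ) 1)
    (hfree : ∃ j, ∀ p ∈ D, x p j ∈ Icc r (1 - r)) :
    ∃ (k : Fin 2) (a b c : Fin (k + 2)), x ∈ extremalCluster (k + 2) n r d i e a b c := by
  classical
  set s : Finset (Fin n) := {u, v, w}
  have hsD : s ⊆ D := by simp [s, Finset.insert_subset_iff, hu, hv, hw]
  have hcard : 2 ≤ s.card := Finset.one_lt_card.2 ⟨u, by simp [s], v, by simp [s], huv⟩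
  obtain ⟨k, hk⟩ : ∃ k : Fin 2, s.card = k + 2 :=
    ⟨⟨s.card - 2, by have := Finset.card_le_three (a := u) (b := v) (c := w); lia⟩,
      (Nat.sub_add_cancel hcard).symm⟩
  set f := (s.orderEmbOfFin hk).toEmbedding
  have hfD (j : Fin (k + 2)) : f j ∈ D := hsD (s.orderEmbOfFin_mem hk j)
  have hrange {q : Fin n} (hq : q ∈ s) : ∃ j, f j = q := by
    have : q ∈ range (s.orderEmbOfFin hk) := by rwa [s.range_orderEmbOfFin hk]
    exact this
  obtain ⟨a, ha⟩ := hrange (q := u) (by simp [s])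
  obtain ⟨b, hb⟩ := hrange (q := v) (by simp [s])
  obtain ⟨c, hc⟩ := hrange (q := w) (by simp [s])
  obtain ⟨j₀, hj₀⟩ := hfree
  refine ⟨k, a, b, c, f, ?_, fun j _ => ?_⟩
  · constructor <;> simp only [Function.comp_apply, ha, hb, hc]
    · exact fun j => hbd _ (hfD j)
    · exact fun j l => hspread _ (hfD j) _ (hfD l)
    · exact (le_abs_self _).trans (h.abs_sub_le v hv u hu i)
    · exact hroom
    · exact ⟨j₀, hj₀ u hu, hj₀ v hv⟩
  · rw [ha, hb, hc]
    exact h.notMem_emptyRegion he hr hu hv hw hbd hfront j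

theorem mem_isolated_or_extremal (h : IsCluster x r (d * r) D) (hx : ∀ v, x v ∈ unitSquare)
    (hr : 0 < r) (hdr : (d + 2) * r ≤ 1) :
    x ∈ innerIsolated n r ∨ x ∈ boundaryIsolated n r ∨ ∃ e : ℝ, (e = 1 ∨ e = -1) ∧
      (x ∈ cornerExtremal n r ((d + 1) * r) e ∨ ∃ (i : Fin 2) (k : Fin 2) (a b c : Fin (k + 2)),
        x ∈ extremalCluster (k + 2) n r d i e a b c) := by
  rcases le_or_gt D.card 1 with hcard | hcard
  · exact (h.exists_isolated_of_card_le_one hcard).imp_right .inl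
  right; right
  obtain ⟨z, hz, e, he, hfront, hroom⟩ := h.exists_extremal hx hr hdr 0
  by_cases hcorner : x z ∈ cornerRegion ((d + 1) * r)
  · refine ⟨e, he, .inl ⟨z, ⟨hcorner, hroom⟩, fun j _ hj => ?_⟩⟩
    by_cases hjD : j ∈ D
    · exact (hfront j hjD).not_gt hj.2
    · have := h.lt_norm_sub z hz j hjD
      rw [norm_sub_rev] at this
      exact hj.1.not_gt this
  simp only [cornerRegion, mem_ofPred_eq, not_forall, not_not] at hcorner
  obtain ⟨j₀, hj₀⟩ := hcorner
  have hfree : ∀ p ∈ D, x p j₀ ∈ Icc r (1 - r) := fun p hp => by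
    have := abs_le.1 (h.abs_sub_le p hp z hz j₀)
    exact ⟨by linarith [hj₀.1], by linarith [hj₀.2]⟩
  obtain ⟨i, u, hu, v, hv, huv, hbd, hspread⟩ := exists_long_direction x hcard
  obtain ⟨w, hw, e', he', hfront', hroom'⟩ := h.exists_extremal hx hr hdr (i + 1)
  exact ⟨e', he', .inr ⟨i, h.mem_extremalCluster he' hr.le hu hv hw huv hbd hspread hfront' hroom'
    ⟨j₀, hfree⟩⟩⟩

end IsCluster

end Clusters

section Bonferroni

variable {Ω κ : Type*} [Fintype κ]

open scoped Classical in
lemma choose_card_filter_mem (A : κ → Set Ω) (k : ℕ) (ω : Ω) :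
    ((Finset.univ.filter (ω ∈ A ·)).card.choose k : ℝ) =
      ∑ s ∈ Finset.powersetCard k Finset.univ, (⋂ v ∈ s, A v).indicator 1 ω := by
  have hfilter : Finset.powersetCard k (Finset.univ.filter (ω ∈ A ·)) =
      (Finset.powersetCard k Finset.univ).filter fun s => ω ∈ ⋂ v ∈ s, A v := by
    ext s
    simp [Finset.subset_iff, and_comm]
  simp only [indicator_apply, Pi.one_apply]
  rw [← Finset.card_powersetCard, hfilter, Finset.sum_boole]

lemma alternating_sum_choose_of_pos {m : ℕ} (hm : 0 < m) (K : ℕ) :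
    ∑ k ∈ Finset.range (K + 1), (-1 : ℝ) ^ k * m.choose k = (-1) ^ K * (m - 1).choose K := by
  obtain ⟨m, rfl⟩ := Nat.exists_eq_add_one.2 hm
  exact_mod_cast Int.alternating_sum_range_choose_eq_choose (n := m) (m := K)

variable [MeasurableSpace Ω] {μ : Measure Ω} {A : κ → Set Ω}

/-- The `k`-th binomial moment `𝔼[C(N, k)]` of the number `N` of events `A v` that occur, written
as the sum over all `k`-element sets of indices of the probability of joint occurrence. -/
noncomputable def binomialMoment (μ : Measure Ω) (A : κ → Set Ω) (k : ℕ) : ℝ :=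
  ∑ s ∈ Finset.powersetCard k Finset.univ, μ.real (⋂ v ∈ s, A v)

open scoped Classical in
lemma bonferroni [IsFiniteMeasure μ] (hA : ∀ v, MeasurableSet (A v)) (K : ℕ) :
    0 ≤ (-1) ^ K * (∑ k ∈ Finset.range (K + 1), (-1) ^ k * binomialMoment μ A k -
      μ.real (⋂ v, (A v)ᶜ)) := by
  have hint {s : Set Ω} (hs : MeasurableSet s) : Integrable (s.indicator (1 : Ω → ℝ)) μ :=
    (integrable_const (1 : ℝ)).indicator hs
  have hsome (s : Finset κ) : MeasurableSet (⋂ v ∈ s, A v) :=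
    s.measurableSet_biInter fun v _ => hA v
  have hnone : MeasurableSet (⋂ v, (A v)ᶜ) := .iInter fun v => (hA v).compl
  set N : Ω → ℕ := fun ω => (Finset.univ.filter (ω ∈ A ·)).card
  have hchoose (k : ℕ) : Integrable (fun ω => ((N ω).choose k : ℝ)) μ := by
    simp only [N, choose_card_filter_mem]
    exact integrable_finsetSum _ fun s _ => hint (hsome s)
  have hmoment (k : ℕ) : binomialMoment μ A k = ∫ ω, ((N ω).choose k : ℝ) ∂μ := by
    simp only [N, choose_card_filter_mem]
    rw [integral_finsetSum _ fun s _ => hint (hsome s), binomialMoment]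
    exact Finset.sum_congr rfl fun s _ => (integral_indicator_one (hsome s)).symm
  have hsum : Integrable (fun ω => ∑ k ∈ Finset.range (K + 1), (-1) ^ k * ((N ω).choose k : ℝ)) μ :=
    integrable_finsetSum _ fun k _ => (hchoose k).const_mul _
  simp only [hmoment, ← integral_const_mul]
  rw [← integral_finsetSum _ fun k _ => (hchoose k).const_mul _, ← integral_indicator_one hnone,
    ← integral_sub hsum (hint hnone), ← integral_const_mul]
  refine integral_nonneg fun ω => ?_
  rcases (N ω).eq_zero_or_pos with h | h
  · have hmem : ω ∈ ⋂ v, (A v)ᶜ := by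
      simpa [N, Finset.filter_eq_empty_iff] using h
    simp [h, hmem, Finset.sum_range_succ']
  · have hmem : ω ∉ ⋂ v, (A v)ᶜ := by
      obtain ⟨v, hv⟩ := Finset.card_pos.1 h
      exact fun h => mem_iInter.1 h v (Finset.mem_filter.1 hv).2
    simp only [Pi.zero_apply]
    rw [alternating_sum_choose_of_pos h, indicator_of_notMem hmem, sub_zero, ← mul_assoc, ← mul_pow,
      neg_one_mul, neg_neg, one_pow, one_mul]
    positivity

end Bonferroni

lemma tendsto_measureReal_iInter_compl_of_tendsto_binomialMoment {ι : Type*} {l : Filter ι}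
    {Ω κ : ι → Type*} [∀ n, Fintype (κ n)] [∀ n, MeasurableSpace (Ω n)]
    {μ : ∀ n, Measure (Ω n)} [∀ n, IsFiniteMeasure (μ n)] {A : ∀ n, κ n → Set (Ω n)}
    (hA : ∀ n v, MeasurableSet (A n v)) {Λ : ℝ}
    (h : ∀ k, Tendsto (fun n => binomialMoment (μ n) (A n) k) l (𝓝 (Λ ^ k / k.factorial))) :
    Tendsto (fun n => (μ n).real (⋂ v, (A n v)ᶜ)) l (𝓝 (Real.exp (-Λ))) := by
  set p : ℕ → ℝ := fun K => ∑ k ∈ Finset.range K, (-1) ^ k * (Λ ^ k / k.factorial)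
  have hp : Tendsto p atTop (𝓝 (Real.exp (-Λ))) := by
    simp only [p, ← mul_div_assoc, ← mul_pow, neg_one_mul]
    rw [Real.exp_eq_exp_ℝ]
    exact (NormedSpace.expSeries_div_hasSum_exp (-Λ)).tendsto_sum_nat
  have hsum (K : ℕ) : Tendsto
      (fun n => ∑ k ∈ Finset.range K, (-1) ^ k * binomialMoment (μ n) (A n) k) l (𝓝 (p K)) :=
    tendsto_finsetSum _ fun k _ => (h k).const_mul _
  rw [Metric.tendsto_nhds]
  intro ε hε
  obtain ⟨K, hK⟩ := Metric.tendsto_atTop.1 hp (ε / 2) (half_pos hε)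
  have hodd := hK (2 * K + 1) (by lia)
  have heven := hK (2 * K + 1 + 1) (by lia)
  filter_upwards [Metric.tendsto_nhds.1 (hsum (2 * K + 1)) (ε / 2) (half_pos hε),
    Metric.tendsto_nhds.1 (hsum (2 * K + 1 + 1)) (ε / 2) (half_pos hε)] with n hodd' heven'
  have hupper := bonferroni (μ := μ n) (hA n) (2 * K)
  have hlower := bonferroni (μ := μ n) (hA n) (2 * K + 1)
  rw [pow_mul, neg_one_sq, one_pow] at hupper
  rw [pow_succ, pow_mul, neg_one_sq, one_pow] at hlower
  rw [Real.dist_eq, abs_lt] at *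
  constructor <;> linarith [hodd.1, hodd.2, heven.1, heven.2]

section DiscUnions

variable {k : ℕ} {r : ℝ} {p q : ℝ²}

/-- The union of the closed discs of radius `r` around the points of `y`. -/
def discUnion (r : ℝ) (y : Fin k → ℝ²) : Set ℝ² := ⋃ i, Metric.closedBall (y i) r

/-- The `k`-tuples of points of the inner square at pairwise distance larger than `r`: the possible
positions of `k` isolated vertices away from the boundary of the unit square. -/
def separatedConfigs (k : ℕ) (r : ℝ) : Set (Fin k → ℝ²) :=
  {y | (∀ i, y i ∈ innerSquare r) ∧ ∀ i j, i ≠ j → r < ‖y i - y j‖}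

lemma measurableSet_separatedConfigs (k : ℕ) (r : ℝ) : MeasurableSet (separatedConfigs k r) := by
  have hinner : MeasurableSet {y : Fin k → ℝ² | ∀ i, y i ∈ innerSquare r} := by
    rw [ofPred_forall]
    exact .iInter fun i => measurable_pi_apply i (measurableSet_innerSquare r)
  have hfar : MeasurableSet {y : Fin k → ℝ² | ∀ i j, i ≠ j → r < ‖y i - y j‖} := by
    simp only [ofPred_forall]
    exact .iInter fun i => .iInter fun j => .iInter fun _ =>
      measurableSet_lt (by fun_prop) (by fun_prop)
  exact hinner.inter hfar

lemma removeNth_mem_separatedConfigs {y : Fin (k + 1) → ℝ²} (hy : y ∈ separatedConfigs (k + 1) r)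
    (i : Fin (k + 1)) : i.removeNth y ∈ separatedConfigs k r :=
  ⟨fun _ => hy.1 _, fun _ _ h => hy.2 _ _ fun h' => h (Fin.succAbove_right_injective h')⟩

lemma measurableSet_setOf_mem_discUnion (k : ℕ) (r : ℝ) :
    MeasurableSet {q : (Fin k → ℝ²) × ℝ² | q.2 ∈ discUnion r q.1} := by
  simp only [discUnion, mem_iUnion, ofPred_exists, Metric.mem_closedBall]
  exact .iUnion fun i => measurableSet_le (by fun_prop) (by fun_prop)

lemma measurableSet_discUnion (r : ℝ) (y : Fin k → ℝ²) : MeasurableSet (discUnion r y) :=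
  measurable_prodMk_left (measurableSet_setOf_mem_discUnion k r)

lemma unifSquare_real_discUnion_le (hr : 0 ≤ r) (y : Fin k → ℝ²) :
    unifSquare.real (discUnion r y) ≤ k * (π * r ^ 2) := by
  refine (measureReal_iUnion_fintype_le _).trans
    ((Finset.sum_le_sum fun i _ => discArea_le hr (y i)).trans_eq ?_)
  rw [Finset.sum_const, Finset.card_univ, Fintype.card_fin, nsmul_eq_mul]

lemma unifSquare_real_discUnion_of_forall_lt (hr : 0 ≤ r) {y : Fin k → ℝ²}
    (hy : ∀ i, y i ∈ innerSquare r) (hfar : ∀ i j, i ≠ j → 2 * r < ‖y i - y j‖) :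
    unifSquare.real (discUnion r y) = k * (π * r ^ 2) := by
  have hdisj : Pairwise (Function.onFun Disjoint fun i => Metric.closedBall (y i) r) := by
    intro i j hij
    apply Metric.closedBall_disjoint_closedBall
    rw [dist_eq_norm]
    linarith [hfar i j hij]
  rw [discUnion, measureReal_iUnion_fintype hdisj fun _ => Metric.isClosed_closedBall.measurableSet]
  refine (Finset.sum_congr rfl fun i _ => discArea_eq_of_forall_mem_Icc hr (hy i)).trans ?_
  rw [Finset.sum_const, Finset.card_univ, Fintype.card_fin, nsmul_eq_mul]

/-- A box in the left half of the disc of radius `r` around `p`. It is missed by the discs of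
radius `r` around all points that lie to the right of `p` at distance larger than `r`. -/
def leftBox (r : ℝ) (p : ℝ²) : Set ℝ² :=
  {q | q 0 ∈ Ioo (p 0 - 3 * r / 4) (p 0 - r / 2) ∧ q 1 ∈ Ioo (p 1 - r / 16) (p 1 + r / 16)}

lemma leftBox_subset_closedBall (hr : 0 ≤ r) (p : ℝ²) : leftBox r p ⊆ Metric.closedBall p r := by
  rintro q ⟨⟨h1, h2⟩, h3, h4⟩
  rw [Metric.mem_closedBall, dist_eq_norm, norm_sub_le_iff_coord (i := 0) hr, zero_add]
  nlinarith

lemma le_unifSquare_real_leftBox (hr : 0 ≤ r) (hp : p ∈ innerSquare r) :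
    r ^ 2 / 32 ≤ unifSquare.real (leftBox r p) := by
  obtain ⟨h0, h0'⟩ := hp 0
  obtain ⟨h1, h1'⟩ := hp 1
  calc r ^ 2 / 32
      = (p 0 - r / 2 - (p 0 - 3 * r / 4)) * (p 1 + r / 16 - (p 1 - r / 16)) := by ring
    _ ≤ unifSquare.real (leftBox r p) :=
      mul_le_unifSquare_real_of_box 0 (by linarith) (by linarith) (by linarith) (by linarith)
        (by linarith) fun _ h h' => ⟨h, h'⟩

lemma disjoint_leftBox_closedBall (hr : 0 ≤ r) (hpq : p 0 ≤ q 0) (hfar : r < ‖p - q‖) :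
    Disjoint (leftBox r p) (Metric.closedBall q r) := by
  rw [Set.disjoint_left]
  rintro z ⟨⟨h1, h2⟩, h3, h4⟩ hz
  rw [← not_le, norm_sub_le_iff_coord (i := 0) hr, zero_add, not_le] at hfar
  rw [Metric.mem_closedBall, dist_eq_norm] at hz
  obtain ⟨hz1, hz2⟩ := abs_le.1 ((abs_apply_sub_apply_le_norm z q 1).trans hz)
  rw [norm_sub_le_iff_coord (i := 0) hr, zero_add] at hz
  have hleft : r ^ 2 / 4 ≤ (p 0 - z 0) ^ 2 := by nlinarith
  have hright : 0 ≤ (p 0 - z 0) * (q 0 - p 0) := mul_nonneg (by linarith) (by linarith)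
  have hvert : (z 1 - p 1) * (q 1 - p 1) ≤ r / 16 * (17 / 16 * r) := by
    refine (le_abs_self _).trans ?_
    rw [abs_mul]
    gcongr
    · exact abs_le.2 ⟨by linarith, by linarith⟩
    · exact abs_le.2 ⟨by linarith, by linarith⟩
  nlinarith [sq_nonneg (z 1 - p 1)]

/-- The removed point is the leftmost one among those with a second point at distance at most
`2 * r`: its left box is not covered by the other discs. -/
lemma exists_add_unifSquare_real_discUnion_le (hr : 0 ≤ r) {y : Fin (k + 1) → ℝ²}
    (hy : y ∈ separatedConfigs (k + 1) r) (hnear : ∃ i j, i ≠ j ∧ ‖y i - y j‖ ≤ 2 * r) :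
    ∃ i j, ‖y i - i.removeNth y j‖ ≤ 2 * r ∧
      r ^ 2 / 32 + unifSquare.real (discUnion r (i.removeNth y)) ≤
        unifSquare.real (discUnion r y) := by
  obtain ⟨i, ⟨j, hij, hj⟩, hmin⟩ :=
    {i | ∃ j, i ≠ j ∧ ‖y i - y j‖ ≤ 2 * r}.toFinite.exists_minimalFor (fun i => y i 0) _ hnear
  obtain ⟨j, rfl⟩ := Fin.exists_succAbove_eq hij.symm
  refine ⟨i, j, hj, ?_⟩
  have hdisj : Disjoint (leftBox r (y i)) (discUnion r (i.removeNth y)) := by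
    refine disjoint_iUnion_right.2 fun m => ?_
    have hfar := hy.2 i _ (i.succAbove_ne m).symm
    by_cases hm : ‖y i - i.removeNth y m‖ ≤ 2 * r
    · refine disjoint_leftBox_closedBall hr (le_of_not_gt fun hlt => ?_) hfar
      have := hmin ⟨i, i.succAbove_ne m, (norm_sub_rev _ _).trans_le hm⟩ hlt.le
      exact hlt.not_ge this
    · refine Disjoint.mono_left (leftBox_subset_closedBall hr _)
        (Metric.closedBall_disjoint_closedBall ?_)
      rw [dist_eq_norm]
      linarith
  have hsub : leftBox r (y i) ∪ discUnion r (i.removeNth y) ⊆ discUnion r y :=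
    union_subset ((leftBox_subset_closedBall hr _).trans
      (subset_iUnion (fun i => Metric.closedBall (y i) r) i))
      (iUnion_subset fun _ => subset_iUnion (fun i => Metric.closedBall (y i) r) _)
  calc r ^ 2 / 32 + unifSquare.real (discUnion r (i.removeNth y))
      ≤ unifSquare.real (leftBox r (y i)) + unifSquare.real (discUnion r (i.removeNth y)) := by
        gcongr
        exact le_unifSquare_real_leftBox hr (hy.1 i)
    _ = unifSquare.real (leftBox r (y i) ∪ discUnion r (i.removeNth y)) :=
      (measureReal_union hdisj (measurableSet_discUnion _ _)).symm
    _ ≤ unifSquare.real (discUnion r y) := measureReal_mono hsub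

end DiscUnions

section IsolationProbability

variable {k n : ℕ} {r : ℝ}

lemma setLIntegral_norm_sub_removeNth_le (i : Fin (k + 1)) (j : Fin k) (s : ℝ)
    {E : (Fin k → ℝ²) → ℝ≥0∞} (hE : Measurable E) :
    ∫⁻ y in {y | ‖y i - i.removeNth y j‖ ≤ s}, E (i.removeNth y) ∂unifPoints (k + 1) ≤
      volume (Metric.closedBall (0 : ℝ²) s) * ∫⁻ y, E y ∂unifPoints k := by
  have hremove : Measurable fun y : Fin (k + 1) → ℝ² => i.removeNth y := by
    unfold Fin.removeNth
    fun_prop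
  have hnear : MeasurableSet {y : Fin (k + 1) → ℝ² | ‖y i - i.removeNth y j‖ ≤ s} :=
    measurableSet_le (by unfold Fin.removeNth; fun_prop) measurable_const
  have hmeas : Measurable ({y | ‖y i - i.removeNth y j‖ ≤ s}.indicator
      fun y : Fin (k + 1) → ℝ² => E (i.removeNth y)) := (hE.comp hremove).indicator hnear
  rw [← lintegral_indicator hnear, unifPoints, lintegral_pi_succ i hmeas,
    ← lintegral_const_mul _ hE]
  refine lintegral_mono fun y => ?_
  have hsection (a : ℝ²) : {y : Fin (k + 1) → ℝ² | ‖y i - i.removeNth y j‖ ≤ s}.indicator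
      (fun y => E (i.removeNth y)) (i.insertNth a y) =
        (Metric.closedBall (y j) s).indicator (fun _ => E y) a := by
    simp only [indicator, mem_ofPred_eq, Fin.removeNth_insertNth, Fin.insertNth_apply_same,
      Metric.mem_closedBall, dist_eq_norm]
  simp only [hsection]
  rw [lintegral_indicator_const Metric.isClosed_closedBall.measurableSet, mul_comm,
    ← Measure.addHaar_closedBall_center volume (y j)]
  exact mul_le_mul_left (unifSquare_le_volume _) _

/-- Up to lower order factors, the probability density that given `k` vertices are located at `y`
and are all isolated, when `y` is a separated configuration. -/
noncomputable def isolationDensity (n : ℕ) (r : ℝ) : (Fin k → ℝ²) → ℝ≥0∞ :=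
  (separatedConfigs k r).indicator fun y =>
    ENNReal.ofReal (Real.exp (-(n * unifSquare.real (discUnion r y))))

lemma measurable_isolationDensity (n k : ℕ) (r : ℝ) :
    Measurable (isolationDensity n r : (Fin k → ℝ²) → ℝ≥0∞) := by
  have := measurable_measureReal_section (μ := unifSquare) (measurableSet_setOf_mem_discUnion k r)
  exact Measurable.indicator (by fun_prop) (measurableSet_separatedConfigs k r)

lemma lintegral_isolationDensity_le_one (n k : ℕ) (r : ℝ) :
    ∫⁻ y : Fin k → ℝ², isolationDensity n r y ∂unifPoints k ≤ 1 := by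
  have hle (y : Fin k → ℝ²) : isolationDensity n r y ≤ 1 := by
    refine indicator_le' (fun y _ => ?_) (fun _ _ => zero_le_one) y
    rw [ENNReal.ofReal_le_one, Real.exp_le_one_iff, Left.neg_nonpos_iff]
    positivity
  exact (lintegral_mono hle).trans_eq (by simp)

/-- The first summand covers disjoint discs, the others the removal of a point `i` whose disc meets
the one of another point `j`. -/
lemma isolationDensity_le (n : ℕ) (hr : 0 ≤ r) (y : Fin (k + 1) → ℝ²) :
    isolationDensity n r y ≤ ENNReal.ofReal (Real.exp (-(n * ((k + 1) * (π * r ^ 2))))) +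
      ENNReal.ofReal (Real.exp (-(n * r ^ 2 / 32))) *
        ∑ i, ∑ j, {y : Fin (k + 1) → ℝ² | ‖y i - i.removeNth y j‖ ≤ 2 * r}.indicator
          (fun y => isolationDensity n r (i.removeNth y)) y := by
  by_cases hy : y ∈ separatedConfigs (k + 1) r
  · rw [isolationDensity, indicator_of_mem hy]
    by_cases hnear : ∃ i j, i ≠ j ∧ ‖y i - y j‖ ≤ 2 * r
    · obtain ⟨i, j, hij, hadd⟩ := exists_add_unifSquare_real_discUnion_le hr hy hnear
      have hterm : isolationDensity n r (i.removeNth y) ≤ ∑ i, ∑ j,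
          {y : Fin (k + 1) → ℝ² | ‖y i - i.removeNth y j‖ ≤ 2 * r}.indicator
            (fun y => isolationDensity n r (i.removeNth y)) y := by
        refine le_trans ?_ (Finset.single_le_sum (fun _ _ => zero_le) (Finset.mem_univ i))
        refine le_trans ?_ (Finset.single_le_sum (fun _ _ => zero_le) (Finset.mem_univ j))
        rw [indicator_of_mem (show y ∈ {y | ‖y i - i.removeNth y j‖ ≤ 2 * r} from hij)]
      refine le_add_left (le_trans ?_ (mul_le_mul_right hterm _))
      rw [isolationDensity, indicator_of_mem (removeNth_mem_separatedConfigs hy i),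
        ← ENNReal.ofReal_mul (Real.exp_pos _).le, ← Real.exp_add]
      refine ENNReal.ofReal_le_ofReal (Real.exp_le_exp.2 ?_)
      linarith [mul_le_mul_of_nonneg_left hadd n.cast_nonneg]
    · push Not at hnear
      rw [unifSquare_real_discUnion_of_forall_lt hr hy.1 hnear, Nat.cast_add_one]
      exact le_self_add
  · rw [isolationDensity, indicator_of_notMem hy]
    exact zero_le

lemma lintegral_isolationDensity_succ_le (n k : ℕ) (hr : 0 ≤ r) :
    ∫⁻ y : Fin (k + 1) → ℝ², isolationDensity n r y ∂unifPoints (k + 1) ≤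
      ENNReal.ofReal (Real.exp (-(n * ((k + 1) * (π * r ^ 2))))) +
        ENNReal.ofReal (Real.exp (-(n * r ^ 2 / 32))) * ((k + 1) * (k *
          (ENNReal.ofReal (π * (2 * r) ^ 2) *
            ∫⁻ y : Fin k → ℝ², isolationDensity n r y ∂unifPoints k))) := by
  have hmeas := measurable_isolationDensity n k r
  have hnear (i : Fin (k + 1)) (j : Fin k) :
      MeasurableSet {y : Fin (k + 1) → ℝ² | ‖y i - i.removeNth y j‖ ≤ 2 * r} :=
    measurableSet_le (by unfold Fin.removeNth; fun_prop) measurable_const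
  have hterm (i : Fin (k + 1)) (j : Fin k) : Measurable
      ({y : Fin (k + 1) → ℝ² | ‖y i - i.removeNth y j‖ ≤ 2 * r}.indicator
        fun y => isolationDensity n r (i.removeNth y)) :=
    (hmeas.comp (by unfold Fin.removeNth; fun_prop)).indicator (hnear i j)
  refine (lintegral_mono (isolationDensity_le n hr)).trans ?_
  rw [lintegral_add_left measurable_const, lintegral_const, measure_univ, mul_one,
    lintegral_const_mul _ (by fun_prop), lintegral_finsetSum _ fun i _ => by fun_prop]
  gcongr
  calc ∑ i : Fin (k + 1), ∫⁻ y, ∑ j, {y | ‖y i - i.removeNth y j‖ ≤ 2 * r}.indicator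
        (fun y => isolationDensity n r (i.removeNth y)) y ∂unifPoints (k + 1)
      ≤ ∑ _i : Fin (k + 1), ∑ _j : Fin k, ENNReal.ofReal (π * (2 * r) ^ 2) *
          ∫⁻ y : Fin k → ℝ², isolationDensity n r y ∂unifPoints k := by
        refine Finset.sum_le_sum fun i _ => ?_
        rw [lintegral_finsetSum _ fun j _ => hterm i j]
        refine Finset.sum_le_sum fun j _ => ?_
        rw [lintegral_indicator (hnear i j), ← volume_real_closedBall (by positivity) 0,
          ofReal_measureReal measure_closedBall_lt_top.ne]
        exact setLIntegral_norm_sub_removeNth_le i j _ hmeas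
    _ = _ := by
        simp only [Finset.sum_const, Finset.card_univ, Fintype.card_fin, nsmul_eq_mul,
          Nat.cast_add_one]

/-- The bound on `n ^ k * ∫⁻ y, isolationDensity n r y` obtained by iterating
`lintegral_isolationDensity_succ_le`, where `Λ = meanIsolated n r` and `T = n * r ^ 2`. -/
noncomputable def isolationBound (Λ T : ℝ) : ℕ → ℝ
  | 0 => 1
  | k + 1 => Λ ^ (k + 1) + (k + 1) * (k * (4 * π * T * Real.exp (-(T / 32)) * isolationBound Λ T k))

lemma isolationBound_nonneg {Λ T : ℝ} (hΛ : 0 ≤ Λ) (hT : 0 ≤ T) (k : ℕ) :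
    0 ≤ isolationBound Λ T k := by
  induction k with
  | zero => exact zero_le_one
  | succ k ih =>
    rw [isolationBound]
    positivity

lemma tendsto_mul_exp_neg_div {a : ℝ} (ha : 0 < a) :
    Tendsto (fun t : ℝ => t * Real.exp (-(t / a))) atTop (𝓝 0) := by
  refine (tendsto_rpow_mul_exp_neg_mul_atTop_nhds_zero 1 a⁻¹ (by positivity)).congr fun t => ?_
  rw [Real.rpow_one, neg_mul, inv_mul_eq_div]

lemma tendsto_isolationBound {ι : Type*} {l : Filter ι} {Λ T : ι → ℝ} {Λ₀ : ℝ}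
    (hΛ : Tendsto Λ l (𝓝 Λ₀)) (hT : Tendsto T l atTop) (k : ℕ) :
    Tendsto (fun n => isolationBound (Λ n) (T n) k) l (𝓝 (Λ₀ ^ k)) := by
  induction k with
  | zero => simpa [isolationBound] using tendsto_const_nhds
  | succ k ih =>
    have hexp := (tendsto_mul_exp_neg_div (by norm_num : (0 : ℝ) < 32)).const_mul (4 * π)
    simp only [← mul_assoc, mul_zero] at hexp
    have h := (hΛ.pow (k + 1)).add
      ((((hexp.comp hT).mul ih).const_mul (k : ℝ)).const_mul ((k : ℝ) + 1))
    simpa only [zero_mul, mul_zero, add_zero, Function.comp_apply, isolationBound] using h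

lemma pow_mul_lintegral_isolationDensity_le (n : ℕ) (hr : 0 ≤ r) (k : ℕ) :
    n ^ k * ∫⁻ y : Fin k → ℝ², isolationDensity n r y ∂unifPoints k ≤
      ENNReal.ofReal (isolationBound (meanIsolated n r) (n * r ^ 2) k) := by
  induction k with
  | zero =>
    rw [isolationBound, ENNReal.ofReal_one, pow_zero, one_mul]
    exact lintegral_isolationDensity_le_one n 0 r
  | succ k ih =>
    have hB := isolationBound_nonneg (meanIsolated_nonneg n r) (by positivity : 0 ≤ n * r ^ 2) k
    have hm := meanIsolated_nonneg n r
    set I := ∫⁻ y : Fin k → ℝ², isolationDensity n r y ∂unifPoints k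
    have hfar : (n : ℝ≥0∞) ^ (k + 1) * ENNReal.ofReal (Real.exp (-(n * ((k + 1) * (π * r ^ 2))))) =
        ENNReal.ofReal (meanIsolated n r ^ (k + 1)) := by
      rw [meanIsolated, mul_pow, ← Real.exp_nat_mul, ENNReal.ofReal_mul (by positivity),
        ENNReal.ofReal_pow (by positivity), ENNReal.ofReal_natCast]
      push_cast
      ring_nf
    calc (n : ℝ≥0∞) ^ (k + 1) * ∫⁻ y : Fin (k + 1) → ℝ², isolationDensity n r y ∂unifPoints (k + 1)
        ≤ (n : ℝ≥0∞) ^ (k + 1) * (ENNReal.ofReal (Real.exp (-(n * ((k + 1) * (π * r ^ 2))))) +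
          ENNReal.ofReal (Real.exp (-(n * r ^ 2 / 32))) * ((k + 1) * (k *
            (ENNReal.ofReal (π * (2 * r) ^ 2) * I)))) := by
          gcongr
          exact lintegral_isolationDensity_succ_le n k hr
      _ = ENNReal.ofReal (meanIsolated n r ^ (k + 1)) + (k + 1) * (k * (n *
          ENNReal.ofReal (π * (2 * r) ^ 2) * ENNReal.ofReal (Real.exp (-(n * r ^ 2 / 32))) *
            (n ^ k * I))) := by
          rw [mul_add, hfar]
          ring
      _ ≤ ENNReal.ofReal (meanIsolated n r ^ (k + 1)) + (k + 1) * (k * (n *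
          ENNReal.ofReal (π * (2 * r) ^ 2) * ENNReal.ofReal (Real.exp (-(n * r ^ 2 / 32))) *
            ENNReal.ofReal (isolationBound (meanIsolated n r) (n * r ^ 2) k))) := by
          gcongr
      _ = ENNReal.ofReal (isolationBound (meanIsolated n r) (n * r ^ 2) (k + 1)) := by
          rw [isolationBound, ENNReal.ofReal_add (by positivity) (by positivity),
            ← ENNReal.ofReal_natCast n, ← ENNReal.ofReal_natCast k, ← ENNReal.ofReal_one,
            ← ENNReal.ofReal_add (by positivity) zero_le_one,
            ← ENNReal.ofReal_mul (by positivity), ← ENNReal.ofReal_mul (by positivity),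
            ← ENNReal.ofReal_mul (by positivity), ← ENNReal.ofReal_mul (by positivity),
            ← ENNReal.ofReal_mul (by positivity)]
          ring_nf

end IsolationProbability

section FactorialMoments

variable {k n : ℕ} {r : ℝ}

/-- The probability that `k` given vertices out of `n` are isolated and lie in the inner square. -/
noncomputable def isolationProb (n k : ℕ) (r : ℝ) : ℝ≥0∞ :=
  ∫⁻ y in separatedConfigs k r, unifSquare (discUnion r y)ᶜ ^ (n - k) ∂unifPoints k

lemma isolationProb_le (n k : ℕ) (hr : 0 ≤ r) :
    isolationProb n k r ≤ ENNReal.ofReal (Real.exp (k * (k * (π * r ^ 2)))) *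
      ∫⁻ y : Fin k → ℝ², isolationDensity n r y ∂unifPoints k := by
  rw [isolationProb, ← lintegral_const_mul' _ _ ENNReal.ofReal_ne_top,
    ← lintegral_indicator (measurableSet_separatedConfigs k r)]
  refine lintegral_mono fun y => ?_
  by_cases hy : y ∈ separatedConfigs k r
  · rw [indicator_of_mem hy, isolationDensity, indicator_of_mem hy]
    refine (measure_compl_pow_sub_le (measurableSet_discUnion r y) n k).trans ?_
    gcongr
    exact unifSquare_real_discUnion_le hr y
  · rw [indicator_of_notMem hy]
    exact zero_le

lemma isolationProb_le_one (n k : ℕ) (r : ℝ) : isolationProb n k r ≤ 1 :=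
  (setLIntegral_le_lintegral _ _).trans
    ((lintegral_mono fun _ => pow_le_one' prob_le_one _).trans_eq (by simp))

lemma unifSquare_compl_innerSquare_le (hr : 0 ≤ r) (hr1 : r ≤ 1 / 2) :
    unifSquare (innerSquare r)ᶜ ≤ ENNReal.ofReal (4 * r) := by
  have h : (1 - r - r) * (1 - r - r) ≤ unifSquare.real (innerSquare r) := by
    refine mul_le_unifSquare_real_of_box 0 (by linarith) hr (by linarith) hr (by linarith)
      fun p h0 h1 => ?_
    exact Fin.forall_fin_two.2 ⟨Ioo_subset_Icc_self h0, Ioo_subset_Icc_self h1⟩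
  rw [← ofReal_measureReal, probReal_compl_eq_one_sub (measurableSet_innerSquare r)]
  exact ENNReal.ofReal_le_ofReal (by nlinarith)

lemma unifPoints_norm_sub_le (hr : 0 ≤ r) {i j : Fin k} (hij : i ≠ j) :
    unifPoints k {y | ‖y i - y j‖ ≤ r} ≤ ENNReal.ofReal (π * r ^ 2) := by
  obtain ⟨k, rfl⟩ := Nat.exists_eq_add_one.2 i.pos
  obtain ⟨l, rfl⟩ := Fin.exists_succAbove_eq hij.symm
  have h := setLIntegral_norm_sub_removeNth_le i l r (E := fun _ => 1) measurable_const
  rwa [setLIntegral_one, lintegral_one, measure_univ, mul_one,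
    ← ofReal_measureReal measure_closedBall_lt_top.ne, volume_real_closedBall hr] at h

lemma unifPoints_compl_separatedConfigs_le (k : ℕ) (hr : 0 ≤ r) (hr1 : r ≤ 1 / 2) :
    unifPoints k (separatedConfigs k r)ᶜ ≤
      ENNReal.ofReal (k * (4 * r) + k * (k * (π * r ^ 2))) := by
  have hsub : (separatedConfigs k r)ᶜ ⊆ (⋃ i, {y : Fin k → ℝ² | y i ∈ (innerSquare r)ᶜ}) ∪
      ⋃ i, ⋃ j, {y : Fin k → ℝ² | i ≠ j ∧ ‖y i - y j‖ ≤ r} := by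
    intro y hy
    simp only [separatedConfigs, mem_compl_iff, mem_ofPred_eq, not_and_or, not_forall, not_lt] at hy
    rcases hy with ⟨i, hi⟩ | ⟨i, j, hij, hle⟩
    · exact Or.inl (mem_iUnion.2 ⟨i, hi⟩)
    · exact Or.inr (mem_iUnion.2 ⟨i, mem_iUnion.2 ⟨j, hij, hle⟩⟩)
  have hinner (i : Fin k) :
      unifPoints k {y | y i ∈ (innerSquare r)ᶜ} ≤ ENNReal.ofReal (4 * r) :=
    ((measurePreserving_eval (fun _ : Fin k => unifSquare) i).measure_preimage
      (measurableSet_innerSquare r).compl.nullMeasurableSet).trans_le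
      (unifSquare_compl_innerSquare_le hr hr1)
  have hnear (i j : Fin k) :
      unifPoints k {y | i ≠ j ∧ ‖y i - y j‖ ≤ r} ≤ ENNReal.ofReal (π * r ^ 2) := by
    by_cases hij : i = j
    · simp [hij]
    · exact (measure_mono fun y hy => hy.2).trans (unifPoints_norm_sub_le hr hij)
  calc unifPoints k (separatedConfigs k r)ᶜ
      ≤ ∑ i, unifPoints k {y | y i ∈ (innerSquare r)ᶜ} +
          ∑ i, ∑ j, unifPoints k {y | i ≠ j ∧ ‖y i - y j‖ ≤ r} :=
        (measure_mono hsub).trans ((measure_union_le _ _).trans (add_le_add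
          (measure_iUnion_fintype_le _ _) ((measure_iUnion_fintype_le _ _).trans
            (Finset.sum_le_sum fun _ _ => measure_iUnion_fintype_le _ _))))
    _ ≤ ∑ _i : Fin k, ENNReal.ofReal (4 * r) +
          ∑ _i : Fin k, ∑ _j : Fin k, ENNReal.ofReal (π * r ^ 2) := by
        gcongr with i _ i _ j _
        · exact hinner i
        · exact hnear i j
    _ = ENNReal.ofReal (k * (4 * r) + k * (k * (π * r ^ 2))) := by
        simp only [Finset.sum_const, Finset.card_univ, Fintype.card_fin, nsmul_eq_mul]
        rw [ENNReal.ofReal_add (by positivity) (by positivity), ENNReal.ofReal_mul k.cast_nonneg,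
          ENNReal.ofReal_mul k.cast_nonneg, ENNReal.ofReal_mul k.cast_nonneg,
          ENNReal.ofReal_natCast]

lemma exp_neg_add_sq_div_le_one_sub {u : ℝ} (hu : u < 1) :
    Real.exp (-(u + u ^ 2 / (1 - u))) ≤ 1 - u := by
  rw [← Real.le_log_iff_exp_le (by linarith)]
  refine le_trans (le_of_eq ?_) (Real.one_sub_inv_le_log_of_pos (by linarith))
  field_simp [(by linarith : 1 - u ≠ 0)]
  ring

lemma pow_mul_separatedConfigs_le_isolationProb (n : ℕ) (hr : 0 ≤ r)
    (hu : k * (π * r ^ 2) < 1) :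
    (1 - k * (π * r ^ 2)) ^ n * (unifPoints k).real (separatedConfigs k r) ≤
      (isolationProb n k r).toReal := by
  set u := k * (π * r ^ 2)
  have hu0 : 0 ≤ u := by positivity
  rw [← ENNReal.ofReal_le_iff_le_toReal
    (ne_top_of_le_ne_top ENNReal.one_ne_top (isolationProb_le_one n k r)),
    ENNReal.ofReal_mul (by have := sub_pos.2 hu; positivity),
    ofReal_measureReal (measure_ne_top _ _), ← setLIntegral_const, isolationProb]
  refine lintegral_mono fun y => ?_
  calc ENNReal.ofReal ((1 - u) ^ n) ≤ ENNReal.ofReal ((1 - u) ^ (n - k)) := by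
        refine ENNReal.ofReal_le_ofReal (pow_le_pow_of_le_one ?_ ?_ (n.sub_le k)) <;> linarith
    _ = ENNReal.ofReal (1 - u) ^ (n - k) := ENNReal.ofReal_pow (by linarith) _
    _ ≤ unifSquare (discUnion r y)ᶜ ^ (n - k) := by
        gcongr
        rw [← ofReal_measureReal (μ := unifSquare),
          probReal_compl_eq_one_sub (measurableSet_discUnion r y)]
        exact ENNReal.ofReal_le_ofReal
          (sub_le_sub_left (unifSquare_real_discUnion_le hr y) 1)

/-- The exponential accounts for the difference between `(1 - u) ^ n` and `exp (-(n * u))`, where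
`u = k * (π * r ^ 2)`. -/
lemma le_pow_mul_isolationProb (n : ℕ) (hr : 0 ≤ r) (hu : k * (π * r ^ 2) < 1) :
    meanIsolated n r ^ k * (unifPoints k).real (separatedConfigs k r) *
      Real.exp (-(n * ((k * (π * r ^ 2)) ^ 2 / (1 - k * (π * r ^ 2))))) ≤
      n ^ k * (isolationProb n k r).toReal := by
  have hprob := pow_mul_separatedConfigs_le_isolationProb n hr hu
  set u := k * (π * r ^ 2) with hu_def
  set S := (unifPoints k).real (separatedConfigs k r)
  have hmean : meanIsolated n r ^ k = n ^ k * Real.exp (-(n * u)) := by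
    rw [meanIsolated, mul_pow, ← Real.exp_nat_mul, hu_def]
    ring_nf
  calc meanIsolated n r ^ k * S * Real.exp (-(n * (u ^ 2 / (1 - u))))
      = n ^ k * (Real.exp (-(u + u ^ 2 / (1 - u))) ^ n * S) := by
        rw [hmean, ← Real.exp_nat_mul,
          show n * -(u + u ^ 2 / (1 - u)) = -(n * u) + -(n * (u ^ 2 / (1 - u))) by ring,
          Real.exp_add]
        ring
    _ ≤ n ^ k * ((1 - u) ^ n * S) := by
        gcongr
        exact exp_neg_add_sq_div_le_one_sub hu
    _ ≤ n ^ k * (isolationProb n k r).toReal := by gcongr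

lemma tendsto_unifPoints_real_separatedConfigs {ι : Type*} {l : Filter ι} {r : ι → ℝ}
    (hr : ∀ᶠ n in l, 0 ≤ r n) (hr0 : Tendsto r l (𝓝 0)) (k : ℕ) :
    Tendsto (fun n => (unifPoints k).real (separatedConfigs k (r n))) l (𝓝 1) := by
  have hbound :
      Tendsto (fun n => 1 - (k * (4 * r n) + k * (k * (π * r n ^ 2)))) l (𝓝 1) := by
    simpa using (((hr0.const_mul 4).const_mul (k : ℝ)).add
      ((((hr0.pow 2).const_mul π).const_mul (k : ℝ)).const_mul (k : ℝ))).const_sub 1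
  refine tendsto_of_tendsto_of_tendsto_of_le_of_le' hbound tendsto_const_nhds ?_
    (.of_forall fun _ => measureReal_le_one)
  filter_upwards [hr, hr0.eventually_le_const (by norm_num : (0 : ℝ) < 1 / 2)] with n hn hn2
  have h := ENNReal.toReal_le_of_le_ofReal (by positivity)
    (unifPoints_compl_separatedConfigs_le k hn hn2)
  rw [← measureReal_def, probReal_compl_eq_one_sub (measurableSet_separatedConfigs k _)] at h
  linarith

lemma tendsto_pow_mul_isolationProb {r : ℕ → ℝ} {Λ : ℝ} (hr : ∀ᶠ n in atTop, 0 ≤ r n)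
    (hr0 : Tendsto r atTop (𝓝 0)) (hT : Tendsto (fun n => n * r n ^ 2) atTop atTop)
    (hr4 : Tendsto (fun n => n * r n ^ 4) atTop (𝓝 0))
    (hΛ : Tendsto (fun n => meanIsolated n (r n)) atTop (𝓝 Λ)) (k : ℕ) :
    Tendsto (fun n => n ^ k * (isolationProb n k (r n)).toReal) atTop (𝓝 (Λ ^ k)) := by
  have hu : Tendsto (fun n => k * (π * r n ^ 2)) atTop (𝓝 0) := by
    simpa using ((hr0.pow 2).const_mul π).const_mul (k : ℝ)
  have hseparated := tendsto_unifPoints_real_separatedConfigs hr hr0 k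
  have hexp_lower : Tendsto (fun n : ℕ => Real.exp
      (-(n * ((k * (π * r n ^ 2)) ^ 2 / (1 - k * (π * r n ^ 2)))))) atTop (𝓝 1) := by
    have h := (((hr4.const_mul ((k * π) ^ 2)).div (hu.const_sub 1) (by norm_num)).neg).rexp
    rw [mul_zero, zero_div, neg_zero, Real.exp_zero] at h
    refine h.congr fun n => ?_
    simp only [Pi.div_apply]
    congr 2
    ring
  have hexp_upper : Tendsto (fun n : ℕ => Real.exp (k * (k * (π * r n ^ 2)))) atTop (𝓝 1) := by
    simpa using (hu.const_mul (k : ℝ)).rexp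
  refine tendsto_of_tendsto_of_tendsto_of_le_of_le'
    (by simpa using ((hΛ.pow k).mul hseparated).mul hexp_lower)
    (by simpa using hexp_upper.mul (tendsto_isolationBound hΛ hT k)) ?_ ?_
  · filter_upwards [hr, hu.eventually_lt_const one_pos] with n hn hu1
    exact le_pow_mul_isolationProb n hn hu1
  · filter_upwards [hr] with n hn
    have := isolationBound_nonneg (meanIsolated_nonneg n (r n)) (by positivity : 0 ≤ n * r n ^ 2) k
    have h : (n : ℝ≥0∞) ^ k * isolationProb n k (r n) ≤
        ENNReal.ofReal (Real.exp (k * (k * (π * r n ^ 2))) *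
          isolationBound (meanIsolated n (r n)) (n * r n ^ 2) k) := by
      grw [isolationProb_le n k hn, mul_left_comm, pow_mul_lintegral_isolationDensity_le n hn k,
        ← ENNReal.ofReal_mul (Real.exp_nonneg _)]
    simpa [ENNReal.toReal_mul] using ENNReal.toReal_le_of_le_ofReal (by positivity) h

end FactorialMoments

section PoissonLimit

variable {k n : ℕ} {r : ℝ}

/-- The event that the vertex `v` is isolated and lies in the inner square. -/
def isolatedAt (r : ℝ) (v : Fin n) : Set (Fin n → ℝ²) :=
  {x | x v ∈ innerSquare r ∧ ∀ w ≠ v, x w ∉ Metric.closedBall (x v) r}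

lemma measurableSet_isolatedAt (r : ℝ) (v : Fin n) : MeasurableSet (isolatedAt r v) := by
  have hinner : MeasurableSet {x : Fin n → ℝ² | x v ∈ innerSquare r} :=
    measurable_pi_apply v (measurableSet_innerSquare r)
  have hnear (w : Fin n) : MeasurableSet {x : Fin n → ℝ² | dist (x w) (x v) ≤ r} :=
    measurableSet_le (by fun_prop) (by fun_prop)
  have hfar : MeasurableSet {x : Fin n → ℝ² | ∀ w ≠ v, x w ∉ Metric.closedBall (x v) r} := by
    simp only [ofPred_forall]
    exact .iInter fun w => .iInter fun _ => (hnear w).compl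
  exact hinner.inter hfar

lemma innerIsolated_eq_iUnion (n : ℕ) (r : ℝ) : innerIsolated n r = ⋃ v, isolatedAt r v := by
  ext
  simp only [innerIsolated, isolatedAt, mem_iUnion, mem_ofPred_eq]

lemma unifPoints_iInter_isolatedAt {s : Finset (Fin n)} (hs : s.card = k) :
    unifPoints n (⋂ v ∈ s, isolatedAt r v) = isolationProb n k r := by
  set f := (s.orderEmbOfFin hs).toEmbedding
  have hrange (v : Fin n) : v ∈ range f ↔ v ∈ s :=
    Set.ext_iff.1 (s.range_orderEmbOfFin hs) v
  have h := measure_pi_comp_mem_and_notMem (μ := unifSquare) f (measurableSet_separatedConfigs k r)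
    (measurableSet_setOf_mem_discUnion k r)
  rw [Fintype.card_fin, Fintype.card_fin] at h
  rw [isolationProb, ← h]
  congr 1
  ext x
  simp only [isolatedAt, separatedConfigs, discUnion, mem_iInter, mem_iUnion, mem_ofPred_eq,
    Metric.mem_closedBall, dist_eq_norm, not_exists, not_le, Function.comp_apply]
  constructor
  · intro h
    have hf (i : Fin k) := h (f i) ((hrange _).1 ⟨i, rfl⟩)
    exact ⟨⟨fun i => (hf i).1, fun i j hij => (hf j).2 _ (f.injective.ne hij)⟩,
      fun w hw i => (hf i).2 w fun h => hw ⟨i, h.symm⟩⟩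
  · rintro ⟨⟨hinner, hsep⟩, hfar⟩ v hv
    obtain ⟨i, rfl⟩ := (hrange v).2 hv
    refine ⟨hinner i, fun w hw => ?_⟩
    by_cases hws : w ∈ range f
    · obtain ⟨j, rfl⟩ := hws
      exact hsep j i fun hji => hw (congrArg f hji)
    · exact hfar w hws i

lemma binomialMoment_isolatedAt (n k : ℕ) (r : ℝ) :
    binomialMoment (unifPoints n) (isolatedAt r) k =
      n.choose k * (isolationProb n k r).toReal := by
  have h : ∀ s ∈ Finset.powersetCard k Finset.univ,
      (unifPoints n).real (⋂ v ∈ s, isolatedAt r v) = (isolationProb n k r).toReal := fun s hs => by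
    rw [measureReal_def, unifPoints_iInter_isolatedAt (Finset.mem_powersetCard.1 hs).2]
  rw [binomialMoment, Finset.sum_congr rfl h, Finset.sum_const, Finset.card_powersetCard,
    Finset.card_univ, Fintype.card_fin, nsmul_eq_mul]

lemma tendsto_choose_div_pow (k : ℕ) :
    Tendsto (fun n : ℕ => (n.choose k : ℝ) / n ^ k) atTop (𝓝 (1 / k.factorial)) := by
  have h := (Asymptotics.isEquivalent_iff_tendsto_one (by
    filter_upwards [eventually_gt_atTop 0] with n hn
    positivity)).1 (isEquivalent_choose k)
  refine (by simpa using h.mul_const (1 / (k.factorial : ℝ)) :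
    Tendsto _ _ (𝓝 (1 / (k.factorial : ℝ)))).congr fun n => ?_
  field_simp

lemma tendsto_unifPoints_real_compl_innerIsolated {r : ℕ → ℝ} {Λ : ℝ}
    (hr : ∀ᶠ n in atTop, 0 ≤ r n) (hr0 : Tendsto r atTop (𝓝 0))
    (hT : Tendsto (fun n => n * r n ^ 2) atTop atTop)
    (hr4 : Tendsto (fun n => n * r n ^ 4) atTop (𝓝 0))
    (hΛ : Tendsto (fun n => meanIsolated n (r n)) atTop (𝓝 Λ)) :
    Tendsto (fun n => (unifPoints n).real (innerIsolated n (r n))ᶜ) atTop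
      (𝓝 (Real.exp (-Λ))) := by
  simp only [innerIsolated_eq_iUnion, compl_iUnion]
  refine tendsto_measureReal_iInter_compl_of_tendsto_binomialMoment
    (fun n v => measurableSet_isolatedAt (r n) v) fun k => ?_
  have h := (tendsto_choose_div_pow k).mul (tendsto_pow_mul_isolationProb hr hr0 hT hr4 hΛ k)
  rw [one_div_mul_eq_div] at h
  refine h.congr' ?_
  filter_upwards [eventually_gt_atTop 0] with n hn
  rw [binomialMoment_isolatedAt]
  field_simp

end PoissonLimit

section ErrorEvents

lemma ae_unifPoints_mem_Ico (n : ℕ) :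
    ∀ᵐ x ∂unifPoints n, ∀ v i, x v i ∈ Ico (0 : ℝ) 1 := by
  have hne (i : Fin 2) : ∀ᵐ p ∂unifSquare, p i ≠ 1 :=
    measure_eq_zero_iff_ae_notMem.1 (unifSquare_absolutelyContinuous (volume_setOf_apply_eq i 1))
  refine ae_unifPoints_of_ae (P := fun p => ∀ i, p i ∈ Ico (0 : ℝ) 1) ?_ n
  filter_upwards [ae_unifSquare_mem, ae_all_iff.2 hne] with p hp hp1 i
  exact ⟨(hp i).1, (hp i).2.lt_of_ne (hp1 i)⟩

lemma not_connected_of_mem_innerIsolated {n : ℕ} (hn : 2 ≤ n) {r : ℝ} {x : Fin n → ℝ²}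
    (hx : x ∈ innerIsolated n r) : ¬ (geomGraph x r).Connected := by
  obtain ⟨v, -, hv⟩ := hx
  intro hconn
  have := Fin.nontrivial_iff_two_le.2 hn
  obtain ⟨w, hvw⟩ := hconn.preconnected.exists_adj_of_nontrivial v
  obtain ⟨hne, hle⟩ := geomGraph_adj.1 hvw
  exact hv w hne.symm (by rwa [Metric.mem_closedBall, dist_comm, dist_eq_norm])

lemma unifPoints_not_connected_diff_innerIsolated_le {n m M : ℕ} {s L : ℤ} {r : ℝ} (hn : 0 < n)
    (hr : 0 < r) (hM : 3 ≤ r * M) (hs : r * M ≤ s) (hL : s * m ≤ L) (hLM : 2 * L ≤ M) {d : ℝ}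
    (hd : d = (L + 1) / 3) (hdr : (d + 2) * r ≤ 1) :
    unifPoints n ({x | ¬ (geomGraph x r).Connected} \ innerIsolated n r) ≤
      unifPoints n (windowsWithEmptyTiles n m L M) + unifPoints n (boundaryIsolated n r) +
        ∑ e ∈ ({1, -1} : Finset ℝ), (unifPoints n (cornerExtremal n r ((d + 1) * r) e) +
          ∑ i : Fin 2, ∑ k : Fin 2, ∑ a, ∑ b, ∑ c,
            unifPoints n (extremalCluster (k + 2) n r d i e a b c)) := by
  have hsub : ∀ᵐ x ∂unifPoints n, x ∈ {x | ¬ (geomGraph x r).Connected} \ innerIsolated n r →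
      x ∈ windowsWithEmptyTiles n m L M ∪ boundaryIsolated n r ∪
        ⋃ e ∈ ({1, -1} : Finset ℝ), (cornerExtremal n r ((d + 1) * r) e ∪
          ⋃ (i : Fin 2) (k : Fin 2), ⋃ a, ⋃ b, ⋃ c, extremalCluster (k + 2) n r d i e a b c) := by
    filter_upwards [ae_unifPoints_mem_Ico n] with x hx ⟨hconn, hinner⟩
    simp only [mem_union, mem_iUnion, Finset.mem_insert, Finset.mem_singleton]
    by_cases hwin : x ∈ windowsWithEmptyTiles n m L M
    · exact .inl (.inl hwin)
    obtain ⟨D, hD⟩ := exists_isCluster_of_not_connected hn hr.le hM hs hL hLM hx hwin hconn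
    rw [← hd] at hD
    rcases hD.mem_isolated_or_extremal (fun v i => Ico_subset_Icc_self (hx v i)) hr hdr with
      h | h | ⟨e, he, h⟩
    · exact absurd h hinner
    · exact .inl (.inr h)
    · exact .inr ⟨e, he, h⟩
  refine (measure_mono_ae hsub).trans ((measure_union_le _ _).trans
    (add_le_add (measure_union_le _ _) ((measure_biUnion_finset_le _ _).trans ?_)))
  refine Finset.sum_le_sum fun e _ => (measure_union_le _ _).trans (add_le_add_right ?_ _)
  iterate 5
    refine (measure_iUnion_fintype_le _ _).trans (Finset.sum_le_sum fun _ _ => ?_)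
  exact le_rfl

lemma tendsto_measure_zero_of_le_ofReal {ι : Type*} {l : Filter ι} {p : ι → ℝ≥0∞} {b : ι → ℝ}
    (hb : Tendsto b l (𝓝 0)) (hp : ∀ᶠ n in l, p n ≤ ENNReal.ofReal (b n)) :
    Tendsto p l (𝓝 0) :=
  tendsto_of_tendsto_of_tendsto_of_le_of_le' tendsto_const_nhds
    (by simpa using ENNReal.tendsto_ofReal hb) (.of_forall fun _ => zero_le) hp

variable {r : ℕ → ℝ} {Λ : ℝ}

lemma tendsto_boundaryError (hT : Tendsto (fun n => n * r n ^ 2) atTop atTop)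
    (hΛ : Tendsto (fun n => meanIsolated n (r n)) atTop (𝓝 Λ)) :
    Tendsto (fun n => boundaryError n (r n)) atTop (𝓝 0) := by
  have hcorner := ((tendsto_mul_exp_neg_div four_pos).comp hT).const_mul 4
  have hside := (hΛ.div_atTop hT).sqrt.const_mul 8
  simpa [boundaryError, mul_assoc] using hcorner.add hside

lemma tendsto_unifPoints_windowsWithEmptyTiles {m : ℕ} {s : ℝ} (L : ℤ) {M : ℕ → ℕ}
    (hsm : π * s ^ 2 ≤ m) (hr : ∀ᶠ n in atTop, 0 < r n) (hM : ∀ᶠ n in atTop, 0 < M n)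
    (hs : ∀ᶠ n in atTop, r n * M n ≤ s) (hT : Tendsto (fun n => n * r n ^ 2) atTop atTop)
    (hΛ : Tendsto (fun n => meanIsolated n (r n)) atTop (𝓝 Λ)) :
    Tendsto (fun n => unifPoints n (windowsWithEmptyTiles n m L (M n))) atTop (𝓝 0) := by
  set W : ℝ := ↑(((2 * L + 1).toNat ^ 2).choose m)
  refine tendsto_measure_zero_of_le_ofReal
    (b := fun n => s ^ 2 * W * (meanIsolated n (r n) / (n * r n ^ 2)))
    (by simpa using (hΛ.div_atTop hT).const_mul (s ^ 2 * W)) ?_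
  filter_upwards [hr, hM, hs, eventually_gt_atTop 0] with n hr hM hs hn
  have : (0 : ℝ) < M n := by exact_mod_cast hM
  have hsq : (r n * M n) ^ 2 ≤ s ^ 2 := by gcongr
  have hexp : π * r n ^ 2 ≤ m / M n ^ 2 := by
    rw [le_div_iff₀ (by positivity)]
    calc π * r n ^ 2 * M n ^ 2 = π * (r n * M n) ^ 2 := by ring
      _ ≤ π * s ^ 2 := by gcongr
      _ ≤ m := hsm
  refine (unifPoints_windowsWithEmptyTiles_le hM).trans (ENNReal.ofReal_le_ofReal ?_)
  calc (M n : ℝ) ^ 2 * (W * Real.exp (-(n * (m / M n ^ 2))))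
      ≤ s ^ 2 / r n ^ 2 * (W * Real.exp (-(n * (π * r n ^ 2)))) := by
        gcongr
        rw [le_div_iff₀ (by positivity)]
        linarith [mul_pow (r n) (M n : ℝ) 2]
    _ = s ^ 2 * W * (meanIsolated n (r n) / (n * r n ^ 2)) := by
        rw [meanIsolated]
        field

lemma tendsto_unifPoints_boundaryIsolated (hr : ∀ᶠ n in atTop, 0 < r n)
    (hr0 : Tendsto r atTop (𝓝 0)) (hT : Tendsto (fun n => n * r n ^ 2) atTop atTop)
    (hΛ : Tendsto (fun n => meanIsolated n (r n)) atTop (𝓝 Λ)) :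
    Tendsto (fun n => unifPoints n (boundaryIsolated n (r n))) atTop (𝓝 0) := by
  refine tendsto_measure_zero_of_le_ofReal
    (by simpa using (tendsto_boundaryError hT hΛ).const_mul (Real.exp 1)) ?_
  filter_upwards [hr, hr0.eventually_le_const one_half_pos, eventually_gt_atTop 0]
    with n hr hr1 hn
  exact unifPoints_boundaryIsolated_le hn hr hr1

lemma tendsto_unifPoints_cornerExtremal {d e : ℝ} (hd : 0 ≤ d) (he : e = 1 ∨ e = -1)
    (hr : ∀ᶠ n in atTop, 0 < r n) (hr0 : Tendsto r atTop (𝓝 0))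
    (hT : Tendsto (fun n => n * r n ^ 2) atTop atTop) :
    Tendsto (fun n => unifPoints n (cornerExtremal n (r n) (d * r n) e)) atTop (𝓝 0) := by
  have hb := ((tendsto_mul_exp_neg_div four_pos).comp hT).const_mul (Real.exp 1 * (4 * d ^ 2))
  rw [mul_zero] at hb
  refine tendsto_measure_zero_of_le_ofReal hb ?_
  filter_upwards [hr, hr0.eventually_le_const one_pos] with n hr hr1
  refine (unifPoints_cornerExtremal_le he hr.le hr1 (by positivity)).trans_eq ?_
  rw [Function.comp_apply]
  ring_nf

lemma tendsto_unifPoints_extremalCluster {k : ℕ} (hk : 0 < k) {d e : ℝ} (hd : 1 ≤ d)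
    (he : e = 1 ∨ e = -1) (hr : ∀ᶠ n in atTop, 0 < r n) (hr0 : Tendsto r atTop (𝓝 0))
    (hT : Tendsto (fun n => n * r n ^ 2) atTop atTop)
    (hΛ : Tendsto (fun n => meanIsolated n (r n)) atTop (𝓝 Λ)) (i : Fin 2)
    (a b w : Fin (k + 1)) :
    Tendsto (fun n => unifPoints n (extremalCluster (k + 1) n (r n) d i e a b w)) atTop
      (𝓝 0) := by
  have hpow := ((tendsto_const_nhds (x := (16 * d * k) ^ 2)).div_atTop hT).pow k
  rw [zero_pow hk.ne'] at hpow
  have hb := (((hΛ.add (tendsto_boundaryError hT hΛ)).mul hpow).const_mul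
    ((k : ℝ) + 1)).const_mul (Real.exp (k + 1))
  refine tendsto_measure_zero_of_le_ofReal (by simpa only [mul_zero] using hb) ?_
  have hdr : Tendsto (fun n => (d + 2) * r n) atTop (𝓝 0) := by simpa using hr0.const_mul (d + 2)
  filter_upwards [hr, hdr.eventually_le_const one_pos, eventually_gt_atTop 0] with n hr hr1 hn
  exact unifPoints_extremalCluster_le hk hn he hr hd hr1 a b w

lemma tendsto_sum_unifPoints_extremal {d : ℝ} (hd : 1 ≤ d) (hr : ∀ᶠ n in atTop, 0 < r n)
    (hr0 : Tendsto r atTop (𝓝 0)) (hT : Tendsto (fun n => n * r n ^ 2) atTop atTop)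
    (hΛ : Tendsto (fun n => meanIsolated n (r n)) atTop (𝓝 Λ)) :
    Tendsto (fun n => ∑ e ∈ ({1, -1} : Finset ℝ),
      (unifPoints n (cornerExtremal n (r n) ((d + 1) * r n) e) +
        ∑ i : Fin 2, ∑ k : Fin 2, ∑ a, ∑ b, ∑ c,
          unifPoints n (extremalCluster (k + 2) n (r n) d i e a b c))) atTop (𝓝 0) := by
  rw [show (0 : ℝ≥0∞) = ∑ e ∈ ({1, -1} : Finset ℝ), (0 + ∑ i : Fin 2, ∑ k : Fin 2,
    ∑ a : Fin (k + 2), ∑ b : Fin (k + 2), ∑ c : Fin (k + 2), 0) by simp]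
  refine tendsto_finsetSum _ fun e he => ?_
  have he : e = 1 ∨ e = -1 := by simpa using he
  refine (tendsto_unifPoints_cornerExtremal (by linarith) he hr hr0 hT).add ?_
  iterate 5 refine tendsto_finsetSum _ fun _ _ => ?_
  exact tendsto_unifPoints_extremalCluster (Nat.succ_pos _) hd he hr hr0 hT hΛ _ _ _ _

lemma ceil_three_div_bounds {r : ℝ} (hr : 0 < r) (hr1 : r ≤ 1 / 512) :
    3 ≤ r * ⌈3 / r⌉₊ ∧ r * ⌈3 / r⌉₊ ≤ 4 ∧ 512 ≤ ⌈3 / r⌉₊ := by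
  have hge : 3 ≤ r * ⌈3 / r⌉₊ := (div_le_iff₀' hr).1 (Nat.le_ceil _)
  refine ⟨hge, ?_, (Nat.cast_le (α := ℝ)).1 ?_⟩
  · calc r * ⌈3 / r⌉₊ ≤ r * (3 / r + 1) := by
          gcongr
          exact (Nat.ceil_lt_add_one (by positivity)).le
      _ = 3 + r := by field
      _ ≤ 4 := by linarith
  · push_cast
    by_contra! hlt
    nlinarith

lemma tendsto_unifPoints_not_connected_diff_innerIsolated (hr : ∀ᶠ n in atTop, 0 < r n)
    (hr0 : Tendsto r atTop (𝓝 0)) (hT : Tendsto (fun n => n * r n ^ 2) atTop atTop)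
    (hΛ : Tendsto (fun n => meanIsolated n (r n)) atTop (𝓝 Λ)) :
    Tendsto (fun n => unifPoints n
      ({x | ¬ (geomGraph x (r n)).Connected} \ innerIsolated n (r n))) atTop (𝓝 0) := by
  have hM : ∀ᶠ n in atTop, 3 ≤ r n * ⌈3 / r n⌉₊ ∧ r n * ⌈3 / r n⌉₊ ≤ 4 ∧ 512 ≤ ⌈3 / r n⌉₊ := by
    filter_upwards [hr, hr0.eventually_le_const (by norm_num : (0 : ℝ) < 1 / 512)] with n hn hn1
    exact ceil_three_div_bounds hn hn1
  -- Tiles of side about `r / 3`: adjacent points are at most `s = 4` tiles apart in each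
  -- coordinate, `m = 64 ≥ π * s ^ 2` tiles have at least the area of a disc, and `L = s * m`.
  have hwin := tendsto_unifPoints_windowsWithEmptyTiles (m := 64) (s := 4) 256
    (by push_cast; linarith [Real.pi_le_four]) hr (hM.mono fun n h => by omega)
    (hM.mono fun n h => h.2.1) hT hΛ
  set d : ℝ := ((256 : ℤ) + 1) / 3 with hd
  have hd1 : 1 ≤ d := by norm_num [hd]
  have hdr : Tendsto (fun n => (d + 2) * r n) atTop (𝓝 0) := by simpa using hr0.const_mul (d + 2)
  have hbound := (hwin.add (tendsto_unifPoints_boundaryIsolated hr hr0 hT hΛ)).add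
    (tendsto_sum_unifPoints_extremal hd1 hr hr0 hT hΛ)
  rw [add_zero, add_zero] at hbound
  refine tendsto_of_tendsto_of_tendsto_of_le_of_le' tendsto_const_nhds hbound
    (.of_forall fun _ => zero_le) ?_
  filter_upwards [hr, hM, hdr.eventually_le_const one_pos, eventually_gt_atTop 0]
    with n hr ⟨hM1, hM2, hM3⟩ hdr hn
  exact unifPoints_not_connected_diff_innerIsolated_le (s := 4) hn hr hM1 (mod_cast hM2)
    (by norm_num) (by omega) hd hdr

end ErrorEvents

section ConnectivityThreshold

variable {r : ℕ → ℝ} {c : ℝ}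

lemma tendsto_mul_sq_atTop (h : Tendsto (fun n => n * (π * r n ^ 2) - Real.log n) atTop (𝓝 c)) :
    Tendsto (fun n => n * r n ^ 2) atTop atTop := by
  have hlog := Real.tendsto_log_atTop.comp tendsto_natCast_atTop_atTop
  refine ((h.add_atTop hlog).atTop_div_const Real.pi_pos).congr fun n => ?_
  rw [Function.comp_apply]
  field

lemma tendsto_mul_pow_four_zero
    (h : Tendsto (fun n => n * (π * r n ^ 2) - Real.log n) atTop (𝓝 c)) :
    Tendsto (fun n => n * r n ^ 4) atTop (𝓝 0) := by
  have hlog (k : ℕ) : Tendsto (fun n : ℕ => Real.log n ^ k / n) atTop (𝓝 0) := by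
    simpa [Function.comp_def] using (Real.tendsto_pow_log_div_mul_add_atTop 1 0 k one_ne_zero).comp
      tendsto_natCast_atTop_atTop
  have hsum := ((((h.pow 2).mul (hlog 0)).add ((h.mul (hlog 1)).const_mul 2)).add
    (hlog 2)).div_const (π ^ 2)
  rw [mul_zero, mul_zero, mul_zero, add_zero, add_zero, zero_div] at hsum
  refine hsum.congr' ?_
  filter_upwards [eventually_gt_atTop 0] with n hn
  field

lemma tendsto_radius_zero (hr : ∀ᶠ n in atTop, 0 ≤ r n)
    (h : Tendsto (fun n => n * (π * r n ^ 2) - Real.log n) atTop (𝓝 c)) :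
    Tendsto r atTop (𝓝 0) := by
  have hpow : Tendsto (fun n => r n ^ 4) atTop (𝓝 0) := by
    refine squeeze_zero' (.of_forall fun n => by positivity) ?_ (tendsto_mul_pow_four_zero h)
    filter_upwards [eventually_gt_atTop 0] with n hn
    exact le_mul_of_one_le_left (by positivity) (by exact_mod_cast hn)
  have hroot := hpow.rpow_const (p := (4 : ℝ)⁻¹) (.inr (by norm_num))
  rw [Real.zero_rpow (by norm_num)] at hroot
  refine hroot.congr' (hr.mono fun n hn => ?_)
  exact_mod_cast Real.pow_rpow_inv_natCast hn four_ne_zero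

lemma tendsto_meanIsolated
    (h : Tendsto (fun n => n * (π * r n ^ 2) - Real.log n) atTop (𝓝 c)) :
    Tendsto (fun n => meanIsolated n (r n)) atTop (𝓝 (Real.exp (-c))) := by
  refine h.neg.rexp.congr' ?_
  filter_upwards [eventually_gt_atTop 0] with n hn
  rw [meanIsolated, neg_sub, sub_eq_add_neg, Real.exp_add, Real.exp_log (by exact_mod_cast hn)]

lemma tendsto_connectivityRadius (c : ℝ) : Tendsto (fun n : ℕ =>
    n * (π * √((Real.log n + c) / (π * n)) ^ 2) - Real.log n) atTop (𝓝 c) := by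
  have hlog : Tendsto (fun n : ℕ => Real.log n + c) atTop atTop :=
    tendsto_atTop_add_const_right _ _ (Real.tendsto_log_atTop.comp tendsto_natCast_atTop_atTop)
  refine tendsto_const_nhds.congr' ?_
  filter_upwards [hlog.eventually_gt_atTop 0, eventually_gt_atTop 0] with n hn hn0
  rw [Real.sq_sqrt (by positivity)]
  field

theorem _root_.stmt_2_general (hr : ∀ᶠ n in atTop, 0 ≤ r n)
    (h : Tendsto (fun n => n * (π * r n ^ 2) - Real.log n) atTop (𝓝 c)) :
    Tendsto (fun n => (unifPoints n {x | (geomGraph x (r n)).Connected}).toReal) atTop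
      (𝓝 (Real.exp (-Real.exp (-c)))) := by
  have hr0 := tendsto_radius_zero hr h
  have hT := tendsto_mul_sq_atTop h
  have hΛ := tendsto_meanIsolated h
  have hpos : ∀ᶠ n in atTop, 0 < r n := by
    filter_upwards [hr, hT.eventually_gt_atTop 0] with n hn hn'
    exact hn.lt_of_ne' fun h0 => by simp [h0] at hn'
  have hisolated := tendsto_unifPoints_real_compl_innerIsolated hr hr0 hT
    (tendsto_mul_pow_four_zero h) hΛ
  have herror := (ENNReal.tendsto_toReal ENNReal.zero_ne_top).comp
    (tendsto_unifPoints_not_connected_diff_innerIsolated hpos hr0 hT hΛ)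
  refine tendsto_of_tendsto_of_tendsto_of_le_of_le'
    (by simpa using hisolated.sub herror) hisolated (.of_forall fun n => ?_) ?_
  · rw [sub_le_iff_le_add]
    refine (measureReal_mono fun x hx => ?_).trans (measureReal_union_le _ _)
    by_cases hconn : (geomGraph x (r n)).Connected
    · exact .inl hconn
    · exact .inr ⟨hconn, hx⟩
  · filter_upwards [eventually_ge_atTop 2] with n hn
    exact measureReal_mono fun x hx hmem => not_connected_of_mem_innerIsolated hn hmem hx

end ConnectivityThreshold

end RandomGeometricGraph

/-- Penrose, random geometric graphs: with `r_n = sqrt((log n + c)/(π n))`,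
the probability that the geometric graph with radius `r_n` on `n` i.i.d. uniform points in the
unit square is connected tends to `exp(−e^{−c})` as `n → ∞`. -/
theorem stmt_2 (c : ℝ) :
    Filter.Tendsto
      (fun n : ℕ =>
        ((Measure.pi fun _ : Fin n => unifSquare)
          {x : Fin n → EuclideanSpace ℝ (Fin 2) |
            (geomGraph x (Real.sqrt ((Real.log n + c) / (Real.pi * n)))).Connected}).toReal)
      Filter.atTop (nhds (Real.exp (-Real.exp (-c)))) :=
  stmt_2_general (.of_forall fun _ => Real.sqrt_nonneg _)
    (RandomGeometricGraph.tendsto_connectivityRadius c)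
end

section
/- Let n points x_1,…,x_n be independent uniformly distributed random points in the unit square Q = [0,1]² ⊂ ℝ². Fix a radius r with 0 < r < √2 and a real ε with 0 < ε < 1, and set b := ⌈√5 / r⌉. If n ≥ b² · log( b² / ε ), then with probability at least 1 − ε the geometric graph on x_1,…,x_n with radius r (edge between distinct i, j iff ‖x_i − x_j‖₂ ≤ r) is connected. -/
open MeasureTheory

/-!
Cut the cube `[0,1]^d` into `b^d` closed cells of side `1/b`. Any two points lying in the same cell
or in two cells sharing a facet differ by at most `2/b` in one coordinate and by at most `1/b` in
the others, so they are at distance at most `√(d + 3) / b ≤ r`. Hence the geometric graph is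
connected as soon as every cell contains a point. A given cell contains none of the `n` points with
probability `(1 - b⁻ᵈ)^n ≤ exp (-n / b^d)`, and a union bound over the cells concludes.
-/

open Fintype (card)

section Graph

variable {V κ : Type*}

lemma hasse_connected [PartialOrder κ] [LocallyFiniteOrder κ] [IsDirectedOrder κ] [Nonempty κ] :
    (SimpleGraph.hasse κ).Connected := by
  have reachable_of_le {c d : κ} (h : c ≤ d) : (SimpleGraph.hasse κ).Reachable c d :=
    (SimpleGraph.reachable_iff_reflTransGen c d).2 <|
      Relation.ReflTransGen.mono (fun _ _ => Or.inl) _ _ (le_iff_reflTransGen_covBy.1 h)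
  refine ⟨fun c d => ?_⟩
  obtain ⟨e, hce, hde⟩ := exists_ge_ge c d
  exact (reachable_of_le hce).trans (reachable_of_le hde).symm

lemma connected_of_connected_cells {G : SimpleGraph V} {H : SimpleGraph κ} {C : κ → Set V}
    (hH : H.Connected) (hcover : ∀ v, ∃ c, v ∈ C c) (hne : ∀ c, (C c).Nonempty)
    (hsame : ∀ c, ∀ v ∈ C c, ∀ w ∈ C c, G.Reachable v w)
    (hadj : ∀ c d, H.Adj c d → ∀ v ∈ C c, ∀ w ∈ C d, G.Reachable v w) : G.Connected := by
  have reachable_of_reflTransGen {c d : κ} (hcd : Relation.ReflTransGen H.Adj c d) :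
      ∀ v ∈ C c, ∀ w ∈ C d, G.Reachable v w := by
    induction hcd with
    | refl => exact hsame c
    | @tail d e _ hde ih =>
      intro v hv w hw
      obtain ⟨u, hu⟩ := hne d
      exact (ih v hv u hu).trans (hadj d e hde u hu w hw)
  obtain ⟨v₀, -⟩ := hne hH.nonempty.some
  have : Nonempty V := ⟨v₀⟩
  refine ⟨fun v w => ?_⟩
  obtain ⟨c, hc⟩ := hcover v
  obtain ⟨d, hd⟩ := hcover w
  have hcd := (SimpleGraph.reachable_iff_reflTransGen c d).1 (hH c d)
  exact reachable_of_reflTransGen hcd v hc w hd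

/-- The geometric graph of radius `r` on a family `x` of points of a pseudometric space: distinct
vertices are adjacent iff their points are at distance at most `r`. -/
def geometricGraph {X : Type*} [PseudoMetricSpace X] (x : V → X) (r : ℝ) : SimpleGraph V :=
  SimpleGraph.fromRel fun v w => dist (x v) (x w) ≤ r

lemma geometricGraph_reachable {X : Type*} [PseudoMetricSpace X] {x : V → X} {r : ℝ} {v w : V}
    (h : dist (x v) (x w) ≤ r) : (geometricGraph x r).Reachable v w := by
  obtain rfl | hvw := eq_or_ne v w
  · exact .rfl
  · exact SimpleGraph.Adj.reachable ((SimpleGraph.fromRel_adj _ v w).2 ⟨hvw, .inl h⟩)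

lemma geomGraph_eq_geometricGraph {n : ℕ} (x : Fin n → EuclideanSpace ℝ (Fin 2)) (r : ℝ) :
    geomGraph x r = geometricGraph x r := by
  simp only [geomGraph, geometricGraph, dist_eq_norm]

end Graph

section Occupancy

variable {Ω V κ : Type*} [MeasurableSpace Ω] [Fintype V] [Fintype κ]

lemma mul_one_sub_inv_pow_le {N ε : ℝ} {n : ℕ} (hN : 1 ≤ N) (hε : 0 < ε)
    (hn : N * Real.log (N / ε) ≤ n) : N * (1 - N⁻¹) ^ n ≤ ε := by
  have hN0 : 0 < N := by linarith
  have hlog : Real.log (N / ε) ≤ n * N⁻¹ := by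
    rwa [← div_eq_mul_inv, le_div_iff₀' hN0]
  calc N * (1 - N⁻¹) ^ n ≤ N * Real.exp (-N⁻¹) ^ n := by
        gcongr
        · exact sub_nonneg.2 (inv_le_one_of_one_le₀ hN)
        · exact Real.one_sub_le_exp_neg _
    _ = N * Real.exp (-(n * N⁻¹)) := by rw [← Real.exp_nat_mul, mul_neg]
    _ ≤ N * Real.exp (-Real.log (N / ε)) := by gcongr
    _ = ε := by rw [Real.exp_neg, Real.exp_log (by positivity)]; field_simp

lemma pi_forall_notMem (μ : Measure Ω) [IsProbabilityMeasure μ] {s : Set Ω}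
    (hs : MeasurableSet s) :
    Measure.pi (fun _ : V => μ) {x | ∀ v, x v ∉ s} = (1 - μ s) ^ card V := by
  have : {x : V → Ω | ∀ v, x v ∉ s} = Set.univ.pi fun _ => sᶜ := by
    ext x; simp only [Set.mem_ofPred_eq, Set.mem_univ_pi, Set.mem_compl_iff]
  rw [this, Measure.pi_pi, Finset.prod_const, prob_compl_eq_one_sub hs, Finset.card_univ]

lemma pi_exists_forall_notMem_le (μ : Measure Ω) [IsProbabilityMeasure μ] {C : κ → Set Ω}
    (hC : ∀ c, MeasurableSet (C c)) {p : ENNReal} (hp : ∀ c, p ≤ μ (C c)) :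
    Measure.pi (fun _ : V => μ) {x | ∃ c, ∀ v, x v ∉ C c} ≤ card κ * (1 - p) ^ card V := by
  rw [Set.ofPred_exists]
  calc _ ≤ ∑ c, Measure.pi (fun _ : V => μ) {x | ∀ v, x v ∉ C c} := measure_iUnion_fintype_le _ _
    _ = ∑ c, (1 - μ (C c)) ^ card V := by simp only [pi_forall_notMem μ (hC _)]
    _ ≤ ∑ _c : κ, (1 - p) ^ card V := by gcongr with c; exact hp c
    _ = card κ * (1 - p) ^ card V := by rw [Finset.sum_const, Finset.card_univ, nsmul_eq_mul]

lemma one_sub_le_pi_forall_exists_mem [Nonempty κ] (μ : Measure Ω) [IsProbabilityMeasure μ]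
    {C : κ → Set Ω} (hC : ∀ c, MeasurableSet (C c)) (hμ : ∀ c, (card κ : ENNReal)⁻¹ ≤ μ (C c))
    {ε : ℝ} (hε : 0 < ε) (hn : card κ * Real.log (card κ / ε) ≤ card V) :
    ENNReal.ofReal (1 - ε) ≤ Measure.pi (fun _ : V => μ) {x | ∀ c, ∃ v, x v ∈ C c} := by
  have hκ : (1 : ℝ) ≤ card κ := by exact_mod_cast Fintype.card_pos
  have hempty : Measure.pi (fun _ : V => μ) {x | ∀ c, ∃ v, x v ∈ C c}ᶜ ≤ ENNReal.ofReal ε :=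
    calc _ = Measure.pi (fun _ : V => μ) {x | ∃ c, ∀ v, x v ∉ C c} := by
          congr 1; ext x; simp only [Set.mem_compl_iff, Set.mem_ofPred_eq, not_forall, not_exists]
      _ ≤ card κ * (1 - (card κ : ENNReal)⁻¹) ^ card V := pi_exists_forall_notMem_le μ hC hμ
      _ = ENNReal.ofReal (card κ * (1 - (card κ : ℝ)⁻¹) ^ card V) := by
          rw [ENNReal.ofReal_mul (by positivity),
            ENNReal.ofReal_pow (sub_nonneg.2 (inv_le_one_of_one_le₀ hκ)),
            ENNReal.ofReal_sub _ (by positivity), ENNReal.ofReal_inv_of_pos (by positivity),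
            ENNReal.ofReal_natCast, ENNReal.ofReal_one]
      _ ≤ ENNReal.ofReal ε := ENNReal.ofReal_le_ofReal (mul_one_sub_inv_pow_le hκ hε hn)
  rw [ENNReal.ofReal_sub _ hε.le, ENNReal.ofReal_one, tsub_le_iff_right]
  calc 1 = Measure.pi (fun _ : V => μ) Set.univ := measure_univ.symm
    _ ≤ _ := measure_univ_le_add_compl _
    _ ≤ _ := by gcongr

end Occupancy

section Cube

variable {ι : Type*} {b : ℕ}

variable (ι) in
/-- The closed unit cube `[0,1]^ι`, the analogue of `unitSquare` in arbitrary dimension. -/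
def unitCube : Set (EuclideanSpace ℝ ι) :=
  WithLp.ofLp ⁻¹' Set.Icc 0 1

/-- The closed cell with index `c` in the subdivision of the unit cube into cells of side `1 / b`.
Neighbouring cells overlap in their common boundary. -/
def gridCell (c : ι → Fin b) : Set (EuclideanSpace ℝ ι) :=
  WithLp.ofLp ⁻¹' Set.Icc (fun i => (c i : ℝ) / b) (fun i => (c i + 1 : ℝ) / b)

lemma gridCell_subset_unitCube (c : ι → Fin b) : gridCell c ⊆ unitCube ι :=
  Set.preimage_mono <| Set.Icc_subset_Icc (fun i => by dsimp; positivity) fun i =>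
    div_le_one_of_le₀ (by exact_mod_cast (c i).isLt) b.cast_nonneg

lemma exists_mem_Icc_div (hb : 0 < b) {t : ℝ} (ht : t ∈ Set.Icc 0 1) :
    ∃ k : Fin b, t ∈ Set.Icc ((k : ℝ) / b) ((k + 1 : ℝ) / b) := by
  have hb' : (0 : ℝ) < b := by exact_mod_cast hb
  have hceil : ⌈t * b⌉₊ ≤ b := Nat.ceil_le.2 (mul_le_of_le_one_left hb'.le ht.2)
  -- The truncated subtraction puts `t = 0` in the cell with index `0`.
  refine ⟨⟨⌈t * b⌉₊ - 1, by omega⟩, ?_⟩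
  rw [Set.mem_Icc, div_le_iff₀ hb', le_div_iff₀ hb']
  constructor
  · obtain h | h := Nat.eq_zero_or_pos ⌈t * b⌉₊
    · simpa [h] using mul_nonneg ht.1 hb'.le
    · exact (Nat.lt_ceil.1 (Nat.sub_lt h one_pos)).le
  · calc t * b ≤ ⌈t * b⌉₊ := Nat.le_ceil _
      _ ≤ ((⌈t * b⌉₊ - 1 : ℕ) : ℝ) + 1 := by exact_mod_cast le_tsub_add

lemma exists_mem_gridCell (hb : 0 < b) {p : EuclideanSpace ℝ ι} (hp : p ∈ unitCube ι) :
    ∃ c : ι → Fin b, p ∈ gridCell c := by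
  choose c hc using fun i => exists_mem_Icc_div hb ⟨hp.1 i, hp.2 i⟩
  exact ⟨c, fun i => (hc i).1, fun i => (hc i).2⟩

lemma abs_sub_le_of_mem_Icc_div {a k l s t : ℝ} (ha : 0 ≤ a)
    (hs : s ∈ Set.Icc (k / a) ((k + 1) / a)) (ht : t ∈ Set.Icc (l / a) ((l + 1) / a)) :
    |s - t| ≤ (|k - l| + 1) / a := by
  have hkl : |k - l| / a = |k / a - l / a| := by rw [← sub_div, abs_div, abs_of_nonneg ha]
  rw [Set.mem_Icc, add_div] at hs ht
  rw [add_div, hkl, abs_le]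
  constructor <;> linarith [le_abs_self (k / a - l / a), neg_abs_le (k / a - l / a)]

lemma measurableSet_ofLp_preimage_Icc [Countable ι] (l u : ι → ℝ) :
    MeasurableSet (WithLp.ofLp ⁻¹' Set.Icc l u : Set (EuclideanSpace ℝ ι)) :=
  WithLp.measurable_ofLp 2 _ measurableSet_Icc

lemma measurableSet_gridCell [Countable ι] (c : ι → Fin b) : MeasurableSet (gridCell c) :=
  measurableSet_ofLp_preimage_Icc _ _

variable [Fintype ι]

lemma sum_sq_abs_sub_add_one_le {c d : ι → Fin b} (hcd : c ⩿ d) :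
    ∑ i, (|(c i : ℝ) - d i| + 1) ^ 2 ≤ (card ι + 3 : ℝ) := by
  classical
  obtain hcd | rfl := hcd.covBy_or_eq
  · obtain ⟨i, hi, heq⟩ := Pi.covBy_iff.1 hcd
    have hi' : (d i : ℝ) = c i + 1 := by
      exact_mod_cast (Order.covBy_iff_add_one_eq.1 (Fin.covBy_iff.1 hi)).symm
    have term (j : ι) : (|(c j : ℝ) - d j| + 1) ^ 2 = 1 + if j = i then 3 else 0 := by
      split_ifs with hj
      · rw [hj, hi', sub_add_cancel_left, abs_neg, abs_one]; norm_num
      · rw [heq j hj, sub_self, abs_zero]; norm_num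
    simp [term, Finset.sum_add_distrib]
  · simp

lemma dist_le_of_mem_gridCell {c d : ι → Fin b} (hcd : c ⩿ d) {p q : EuclideanSpace ℝ ι}
    (hp : p ∈ gridCell c) (hq : q ∈ gridCell d) : dist p q ≤ √(card ι + 3) / b := by
  have hcoord (i : ι) : dist (p i) (q i) ≤ (|(c i : ℝ) - d i| + 1) / b :=
    abs_sub_le_of_mem_Icc_div b.cast_nonneg ⟨hp.1 i, hp.2 i⟩ ⟨hq.1 i, hq.2 i⟩
  calc dist p q = √(∑ i, dist (p i) (q i) ^ 2) := EuclideanSpace.dist_eq p q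
    _ ≤ √(∑ i, ((|(c i : ℝ) - d i| + 1) / b) ^ 2) := by gcongr with i; exact hcoord i
    _ = √((∑ i, (|(c i : ℝ) - d i| + 1) ^ 2) / b ^ 2) := by simp only [div_pow, Finset.sum_div]
    _ ≤ √((card ι + 3) / b ^ 2) := by gcongr; exact sum_sq_abs_sub_add_one_le hcd
    _ = √(card ι + 3) / b := by rw [Real.sqrt_div' _ (by positivity), Real.sqrt_sq b.cast_nonneg]

lemma geometricGraph_connected_of_forall_gridCell {V : Type*} {x : V → EuclideanSpace ℝ ι} {r : ℝ}
    (hb : 0 < b) (hbr : √(card ι + 3) / b ≤ r) (hx : ∀ v, x v ∈ unitCube ι)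
    (hocc : ∀ c : ι → Fin b, ∃ v, x v ∈ gridCell c) : (geometricGraph x r).Connected := by
  classical
  have : Nonempty (Fin b) := ⟨⟨0, hb⟩⟩
  have reachable {c d : ι → Fin b} (hcd : c ⩿ d) (v w : V) (hv : x v ∈ gridCell c)
      (hw : x w ∈ gridCell d) : (geometricGraph x r).Reachable v w :=
    geometricGraph_reachable ((dist_le_of_mem_gridCell hcd hv hw).trans hbr)
  exact connected_of_connected_cells (C := fun c : ι → Fin b => x ⁻¹' gridCell c) hasse_connected
    (fun v => exists_mem_gridCell hb (hx v)) hocc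
    (fun c v hv w hw => reachable (WCovBy.refl c) v w hv hw)
    fun c d hcd v hv w hw => hcd.elim (fun h => reachable h.wcovBy v w hv hw)
      fun h => (reachable h.wcovBy w v hw hv).symm

lemma volume_ofLp_preimage_Icc (l u : ι → ℝ) :
    volume (WithLp.ofLp ⁻¹' Set.Icc l u : Set (EuclideanSpace ℝ ι)) =
      ∏ i, ENNReal.ofReal (u i - l i) := by
  rw [(PiLp.volume_preserving_ofLp ι).measure_preimage measurableSet_Icc.nullMeasurableSet,
    Real.volume_Icc_pi]

variable (ι) in
/-- The uniform probability measure on the unit cube, the analogue of `unifSquare` in arbitrary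
dimension. -/
noncomputable def unifCube : Measure (EuclideanSpace ℝ ι) :=
  volume.restrict (unitCube ι)

lemma unifSquare_eq_unifCube : unifSquare = unifCube (Fin 2) := by
  have : unitSquare = unitCube (Fin 2) := by
    ext p
    simp only [unitSquare, unitCube, Set.mem_ofPred_eq, Set.mem_preimage, Set.mem_Icc, Pi.le_def,
      Pi.zero_apply, Pi.one_apply, forall_and]
  rw [unifSquare, unifCube, this]

instance : IsProbabilityMeasure (unifCube ι) := by
  refine ⟨?_⟩
  rw [unifCube, Measure.restrict_apply_univ, unitCube, volume_ofLp_preimage_Icc]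
  simp only [Pi.one_apply, Pi.zero_apply, sub_zero, ENNReal.ofReal_one, Finset.prod_const_one]

lemma ae_forall_mem_unitCube {V : Type*} [Fintype V] :
    ∀ᵐ x ∂Measure.pi (fun _ : V => unifCube ι), ∀ v, x v ∈ unitCube ι :=
  ae_all_iff.2 fun _ => Measure.tendsto_eval_ae_ae.eventually <|
    ae_restrict_mem (measurableSet_ofLp_preimage_Icc 0 1)

lemma unifCube_gridCell (c : ι → Fin b) : unifCube ι (gridCell c) = ((b : ENNReal) ^ card ι)⁻¹ := by
  have side (i : ι) : ENNReal.ofReal (((c i : ℝ) + 1) / b - (c i : ℝ) / b) = (b : ENNReal)⁻¹ := by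
    have hb : (0 : ℝ) < b := by exact_mod_cast (c i).pos
    rw [← sub_div, add_sub_cancel_left, one_div, ENNReal.ofReal_inv_of_pos hb,
      ENNReal.ofReal_natCast]
  rw [unifCube, Measure.restrict_eq_self _ (gridCell_subset_unitCube c), gridCell,
    volume_ofLp_preimage_Icc, Finset.prod_congr rfl fun i _ => side i, Finset.prod_const,
    Finset.card_univ, ENNReal.inv_pow]

end Cube

theorem stmt_4_general {ι V : Type*} [Fintype ι] [Fintype V] {r ε : ℝ} {b : ℕ} (hr : 0 < r)
    (hb : √(card ι + 3) / r ≤ b) (hε : 0 < ε)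
    (hV : (b : ℝ) ^ card ι * Real.log ((b : ℝ) ^ card ι / ε) ≤ card V) :
    ENNReal.ofReal (1 - ε) ≤
      (Measure.pi fun _ : V => unifCube ι)
        {x : V → EuclideanSpace ℝ ι | (geometricGraph x r).Connected} := by
  classical
  have hb0 : (0 : ℝ) < b := lt_of_lt_of_le (by positivity) hb
  have hbr : √(card ι + 3) / b ≤ r := (div_le_comm₀ hr hb0).1 hb
  have hbN : 0 < b := by exact_mod_cast hb0
  have : Nonempty (Fin b) := ⟨⟨0, hbN⟩⟩
  have hcard : card (ι → Fin b) = b ^ card ι := by rw [Fintype.card_fun, Fintype.card_fin]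
  calc ENNReal.ofReal (1 - ε)
      ≤ Measure.pi (fun _ : V => unifCube ι) {x | ∀ c : ι → Fin b, ∃ v, x v ∈ gridCell c} :=
        one_sub_le_pi_forall_exists_mem _ (fun c => measurableSet_gridCell c)
          (fun c => by rw [unifCube_gridCell, hcard, Nat.cast_pow]) hε
          (by rwa [hcard, Nat.cast_pow])
    _ ≤ _ := measure_mono_ae <| ae_forall_mem_unitCube.mono fun x hx hocc =>
        geometricGraph_connected_of_forall_gridCell hbN hbr hx hocc

/-- for `0 < r < √2`, `0 < ε < 1` and `b = ⌈√5/r⌉`, if `n ≥ b²·log(b²/ε)` then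
with probability at least `1 − ε` the geometric graph with radius `r` on `n` i.i.d. uniform
points in the unit square is connected. -/
theorem stmt_4 (r ε : ℝ) (hr0 : 0 < r) (hr2 : r < Real.sqrt 2) (hε0 : 0 < ε) (hε1 : ε < 1)
    (n : ℕ)
    (hn : (⌈Real.sqrt 5 / r⌉₊ : ℝ) ^ 2 * Real.log ((⌈Real.sqrt 5 / r⌉₊ : ℝ) ^ 2 / ε) ≤ (n : ℝ)) :
    ENNReal.ofReal (1 - ε) ≤
      (Measure.pi fun _ : Fin n => unifSquare)
        {x : Fin n → EuclideanSpace ℝ (Fin 2) | (geomGraph x r).Connected} := by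
  have hb : √(card (Fin 2) + 3) / r ≤ ⌈√5 / r⌉₊ := by norm_num [Nat.le_ceil]
  simpa only [geomGraph_eq_geometricGraph, unifSquare_eq_unifCube] using
    stmt_4_general hr0 hb hε0 (by simpa using hn)
end
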